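/- arXiv:2311.09864 — 4 statements merged into one kernel-verified Lean document; each statement's English description precedes it below -/
import Mathlib

section
/- Let n ≥ 3 and let φ : M_n(ℂ) → M_n(ℂ) be a continuous map which preserves commutativity and spectrum. Then there exists an invertible matrix T ∈ M_n(ℂ) such that either φ(X) = T X T⁻¹ for all X ∈ M_n(ℂ), or φ(X) = T Xᵗ T⁻¹ for all X ∈ M_n(ℂ). -/
open Matrix

noncomputable section

set_option linter.unusedSimpArgs false
set_option linter.unusedVariables false

/-- `A` is conjugate to a diagonal matrix. -/
def SemDiag {n : ℕ} (A : Matrix (Fin n) (Fin n) ℂ) : Prop :=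
  ∃ (S S' : Matrix (Fin n) (Fin n) ℂ) (d : Fin n → ℂ),
    S * S' = 1 ∧ S' * S = 1 ∧ A = S * diagonal d * S'

lemma sem_diag_of_basis {n : ℕ} (A : Matrix (Fin n) (Fin n) ℂ)
    (b : Module.Basis (Fin n) ℂ (Fin n → ℂ)) (d : Fin n → ℂ)
    (h : ∀ i, A *ᵥ b i = d i • b i) :
    ∃ S S' : Matrix (Fin n) (Fin n) ℂ, S * S' = 1 ∧ S' * S = 1 ∧ A = S * diagonal d * S' := by
  have h1 := (Pi.basisFun ℂ (Fin n)).toMatrix_mul_toMatrix_flip b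
  have h2 := b.toMatrix_mul_toMatrix_flip (Pi.basisFun ℂ (Fin n))
  refine ⟨(Pi.basisFun ℂ (Fin n)).toMatrix b, b.toMatrix (Pi.basisFun ℂ (Fin n)), h1, h2, ?_⟩
  have : A * (Pi.basisFun ℂ (Fin n)).toMatrix b
      = (Pi.basisFun ℂ (Fin n)).toMatrix b * diagonal d := by
    ext i j
    have := congrFun (h j) i
    simp only [mul_diagonal, Module.Basis.toMatrix_apply, Pi.basisFun_repr]
    simp only [Matrix.mulVec, dotProduct, Pi.smul_apply, smul_eq_mul] at this
    simp only [Matrix.mul_apply, Module.Basis.toMatrix_apply, Pi.basisFun_repr]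
    rw [this, mul_comm]
  rw [← this, mul_assoc, h1, mul_one]

lemma sem_diag_of_squarefree {n : ℕ} (A : Matrix (Fin n) (Fin n) ℂ) (p : Polynomial ℂ)
    (hp : Squarefree p) (hA : Polynomial.aeval A p = 0) : SemDiag A := by
  have hA' : Polynomial.aeval (Matrix.toLinAlgEquiv' A) p = 0 := by
    rw [← AlgEquiv.coe_toAlgHom, Polynomial.aeval_algHom_apply, hA, map_zero]
  have hss := Module.End.isSemisimple_of_squarefree_aeval_eq_zero hp hA'
  have htop := hss.iSup_eigenspace_eq_top
  have hind := Module.End.eigenspaces_iSupIndep (Matrix.toLinAlgEquiv' A)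
  have hint := DirectSum.isInternal_submodule_of_iSupIndep_of_iSup_eq_top hind htop
  let v : ∀ μ : ℂ, Module.Basis (Fin (Module.finrank ℂ
      (Module.End.eigenspace (Matrix.toLinAlgEquiv' A) μ))) ℂ _ := fun μ => Module.finBasis ℂ _
  let b0 := hint.collectedBasis v
  let e := b0.indexEquiv (Pi.basisFun ℂ (Fin n))
  obtain ⟨S, S', h⟩ := sem_diag_of_basis A (b0.reindex e) (fun i => (e.symm i).1) (by
    intro i
    have := hint.collectedBasis_mem v (e.symm i)
    rw [Module.End.mem_eigenspace_iff] at this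
    simpa [b0, Matrix.toLinAlgEquiv'_apply] using this)
  exact ⟨S, S', _, h⟩

lemma sem_diag_of_distinct {n : ℕ} (A : Matrix (Fin n) (Fin n) ℂ) (d : Fin n → ℂ)
    (hd : Function.Injective d) (h : ∀ i, d i ∈ spectrum ℂ A) :
    ∃ S S' : Matrix (Fin n) (Fin n) ℂ, S * S' = 1 ∧ S' * S = 1 ∧ A = S * diagonal d * S' := by
  have h1 : ∀ i, ∃ v, Module.End.HasEigenvector (Matrix.toLin' A) (d i) v := by
    intro i
    have := h i
    rw [← Matrix.spectrum_toLin', ← Module.End.hasEigenvalue_iff_mem_spectrum] at this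
    exact this.exists_hasEigenvector
  choose v hv using h1
  have hli := Module.End.eigenvectors_linearIndependent' (Matrix.toLin' A) d hd v hv
  have hc : Fintype.card (Fin n) = Module.finrank ℂ (Fin n → ℂ) := by simp
  rcases Nat.eq_zero_or_pos n with rfl | hn
  · exact ⟨1, 1, by simp, by simp, Subsingleton.elim _ _⟩
  have : Nonempty (Fin n) := ⟨⟨0, hn⟩⟩
  refine sem_diag_of_basis A (basisOfLinearIndependentOfCardEqFinrank hli hc) d ?_
  intro i
  simpa using (hv i).apply_eq_smul

lemma sem_diag_dense {n : ℕ} (A : Matrix (Fin n) (Fin n) ℂ) :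
    A ∈ closure {B : Matrix (Fin n) (Fin n) ℂ | SemDiag B} := by
  classical
  rcases Nat.eq_zero_or_pos n with rfl | hn
  · apply subset_closure
    exact ⟨1, 1, 0, by simp, by simp, Subsingleton.elim _ _⟩
  let D0 : Matrix (Fin n) (Fin n) ℂ := diagonal (fun i => ((i : ℕ) : ℂ))
  let M : ℂ → Matrix (Fin n) (Fin n) ℂ := fun t => A + t • (D0 - A)
  let P : Matrix (Fin n) (Fin n) (Polynomial ℂ) :=
    A.map Polynomial.C + (Polynomial.X : Polynomial ℂ) • (D0 - A).map Polynomial.C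
  let r : Polynomial ℂ := Polynomial.resultant P.charpoly (Polynomial.derivative P.charpoly) n (n-1)
  have hmap : ∀ t, P.map (Polynomial.evalRingHom t) = M t := by
    intro t
    ext i j
    simp [P, M, Matrix.map_apply]
  have hr : ∀ t, r.eval t ≠ 0 ↔ (M t).charpoly.Separable := by
    intro t
    have h1 : r.eval t = Polynomial.resultant (M t).charpoly
        (Polynomial.derivative (M t).charpoly) n (n-1) := by
      rw [← Polynomial.coe_evalRingHom, ← hmap, Matrix.charpoly_map, Polynomial.derivative_map]
      exact (Polynomial.resultant_map_map _ _ _ _ _).symm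
    have h2 : (M t).charpoly.natDegree = n := by simp
    have h3 : (Polynomial.derivative (M t).charpoly).natDegree = n - 1 := by
      rw [Polynomial.natDegree_derivative, h2]
    have h4 := Polynomial.isUnit_resultant_iff_isCoprime (f := (M t).charpoly)
      (g := Polynomial.derivative (M t).charpoly) (Matrix.charpoly_monic _)
    rw [h2, h3] at h4
    rw [h1, ← isUnit_iff_ne_zero, h4]
    rfl
  have hr1 : r.eval 1 ≠ 0 := by
    rw [hr]
    have : M 1 = D0 := by simp [M]
    rw [this, Matrix.charpoly_diagonal]
    apply Polynomial.separable_prod_X_sub_C_iff.2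
    intro i j hij
    have hij' : ((i : ℕ) : ℂ) = ((j : ℕ) : ℂ) := hij
    exact Fin.ext (by exact_mod_cast hij')
  have hr0 : r ≠ 0 := by
    rintro h
    simp [h] at hr1
  have hfin : Set.Finite {t | r.eval t = 0} := by
    refine (r.roots.toFinset.finite_toSet).subset ?_
    intro t ht
    simpa [hr0] using ht
  have hdense : Dense ({t | r.eval t = 0}ᶜ) := hfin.countable.dense_compl ℂ
  have hM : Continuous M := by fun_prop
  have h0 : M 0 = A := by simp [M]
  rw [← h0]
  have := image_closure_subset_closure_image hM ⟨0, hdense 0, rfl⟩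
  refine closure_mono ?_ this
  rintro _ ⟨t, ht, rfl⟩
  have hs := (hr t).1 ht
  exact sem_diag_of_squarefree _ _ hs.squarefree (Matrix.aeval_self_charpoly _)

/-- The hypotheses on the map. -/
def SemGood {n : ℕ} (φ : Matrix (Fin n) (Fin n) ℂ → Matrix (Fin n) (Fin n) ℂ) : Prop :=
  Continuous φ ∧ (∀ A B, A * B = B * A → φ A * φ B = φ B * φ A) ∧
    ∀ A, spectrum ℂ (φ A) = spectrum ℂ A

lemma sem_spectrum_conj {n : ℕ} {S S' : Matrix (Fin n) (Fin n) ℂ} (h : S * S' = 1)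
    (h' : S' * S = 1) (A : Matrix (Fin n) (Fin n) ℂ) :
    spectrum ℂ (S * A * S') = spectrum ℂ A :=
  spectrum.units_conjugate (R := ℂ) (a := A) (u := ⟨S, S', h, h'⟩)

lemma sem_conj_mul {n : ℕ} {S S' : Matrix (Fin n) (Fin n) ℂ}
    (h' : S' * S = 1) (A B : Matrix (Fin n) (Fin n) ℂ) :
    (S * A * S') * (S * B * S') = S * (A * B) * S' := by
  calc (S * A * S') * (S * B * S') = S * A * (S' * S) * B * S' := by noncomm_ring
    _ = _ := by rw [h']; noncomm_ring

lemma SemGood.conj_right {n : ℕ} {φ : Matrix (Fin n) (Fin n) ℂ → Matrix (Fin n) (Fin n) ℂ}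
    (hφ : SemGood φ) {S S' : Matrix (Fin n) (Fin n) ℂ} (h : S * S' = 1) (h' : S' * S = 1) :
    SemGood (fun X => φ (S * X * S')) := by
  obtain ⟨hc, hm, hs⟩ := hφ
  refine ⟨hc.comp (by fun_prop), ?_, ?_⟩
  · intro A B hAB
    apply hm
    rw [sem_conj_mul h', sem_conj_mul h', hAB]
  · intro A
    rw [hs, sem_spectrum_conj h h']

lemma SemGood.conj_left {n : ℕ} {φ : Matrix (Fin n) (Fin n) ℂ → Matrix (Fin n) (Fin n) ℂ}
    (hφ : SemGood φ) {S S' : Matrix (Fin n) (Fin n) ℂ} (h : S * S' = 1) (h' : S' * S = 1) :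
    SemGood (fun X => S * φ X * S') := by
  obtain ⟨hc, hm, hs⟩ := hφ
  refine ⟨by fun_prop, ?_, ?_⟩
  · intro A B hAB
    rw [sem_conj_mul h', sem_conj_mul h', hm A B hAB]
  · intro A
    rw [sem_spectrum_conj h h', hs]

lemma SemGood.transp {n : ℕ} {φ : Matrix (Fin n) (Fin n) ℂ → Matrix (Fin n) (Fin n) ℂ}
    (hφ : SemGood φ) : SemGood (fun X => φ Xᵀ) := by
  obtain ⟨hc, hm, hs⟩ := hφ
  refine ⟨hc.comp (by fun_prop), ?_, ?_⟩
  · intro A B hAB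
    apply hm
    rw [← transpose_mul, ← transpose_mul, hAB]
  · intro A
    rw [hs]
    ext r
    rw [Matrix.mem_spectrum_iff_isRoot_charpoly, Matrix.mem_spectrum_iff_isRoot_charpoly,
      Matrix.charpoly_transpose]

lemma sem_diag_fix {n : ℕ} {φ : Matrix (Fin n) (Fin n) ℂ → Matrix (Fin n) (Fin n) ℂ}
    (hφ : SemGood φ)
    (h0 : φ (diagonal (fun i : Fin n => ((i : ℕ) : ℂ))) = diagonal (fun i : Fin n => ((i : ℕ) : ℂ)))
    (d : Fin n → ℂ) : φ (diagonal d) = diagonal d := by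
  obtain ⟨hc, hm, hs⟩ := hφ
  have hinj : ∀ i j : Fin n, i ≠ j → ((i : ℕ) : ℂ) - ((j : ℕ) : ℂ) ≠ 0 := by
    intro i j hij h
    apply hij
    have := sub_eq_zero.1 h
    exact Fin.ext (by exact_mod_cast this)
  have hdiag : ∀ d : Fin n → ℂ, φ (diagonal d) = diagonal (fun i => φ (diagonal d) i i) := by
    intro d
    have h1 := hm (diagonal d) (diagonal (fun i : Fin n => ((i : ℕ) : ℂ))) (by
      simp [diagonal_mul_diagonal, mul_comm])
    rw [h0] at h1
    ext i j
    by_cases hij : i = j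
    · subst hij; simp
    · have h2 := congrFun (congrFun h1 i) j
      rw [mul_diagonal, diagonal_mul] at h2
      rw [diagonal_apply_ne _ hij]
      have h3 : (((i : ℕ) : ℂ) - ((j : ℕ) : ℂ)) * φ (diagonal d) i j = 0 := by
        linear_combination -h2
      exact (mul_eq_zero.1 h3).resolve_left (hinj i j hij)
  have hmem : ∀ d : Fin n → ℂ, ∀ i, ∃ j, φ (diagonal d) i i = d j := by
    intro d i
    have h1 := hs (diagonal d)
    rw [hdiag d, spectrum_diagonal, spectrum_diagonal] at h1
    have h2 : φ (diagonal d) i i ∈ Set.range d := by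
      rw [← h1]; exact ⟨i, rfl⟩
    obtain ⟨j, hj⟩ := h2
    exact ⟨j, hj.symm⟩
  -- diagonal matrices reachable by a straight path from the base point
  have hgood : ∀ d : Fin n → ℂ,
      (∀ t : unitInterval, ∀ i j : Fin n, i ≠ j →
        ((i : ℕ) : ℂ) + (t : ℝ) * (d i - ((i : ℕ) : ℂ))
          ≠ ((j : ℕ) : ℂ) + (t : ℝ) * (d j - ((j : ℕ) : ℂ))) →
      φ (diagonal d) = diagonal d := by
    intro d hd
    let p : unitInterval → Fin n → ℂ := fun t i => ((i : ℕ) : ℂ) + (t : ℝ) * (d i - ((i : ℕ) : ℂ))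
    have hp : Continuous p := by
      refine continuous_pi fun i => ?_
      fun_prop
    have hpc : Continuous fun t => φ (diagonal (p t)) :=
      hc.comp (hp.matrix_diagonal)
    have key : ∀ i, φ (diagonal d) i i = d i := by
      intro i
      have hcl : ∀ j, IsClosed {t | φ (diagonal (p t)) i i = p t j} := fun j =>
        isClosed_eq (hpc.matrix_elem i i) ((continuous_apply j).comp hp)
      have hop : IsOpen {t | φ (diagonal (p t)) i i = p t i} := by
        have : {t | φ (diagonal (p t)) i i = p t i}
            = (⋃ j ∈ {j | j ≠ i}, {t | φ (diagonal (p t)) i i = p t j})ᶜ := by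
          ext t
          simp only [Set.mem_ofPred_eq, Set.mem_compl_iff, Set.mem_iUnion, not_exists]
          constructor
          · intro h j hj hh
            exact hd t j i hj (hh.symm.trans h)
          · intro h
            obtain ⟨j, hj⟩ := hmem (p t) i
            by_cases hji : j = i
            · rw [hj, hji]
            · exact absurd hj (h j hji)
        rw [this, isOpen_compl_iff]
        exact (Set.toFinite _).isClosed_biUnion fun j _ => hcl j
      have huniv := IsClopen.eq_univ ⟨hcl i, hop⟩ ⟨0, by
        have : p 0 = fun i : Fin n => ((i : ℕ) : ℂ) := by ext i; simp [p]
        simp only [Set.mem_ofPred_eq, this, h0, diagonal_apply_eq]⟩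
      have h1 : (1 : unitInterval) ∈ {t | φ (diagonal (p t)) i i = p t i} := by
        rw [huniv]; trivial
      have : p 1 = d := by ext i; simp [p]
      simpa only [Set.mem_ofPred_eq, this] using h1
    rw [hdiag d]
    congr 1
    ext i
    exact key i
  -- perturbation
  have hcd : Continuous fun e : ℝ => fun i : Fin n => d i + ((e : ℂ) * Complex.I) * ((i : ℕ) : ℂ) := by
    refine continuous_pi fun i => ?_
    fun_prop
  have hclosed : IsClosed {e : ℝ | φ (diagonal (fun i => d i + ((e : ℂ) * Complex.I) * ((i : ℕ) : ℂ)))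
      = diagonal (fun i => d i + ((e : ℂ) * Complex.I) * ((i : ℕ) : ℂ))} :=
    isClosed_eq (hc.comp hcd.matrix_diagonal) hcd.matrix_diagonal
  let bad : Set ℝ := ⋃ i : Fin n, ⋃ j : Fin n,
    {- ((d i - d j) / (((i : ℕ) : ℂ) - ((j : ℕ) : ℂ))).im}
  have hbad : bad.Countable :=
    Set.countable_iUnion fun i => Set.countable_iUnion fun j => Set.countable_singleton _
  have hdense : Dense badᶜ := hbad.dense_compl ℝ
  have hsub : badᶜ ⊆ {e : ℝ | φ (diagonal (fun i => d i + ((e : ℂ) * Complex.I) * ((i : ℕ) : ℂ)))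
      = diagonal (fun i => d i + ((e : ℂ) * Complex.I) * ((i : ℕ) : ℂ))} := by
    intro e he
    apply hgood
    intro t i j hij heq
    have hij' := hinj i j hij
    -- divide the difference by i - j
    have h1 : (1 - ((t : ℝ) : ℂ)) + ((t : ℝ) : ℂ) *
        ((d i - d j) / (((i : ℕ) : ℂ) - ((j : ℕ) : ℂ)) + (e : ℂ) * Complex.I) = 0 := by
      have : ((1 - ((t : ℝ) : ℂ)) + ((t : ℝ) : ℂ) *
        ((d i - d j) / (((i : ℕ) : ℂ) - ((j : ℕ) : ℂ)) + (e : ℂ) * Complex.I))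
          * (((i : ℕ) : ℂ) - ((j : ℕ) : ℂ)) = 0 := by
        have h2 : (d i - d j) / (((i : ℕ) : ℂ) - ((j : ℕ) : ℂ)) * (((i : ℕ) : ℂ) - ((j : ℕ) : ℂ))
          = d i - d j := div_mul_cancel₀ _ hij'
        linear_combination heq + ((t : ℝ) : ℂ) * h2
      exact (mul_eq_zero.1 this).resolve_right hij'
    have him := congrArg Complex.im h1
    simp at him
    rcases him with ht | him
    · rw [ht] at h1
      simp at h1
    · apply he
      simp only [bad, Set.mem_iUnion, Set.mem_singleton_iff]
      exact ⟨i, j, by linarith⟩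
  have h0mem : (0 : ℝ) ∈ {e : ℝ | φ (diagonal (fun i => d i + ((e : ℂ) * Complex.I) * ((i : ℕ) : ℂ)))
      = diagonal (fun i => d i + ((e : ℂ) * Complex.I) * ((i : ℕ) : ℂ))} :=
    hclosed.closure_subset_iff.2 hsub (hdense 0)
  simpa using h0mem

lemma SemGood.diag_form {n : ℕ} {φ : Matrix (Fin n) (Fin n) ℂ → Matrix (Fin n) (Fin n) ℂ}
    (hφ : SemGood φ) : ∃ T T' : Matrix (Fin n) (Fin n) ℂ, T * T' = 1 ∧ T' * T = 1 ∧
      ∀ d, φ (diagonal d) = T * diagonal d * T' := by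
  obtain ⟨T, T', h, h', hT⟩ := sem_diag_of_distinct
    (φ (diagonal (fun i : Fin n => ((i : ℕ) : ℂ)))) (fun i : Fin n => ((i : ℕ) : ℂ)) (by
      intro i j hij
      have hij' : ((i : ℕ) : ℂ) = ((j : ℕ) : ℂ) := hij
      exact Fin.ext (by exact_mod_cast hij')) (by
      intro i
      rw [hφ.2.2, spectrum_diagonal]
      exact ⟨i, rfl⟩)
  refine ⟨T, T', h, h', fun d => ?_⟩
  have hback : ∀ X : Matrix (Fin n) (Fin n) ℂ, T * (T' * X * T) * T' = X := by
    intro X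
    calc T * (T' * X * T) * T' = (T * T') * X * (T * T') := by noncomm_ring
      _ = X := by rw [h]; simp
  have hfwd : ∀ X : Matrix (Fin n) (Fin n) ℂ, T' * (T * X * T') * T = X := by
    intro X
    calc T' * (T * X * T') * T = (T' * T) * X * (T' * T) := by noncomm_ring
      _ = X := by rw [h']; simp
  have := sem_diag_fix (hφ.conj_left h' h) (by
    rw [hT, hfwd]) d
  rw [← hback (φ (diagonal d)), this]

/-- `φ` acts on each conjugate of the diagonal algebra by conjugation. -/
lemma SemGood.torus {n : ℕ} {φ : Matrix (Fin n) (Fin n) ℂ → Matrix (Fin n) (Fin n) ℂ}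
    (hφ : SemGood φ) {S S' : Matrix (Fin n) (Fin n) ℂ} (h : S * S' = 1) (h' : S' * S = 1) :
    ∃ T T' : Matrix (Fin n) (Fin n) ℂ, T * T' = 1 ∧ T' * T = 1 ∧
      ∀ d, φ (S * diagonal d * S') = T * diagonal d * T' :=
  (hφ.conj_right h h').diag_form

lemma SemGood.smul {n : ℕ} {φ : Matrix (Fin n) (Fin n) ℂ → Matrix (Fin n) (Fin n) ℂ}
    (hφ : SemGood φ) (c : ℂ) (X : Matrix (Fin n) (Fin n) ℂ) : φ (c • X) = c • φ X := by
  have hcl : IsClosed {X | φ (c • X) = c • φ X} :=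
    isClosed_eq (hφ.1.comp (by fun_prop)) (hφ.1.const_smul c)
  refine hcl.closure_subset_iff.2 ?_ (sem_diag_dense X)
  rintro _ ⟨S, S', d, h, h', rfl⟩
  obtain ⟨T, T', -, -, hT⟩ := hφ.torus h h'
  have e1 : ∀ R R' : Matrix (Fin n) (Fin n) ℂ,
      c • (R * diagonal d * R') = R * diagonal (c • d) * R' := by
    intro R R'
    rw [diagonal_smul]; simp
  change φ (c • (S * diagonal d * S')) = c • φ (S * diagonal d * S')
  rw [e1, hT, hT, e1]

lemma SemGood.sq {n : ℕ} {φ : Matrix (Fin n) (Fin n) ℂ → Matrix (Fin n) (Fin n) ℂ}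
    (hφ : SemGood φ) (X : Matrix (Fin n) (Fin n) ℂ) : φ (X * X) = φ X * φ X := by
  have hc := hφ.1
  have hcl : IsClosed {X | φ (X * X) = φ X * φ X} :=
    isClosed_eq (hφ.1.comp (by fun_prop)) (by fun_prop)
  refine hcl.closure_subset_iff.2 ?_ (sem_diag_dense X)
  rintro _ ⟨S, S', d, h, h', rfl⟩
  obtain ⟨T, T', -, hT', hT⟩ := hφ.torus h h'
  change φ (S * diagonal d * S' * (S * diagonal d * S'))
    = φ (S * diagonal d * S') * φ (S * diagonal d * S')
  rw [sem_conj_mul h', diagonal_mul_diagonal, hT, hT, sem_conj_mul hT', diagonal_mul_diagonal]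

lemma SemGood.zero {n : ℕ} {φ : Matrix (Fin n) (Fin n) ℂ → Matrix (Fin n) (Fin n) ℂ}
    (hφ : SemGood φ) : φ 0 = 0 := by
  simpa using hφ.smul 0 0

lemma SemGood.add_orth {n : ℕ} {φ : Matrix (Fin n) (Fin n) ℂ → Matrix (Fin n) (Fin n) ℂ}
    (hφ : SemGood φ) (P Q : Matrix (Fin n) (Fin n) ℂ) (hP : P * P = P) (hQ : Q * Q = Q)
    (hPQ : P * Q = 0) (hQP : Q * P = 0) : φ (P + Q) = φ P + φ Q := by
  have hA : SemDiag (P + (2 : ℂ) • Q) := by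
    refine sem_diag_of_squarefree _ (∏ i : Fin 3, (Polynomial.X - Polynomial.C ((i : ℕ) : ℂ)))
      (Polynomial.Separable.squarefree ?_) ?_
    · apply Polynomial.separable_prod_X_sub_C_iff.2
      intro i j hij
      have hij' : ((i : ℕ) : ℂ) = ((j : ℕ) : ℂ) := hij
      exact Fin.ext (by exact_mod_cast hij')
    · rw [Fin.prod_univ_three]
      have e1 : (algebraMap ℂ (Matrix (Fin n) (Fin n) ℂ)) 2 = (2 : ℂ) • 1 :=
        Algebra.algebraMap_eq_smul_one 2
      simp only [map_mul, map_sub, Polynomial.aeval_X, Polynomial.aeval_C, Fin.val_zero,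
        Fin.val_one, Fin.val_two, Nat.cast_zero, Nat.cast_one, Nat.cast_ofNat, e1, map_zero,
        map_one, sub_zero]
      have e2 : (P + (2 : ℂ) • Q) * (P + (2 : ℂ) • Q - 1) = (2 : ℂ) • Q := by
        simp only [mul_sub, mul_add, add_mul, smul_mul_assoc, mul_smul_comm, hP, hQ, hPQ, hQP,
          mul_one]
        module
      rw [e2]
      simp only [mul_sub, mul_add, add_mul, smul_mul_assoc, mul_smul_comm, hP, hQ, hPQ, hQP,
          mul_one]
      module
  obtain ⟨S, S', d, h, h', hd⟩ := hA
  obtain ⟨T, T', -, -, hT⟩ := hφ.torus h h'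
  have hAA : (P + (2 : ℂ) • Q) * (P + (2 : ℂ) • Q) = P + (4 : ℂ) • Q := by
    simp only [mul_add, add_mul, smul_mul_assoc, mul_smul_comm, hP, hQ, hPQ, hQP]
    module
  have hdd : P + (4 : ℂ) • Q = S * diagonal (d * d) * S' := by
    rw [← hAA, hd, sem_conj_mul h', diagonal_mul_diagonal]; rfl
  have hlin : ∀ (R R' : Matrix (Fin n) (Fin n) ℂ) (a b : ℂ) (v w : Fin n → ℂ),
      R * diagonal (a • v + b • w) * R' = a • (R * diagonal v * R') + b • (R * diagonal w * R') := by
    intro R R' a b v w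
    have : diagonal (a • v + b • w) = a • diagonal v + b • diagonal w := by
      rw [← diagonal_smul, ← diagonal_smul, diagonal_add]; rfl
    rw [this]
    simp [mul_add, add_mul]
  have h1 : P = S * diagonal ((2 : ℂ) • d + (-1 : ℂ) • (d * d)) * S' := by
    rw [hlin, ← hd, ← hdd]; module
  have h2 : Q = S * diagonal ((-1/2 : ℂ) • d + (1/2 : ℂ) • (d * d)) * S' := by
    rw [hlin, ← hd, ← hdd]; module
  have h3 : P + Q = S * diagonal ((3/2 : ℂ) • d + (-1/2 : ℂ) • (d * d)) * S' := by
    rw [hlin, ← hd, ← hdd]; module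
  have g1 := congrArg φ h1
  have g2 := congrArg φ h2
  have g3 := congrArg φ h3
  rw [hT, hlin] at g1 g2 g3
  rw [g1, g2, g3]
  module

lemma SemGood.add_vec {n : ℕ} {φ : Matrix (Fin n) (Fin n) ℂ → Matrix (Fin n) (Fin n) ℂ}
    (hφ : SemGood φ) (x f y g : Fin n → ℂ) (h1 : f ⬝ᵥ x = 1) (h2 : g ⬝ᵥ y = 1)
    (h3 : f ⬝ᵥ y = 0) (h4 : g ⬝ᵥ x = 0) :
    φ (vecMulVec x f + vecMulVec y g) = φ (vecMulVec x f) + φ (vecMulVec y g) := by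
  apply hφ.add_orth <;> rw [vecMulVec_mul_vecMulVec] <;> simp [h1, h2, h3, h4]

lemma SemGood.exchange {n : ℕ} {φ : Matrix (Fin n) (Fin n) ℂ → Matrix (Fin n) (Fin n) ℂ}
    (hφ : SemGood φ) (x f y g : Fin n → ℂ) (h1 : f ⬝ᵥ x = 1) (h2 : g ⬝ᵥ y = 1)
    (h3 : f ⬝ᵥ y = 0) (h4 : g ⬝ᵥ x = 0) :
    φ (vecMulVec x f) + φ (vecMulVec y g)
      = φ (vecMulVec x (f + g)) + φ (vecMulVec (y - x) g) := by
  rw [← hφ.add_vec x f y g h1 h2 h3 h4, ← hφ.add_vec x (f + g) (y - x) g]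
  · congr 1
    rw [vecMulVec_add, sub_vecMulVec]; abel
  · simp [add_dotProduct, h1, h4]
  · simp [dotProduct_sub, h2, h4]
  · simp [add_dotProduct, dotProduct_sub, h1, h2, h3, h4]
  · exact h4

lemma sem_exists_y {n : ℕ} (k g : Fin n → ℂ) (h : g ∉ Submodule.span ℂ {k}) :
    ∃ y : Fin n → ℂ, g ⬝ᵥ y = 1 ∧ k ⬝ᵥ y = 0 := by
  obtain ⟨l, hl, hlk⟩ := Submodule.exists_le_ker_of_notMem h
  obtain ⟨y, hy⟩ : ∃ y : Fin n → ℂ, ∀ v : Fin n → ℂ, l v = v ⬝ᵥ y := by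
    refine ⟨fun i => l (Pi.single i 1), fun v => ?_⟩
    rw [LinearMap.pi_apply_eq_sum_univ l v]
    simp only [dotProduct, smul_eq_mul]
    refine Finset.sum_congr rfl fun i _ => ?_
    congr 2
    ext j
    simp [Pi.single_apply, eq_comm]
  have hk : l k = 0 := hlk (Submodule.mem_span_singleton_self k)
  refine ⟨(l g)⁻¹ • y, ?_, ?_⟩
  · rw [dotProduct_smul, ← hy, smul_eq_mul, inv_mul_cancel₀ hl]
  · rw [dotProduct_smul, ← hy, hk, smul_zero]

lemma sem_exists_h {n : ℕ} (hn : 3 ≤ n) (x k : Fin n → ℂ) :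
    ∃ h : Fin n → ℂ, h ⬝ᵥ x = 0 ∧ h ∉ Submodule.span ℂ {k} := by
  by_contra! hcon
  let L : (Fin n → ℂ) →ₗ[ℂ] ℂ :=
    { toFun := fun v => v ⬝ᵥ x
      map_add' := fun v w => add_dotProduct v w x
      map_smul' := fun c v => smul_dotProduct c v x }
  have hle : LinearMap.ker L ≤ Submodule.span ℂ {k} := fun v hv => hcon v hv
  have h1 := Submodule.finrank_mono hle
  have h2 : Module.finrank ℂ (Submodule.span ℂ {k}) ≤ 1 := by
    simpa using finrank_span_le_card (R := ℂ) ({k} : Set (Fin n → ℂ))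
  have h3 := L.finrank_range_add_finrank_ker
  have h4 : Module.finrank ℂ (LinearMap.range L) ≤ 1 := by
    simpa using Submodule.finrank_le (LinearMap.range L)
  simp at h3
  omega

lemma SemGood.row_add {n : ℕ} (hn : 3 ≤ n)
    {φ : Matrix (Fin n) (Fin n) ℂ → Matrix (Fin n) (Fin n) ℂ}
    (hφ : SemGood φ) (x p q : Fin n → ℂ) :
    φ (vecMulVec x (p + q)) = φ (vecMulVec x p) + φ (vecMulVec x q) := by
  by_cases hx : x = 0
  · subst hx
    simp [hφ.zero]
  obtain ⟨i, hi⟩ := Function.ne_iff.1 hx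
  obtain ⟨u, hu⟩ : ∃ u : (Fin n → ℂ) → Matrix (Fin n) (Fin n) ℂ,
      ∀ f, φ (vecMulVec x f) = u f := ⟨_, fun f => rfl⟩
  obtain ⟨f, hf⟩ : ∃ f : Fin n → ℂ, f ⬝ᵥ x = 1 :=
    ⟨Pi.single i (x i)⁻¹, by
      have : x i ≠ 0 := hi
      simp [this]⟩
  have hsm : ∀ (c : ℂ) f, u (c • f) = c • u f := by
    intro c f
    rw [← hu, ← hu, vecMulVec_smul, hφ.smul]
  have hu0 : u 0 = 0 := by simpa using hsm 0 0
  have huc : Continuous u := by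
    have : u = fun f => φ (vecMulVec x f) := by ext1 f; exact (hu f).symm
    rw [this]
    exact hφ.1.comp (by fun_prop)
  -- additivity for independent vectors
  have hind : ∀ k g : Fin n → ℂ, k ⬝ᵥ x = 0 → g ⬝ᵥ x = 0 → g ∉ Submodule.span ℂ {k} →
      u (f + (k + g)) - u f = (u (f + k) - u f) + (u (f + g) - u f) := by
    intro k g hk hg hgk
    obtain ⟨y0, hy1, hy2⟩ := sem_exists_y k g hgk
    have e1 := hφ.exchange x f (y0 - (f ⬝ᵥ y0) • x) g hf
      (by simp [dotProduct_sub, hy1, hg]) (by simp [dotProduct_sub, hf]) hg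
    have e2 := hφ.exchange x (f + k) (y0 - (f ⬝ᵥ y0) • x) g (by simp [add_dotProduct, hf, hk])
      (by simp [dotProduct_sub, hy1, hg])
      (by simp [dotProduct_sub, add_dotProduct, hf, hk, hy2]) hg
    simp only [hu] at e1 e2
    rw [← add_assoc]
    linear_combination (norm := module) e1 - e2
  have hadd : ∀ k g : Fin n → ℂ, k ⬝ᵥ x = 0 → g ⬝ᵥ x = 0 →
      u (f + (k + g)) - u f = (u (f + k) - u f) + (u (f + g) - u f) := by
    intro k g hk hg
    by_cases hgk : g ∈ Submodule.span ℂ {k}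
    · obtain ⟨h, hhx, hh⟩ := sem_exists_h hn x k
      have hkk := Submodule.mem_span_singleton_self (R := ℂ) k
      have s1 : Submodule.span ℂ {g} ≤ Submodule.span ℂ {k} := by
        rw [Submodule.span_singleton_le_iff_mem]; exact hgk
      have s2 : Submodule.span ℂ {k + g} ≤ Submodule.span ℂ {k} := by
        rw [Submodule.span_singleton_le_iff_mem]; exact Submodule.add_mem _ hkk hgk
      have e1 := hind k (g + h) hk (by simp [add_dotProduct, hg, hhx])
        (fun hm => hh (by simpa using Submodule.sub_mem _ hm hgk))
      have e2 := hind g h hg hhx (fun hm => hh (s1 hm))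
      have e3 := hind (k + g) h (by simp [add_dotProduct, hg, hk]) hhx (fun hm => hh (s2 hm))
      rw [← add_assoc k g h] at e1
      rw [e3, e2] at e1
      linear_combination (norm := module) e1
    · exact hind k g hk hg hgk
  have hnat : ∀ (N : ℕ) (k : Fin n → ℂ), k ⬝ᵥ x = 0 →
      u (f + (N : ℂ) • k) - u f = (N : ℂ) • (u (f + k) - u f) := by
    intro N k hk
    induction N with
    | zero => simp
    | succ N ih =>
      have : ((N + 1 : ℕ) : ℂ) • k = (N : ℂ) • k + k := by
        push_cast; module
      rw [this, hadd _ _ (by simp [hk]) hk, ih]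
      push_cast; module
  have hlim : ∀ k : Fin n → ℂ, k ⬝ᵥ x = 0 → u (f + k) = u f + u k := by
    intro k hk
    have e1 : ∀ N : ℕ, u ((1 / ((N : ℂ) + 1)) • f + k) - u ((1 / ((N : ℂ) + 1)) • f)
        = u (f + k) - u f := by
      intro N
      have hN : ((N : ℂ) + 1) ≠ 0 := by exact_mod_cast Nat.succ_ne_zero N
      have e2 := hnat (N + 1) k hk
      push_cast at e2
      have e3 : (1 / ((N : ℂ) + 1)) • f + k = (1 / ((N : ℂ) + 1)) • (f + ((N : ℂ) + 1) • k) := by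
        rw [smul_add, smul_smul, one_div, inv_mul_cancel₀ hN, one_smul]
      rw [e3, hsm, hsm, ← smul_sub, e2, smul_smul, one_div, inv_mul_cancel₀ hN, one_smul]
    have hz : Filter.Tendsto (fun N : ℕ => (1 / ((N : ℂ) + 1))) Filter.atTop (nhds 0) :=
      tendsto_one_div_add_atTop_nhds_zero_nat
    have hcf : Continuous fun c : ℂ => u (c • f + k) - u (c • f) := by fun_prop
    have ht := (hcf.tendsto 0).comp hz
    have ht2 : Filter.Tendsto (fun _ : ℕ => u (f + k) - u f) Filter.atTop
        (nhds (u ((0 : ℂ) • f + k) - u ((0 : ℂ) • f))) := by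
      refine ht.congr fun N => ?_
      exact e1 N
    have := tendsto_nhds_unique ht2 tendsto_const_nhds
    simp only [zero_smul, zero_add, hu0, sub_zero] at this
    rw [this]; abel
  have haddk : ∀ k g : Fin n → ℂ, k ⬝ᵥ x = 0 → g ⬝ᵥ x = 0 → u (k + g) = u k + u g := by
    intro k g hk hg
    have e := hadd k g hk hg
    rw [hlim _ hk, hlim _ hg, hlim _ (by simp [add_dotProduct, hk, hg])] at e
    linear_combination (norm := module) e
  have hdec : ∀ (c : ℂ) (k : Fin n → ℂ), k ⬝ᵥ x = 0 → u (c • f + k) = c • u f + u k := by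
    intro c k hk
    by_cases hc : c = 0
    · simp [hc]
    · have : c • f + k = c • (f + c⁻¹ • k) := by
        rw [smul_add, smul_smul, mul_inv_cancel₀ hc, one_smul]
      rw [this, hsm, hlim _ (by simp [hk]), hsm, smul_add, smul_smul, mul_inv_cancel₀ hc, one_smul]
  have hk : ∀ p : Fin n → ℂ, (p - (p ⬝ᵥ x) • f) ⬝ᵥ x = 0 := by
    intro p
    simp [sub_dotProduct, hf]
  have hp : ∀ p, u p = (p ⬝ᵥ x) • u f + u (p - (p ⬝ᵥ x) • f) := by
    intro p
    rw [← hdec _ _ (hk p)]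
    congr 1
    abel
  simp only [hu]
  rw [hp p, hp q, hp (p + q)]
  have : p + q - ((p + q) ⬝ᵥ x) • f = (p - (p ⬝ᵥ x) • f) + (q - (q ⬝ᵥ x) • f) := by
    rw [add_dotProduct]; module
  rw [this, haddk _ _ (hk p) (hk q), add_dotProduct]
  module

lemma SemGood.col_add {n : ℕ} (hn : 3 ≤ n)
    {φ : Matrix (Fin n) (Fin n) ℂ → Matrix (Fin n) (Fin n) ℂ}
    (hφ : SemGood φ) (x y f : Fin n → ℂ) :
    φ (vecMulVec (x + y) f) = φ (vecMulVec x f) + φ (vecMulVec y f) := by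
  have := hφ.transp.row_add hn f x y
  simpa only [transpose_vecMulVec] using this

/-- On rank one matrices `φ` agrees with a linear map. -/
lemma SemGood.exists_linear {n : ℕ} (hn : 3 ≤ n)
    {φ : Matrix (Fin n) (Fin n) ℂ → Matrix (Fin n) (Fin n) ℂ} (hφ : SemGood φ) :
    ∃ Φ : Matrix (Fin n) (Fin n) ℂ →ₗ[ℂ] Matrix (Fin n) (Fin n) ℂ,
      ∀ x f, φ (vecMulVec x f) = Φ (vecMulVec x f) := by
  let B : (Fin n → ℂ) →ₗ[ℂ] (Fin n → ℂ) →ₗ[ℂ] Matrix (Fin n) (Fin n) ℂ :=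
    LinearMap.mk₂ ℂ (fun x f => φ (vecMulVec x f))
      (fun x y f => hφ.col_add hn x y f)
      (fun c x f => by rw [smul_vecMulVec, hφ.smul])
      (fun x p q => hφ.row_add hn x p q)
      (fun c x f => by rw [vecMulVec_smul, hφ.smul])
  let Φ : Matrix (Fin n) (Fin n) ℂ →ₗ[ℂ] Matrix (Fin n) (Fin n) ℂ :=
    { toFun := fun X => ∑ i, ∑ j, X i j • B (Pi.single i 1) (Pi.single j 1)
      map_add' := fun X Y => by simp [add_smul, Finset.sum_add_distrib]
      map_smul' := fun c X => by simp [mul_smul, Finset.smul_sum] }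
  refine ⟨Φ, fun x f => ?_⟩
  change B x f = ∑ i, ∑ j, (vecMulVec x f) i j • B (Pi.single i 1) (Pi.single j 1)
  have hs : ∀ v : Fin n → ℂ, v = ∑ i, v i • (Pi.single i (1 : ℂ) : Fin n → ℂ) := by
    intro v
    ext j
    simp [Finset.sum_apply, Pi.single_apply]
  conv_lhs => rw [hs x, hs f]
  simp only [map_sum, map_smul, LinearMap.sum_apply, LinearMap.smul_apply, vecMulVec_apply,
    mul_smul, Finset.smul_sum]
  rw [Finset.sum_comm]
  refine Finset.sum_congr rfl fun i _ => Finset.sum_congr rfl fun j _ => ?_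
  rw [smul_comm]

lemma SemGood.add {n : ℕ} (hn : 3 ≤ n)
    {φ : Matrix (Fin n) (Fin n) ℂ → Matrix (Fin n) (Fin n) ℂ} (hφ : SemGood φ)
    (X Y : Matrix (Fin n) (Fin n) ℂ) : φ (X + Y) = φ X + φ Y := by
  obtain ⟨Φ, hΦ⟩ := hφ.exists_linear hn
  have hdec : ∀ (R R' : Matrix (Fin n) (Fin n) ℂ) (d : Fin n → ℂ),
      R * diagonal d * R' = ∑ i, d i • (R * diagonal (Pi.single i 1) * R') := by
    intro R R' d
    have : diagonal d = ∑ i, d i • diagonal (Pi.single i (1 : ℂ)) := by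
      ext a b
      by_cases hab : a = b
      · subst hab
        simp [Matrix.sum_apply, Pi.single_apply]
      · simp [Matrix.sum_apply, hab]
    conv_lhs => rw [this]
    simp [Finset.mul_sum, Finset.sum_mul]
  have hvec : ∀ (R R' : Matrix (Fin n) (Fin n) ℂ) (i : Fin n),
      R * diagonal (Pi.single i 1) * R' = vecMulVec (fun a => R a i) (R' i) := by
    intro R R' i
    ext a b
    rw [Matrix.mul_apply]
    simp [mul_diagonal, vecMulVec_apply, Pi.single_apply]
  have hall : ∀ Z, φ Z = Φ Z := by
    intro Z
    have hcl : IsClosed {Z | φ Z = Φ Z} :=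
      isClosed_eq hφ.1 (LinearMap.continuous_of_finiteDimensional Φ)
    refine hcl.closure_subset_iff.2 ?_ (sem_diag_dense Z)
    rintro _ ⟨S, S', d, h, h', rfl⟩
    obtain ⟨T, T', -, -, hT⟩ := hφ.torus h h'
    change φ (S * diagonal d * S') = Φ (S * diagonal d * S')
    rw [hT, hdec T T', hdec S S', map_sum]
    refine Finset.sum_congr rfl fun i _ => ?_
    rw [map_smul, ← hT, hvec, hΦ]
  simp [hall]

/-- Linear Jordan maps fixing the diagonal matrices. -/
structure SemJ {n : ℕ} (ψ : Matrix (Fin n) (Fin n) ℂ → Matrix (Fin n) (Fin n) ℂ) : Prop where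
  add : ∀ X Y, ψ (X + Y) = ψ X + ψ Y
  smul : ∀ (c : ℂ) X, ψ (c • X) = c • ψ X
  sq : ∀ X, ψ (X * X) = ψ X * ψ X
  diag : ∀ d, ψ (diagonal d) = diagonal d

lemma SemJ.transp {n : ℕ} {ψ : Matrix (Fin n) (Fin n) ℂ → Matrix (Fin n) (Fin n) ℂ}
    (h : SemJ ψ) : SemJ (fun X => ψ Xᵀ) where
  add X Y := by rw [transpose_add, h.add]
  smul c X := by rw [transpose_smul, h.smul]
  sq X := by rw [transpose_mul, h.sq]
  diag d := by rw [diagonal_transpose, h.diag]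

lemma SemJ.jordan {n : ℕ} {ψ : Matrix (Fin n) (Fin n) ℂ → Matrix (Fin n) (Fin n) ℂ}
    (h : SemJ ψ) (X Y : Matrix (Fin n) (Fin n) ℂ) :
    ψ (X * Y + Y * X) = ψ X * ψ Y + ψ Y * ψ X := by
  have h1 := h.sq (X + Y)
  have h2 : (X + Y) * (X + Y) = X * X + (X * Y + Y * X) + Y * Y := by noncomm_ring
  rw [h2, h.add, h.add, h.sq X, h.sq Y, h.add X Y] at h1
  have h3 : (ψ X + ψ Y) * (ψ X + ψ Y) = ψ X * ψ X + (ψ X * ψ Y + ψ Y * ψ X) + ψ Y * ψ Y := by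
    noncomm_ring
  rw [h3] at h1
  exact add_left_cancel (add_right_cancel h1)

lemma SemJ.form {n : ℕ} {ψ : Matrix (Fin n) (Fin n) ℂ → Matrix (Fin n) (Fin n) ℂ}
    (h : SemJ ψ) {i j : Fin n} (hij : i ≠ j) :
    ψ (single i j 1) = single i j (ψ (single i j 1) i j) + single j i (ψ (single i j 1) j i) := by
  have hii : ∀ k : Fin n, ψ (single k k 1) = single k k 1 := by
    intro k
    rw [← diagonal_single]; exact h.diag _
  have e1 := h.jordan (single i j 1) (single i i 1)
  have e2 := h.jordan (single i j 1) (single j j 1)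
  rw [hii] at e1 e2
  simp only [single_mul_single_same, single_mul_single_of_ne _ _ _ _ hij,
    single_mul_single_of_ne _ _ _ _ hij.symm, mul_one, zero_add, add_zero] at e1 e2
  generalize ψ (single i j 1) = M at *
  have key : ∀ k, M = M * single k k 1 + single k k 1 * M → ∀ p q,
      M p q = (if q = k then M p q else 0) + (if p = k then M p q else 0) := by
    intro k hk p q
    have := congrFun (congrFun hk p) q
    rw [Matrix.add_apply, ← diagonal_single, mul_diagonal, diagonal_mul] at this
    simpa [Pi.single_apply] using this
  ext p q
  have k1 := key i e1 p q
  have k2 := key j e2 p q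
  simp only [Matrix.add_apply, single_apply]
  grind

lemma SemJ.rel1 {n : ℕ} {ψ : Matrix (Fin n) (Fin n) ℂ → Matrix (Fin n) (Fin n) ℂ}
    (h : SemJ ψ) {i j : Fin n} (hij : i ≠ j) :
    ψ (single i j 1) i j * ψ (single i j 1) j i = 0 := by
  have e := h.sq (single i j 1)
  have hz : ψ 0 = 0 := by simpa using h.smul 0 0
  rw [single_mul_single_of_ne _ _ _ _ hij.symm, hz, h.form hij] at e
  have := congrFun (congrFun e i) i
  simp [add_mul, mul_add, single_mul_single_of_ne _ _ _ _ hij,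
    single_mul_single_of_ne _ _ _ _ hij.symm, single_apply, hij, hij.symm] at this
  simpa using this

lemma SemJ.rel2 {n : ℕ} {ψ : Matrix (Fin n) (Fin n) ℂ → Matrix (Fin n) (Fin n) ℂ}
    (h : SemJ ψ) {i j : Fin n} (hij : i ≠ j) :
    ψ (single i j 1) i j * ψ (single j i 1) j i
      + ψ (single i j 1) j i * ψ (single j i 1) i j = 1 := by
  have hii : ∀ k : Fin n, ψ (single k k 1) = single k k 1 := by
    intro k
    rw [← diagonal_single]; exact h.diag _
  have e := h.jordan (single i j 1) (single j i 1)
  rw [single_mul_single_same, single_mul_single_same, mul_one, h.add, hii, hii,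
    h.form hij, h.form hij.symm] at e
  have := congrFun (congrFun e i) i
  simp [add_mul, mul_add, single_mul_single_of_ne _ _ _ _ hij,
    single_mul_single_of_ne _ _ _ _ hij.symm, single_apply, hij, hij.symm] at this
  linear_combination -this

lemma SemJ.rel3 {n : ℕ} {ψ : Matrix (Fin n) (Fin n) ℂ → Matrix (Fin n) (Fin n) ℂ}
    (h : SemJ ψ) {i j k : Fin n} (hij : i ≠ j) (hjk : j ≠ k) (hik : i ≠ k) :
    ψ (single i j 1) i j * ψ (single j k 1) j k = ψ (single i k 1) i k ∧
    ψ (single i j 1) j i * ψ (single j k 1) k j = ψ (single i k 1) k i := by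
  have e := h.jordan (single i j 1) (single j k 1)
  rw [single_mul_single_same, single_mul_single_of_ne _ _ _ _ hik.symm, mul_one, add_zero,
    h.form hij, h.form hjk] at e
  have e1 := congrFun (congrFun e i) k
  have e2 := congrFun (congrFun e k) i
  simp [add_mul, mul_add, single_mul_single_of_ne _ _ _ _ hij,
    single_mul_single_of_ne _ _ _ _ hij.symm, single_mul_single_of_ne _ _ _ _ hik,
    single_mul_single_of_ne _ _ _ _ hik.symm, single_mul_single_of_ne _ _ _ _ hjk,
    single_mul_single_of_ne _ _ _ _ hjk.symm, single_apply, hij, hij.symm, hik, hik.symm,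
    hjk, hjk.symm] at e1 e2
  constructor
  · exact e1.symm
  · rw [mul_comm]; exact e2.symm

lemma SemJ.inner {n : ℕ} (hn : 3 ≤ n)
    {ψ : Matrix (Fin n) (Fin n) ℂ → Matrix (Fin n) (Fin n) ℂ}
    (h : SemJ ψ) (hall : ∀ i j : Fin n, i ≠ j → ψ (single i j 1) i j ≠ 0) :
    ∃ C C' : Matrix (Fin n) (Fin n) ℂ, C * C' = 1 ∧ ∀ X, ψ X = C * X * C' := by
  have hb : ∀ i j : Fin n, i ≠ j → ψ (single i j 1) j i = 0 := fun i j hij =>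
    (mul_eq_zero.1 (h.rel1 hij)).resolve_left (hall i j hij)
  have hii : ∀ k : Fin n, ψ (single k k 1) = single k k 1 := by
    intro k
    rw [← diagonal_single]; exact h.diag _
  let o : Fin n := ⟨0, by omega⟩
  let c : Fin n → ℂ := fun i => ψ (single i o 1) i o
  have hco : c o = 1 := by simp [c, hii]
  have hc0 : ∀ i, c i ≠ 0 := by
    intro i
    by_cases hi : i = o
    · rw [hi, hco]; exact one_ne_zero
    · exact hall i o hi
  have hrel : ∀ i j, ψ (single i j 1) i j * c j = c i := by
    intro i j
    by_cases hij : i = j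
    · subst hij; simp [hii]
    by_cases hj : j = o
    · rw [hj, hco, mul_one]
    by_cases hi : i = o
    · have := h.rel2 hij
      rw [hb i j hij, zero_mul, add_zero] at this
      subst hi
      rw [hco]; exact this
    · exact (h.rel3 hij hj hi).1
  have hE : ∀ i j, ψ (single i j 1) = single i j (c i * (c j)⁻¹) := by
    intro i j
    have : c i * (c j)⁻¹ = ψ (single i j 1) i j := by
      rw [← hrel i j, mul_assoc, mul_inv_cancel₀ (hc0 j), mul_one]
    rw [this]
    by_cases hij : i = j
    · subst hij; simp [hii]
    · conv_lhs => rw [h.form hij, hb i j hij]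
      simp
  refine ⟨diagonal c, diagonal c⁻¹, ?_, ?_⟩
  · rw [diagonal_mul_diagonal, ← diagonal_one]
    congr 1
    ext i
    simp [hc0 i]
  · let L : Matrix (Fin n) (Fin n) ℂ →ₗ[ℂ] Matrix (Fin n) (Fin n) ℂ :=
      { toFun := ψ, map_add' := h.add, map_smul' := h.smul }
    intro X
    change L X = _
    conv_lhs => rw [matrix_eq_sum_single X]
    simp only [map_sum]
    have e : ∀ i j, L (single i j (X i j)) = single i j (c i * X i j * (c j)⁻¹) := by
      intro i j
      have : single i j (X i j) = X i j • single i j (1 : ℂ) := by simp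
      rw [this, map_smul]
      change X i j • ψ _ = _
      rw [hE, smul_single]
      congr 1
      simp only [smul_eq_mul]; ring
    simp only [e]
    ext a b
    have := congrFun (congrFun (matrix_eq_sum_single
      (Matrix.of fun i j => c i * X i j * (c j)⁻¹)) a) b
    simp only [Matrix.of_apply] at this
    rw [← this]
    simp [diagonal_mul, mul_diagonal]

lemma SemJ.cases {n : ℕ} (hn : 3 ≤ n)
    {ψ : Matrix (Fin n) (Fin n) ℂ → Matrix (Fin n) (Fin n) ℂ} (h : SemJ ψ) :
    (∀ i j : Fin n, i ≠ j → ψ (single i j 1) i j ≠ 0) ∨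
    (∀ i j : Fin n, i ≠ j → ψ (single i j 1) j i ≠ 0) := by
  by_contra! hcon
  obtain ⟨⟨p, q, hpq, h1⟩, ⟨i, j, hij, h2⟩⟩ := hcon
  obtain ⟨a, ha⟩ : ∃ a : Fin n → Fin n → ℂ, ∀ i j, ψ (single i j 1) i j = a i j :=
    ⟨_, fun i j => rfl⟩
  obtain ⟨b, hb⟩ : ∃ b : Fin n → Fin n → ℂ, ∀ i j, ψ (single i j 1) j i = b i j :=
    ⟨_, fun i j => rfl⟩
  have r1 : ∀ i j, i ≠ j → a i j = 0 ∨ b i j = 0 := by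
    intro i j hij
    have := h.rel1 hij
    rw [ha, hb] at this
    exact mul_eq_zero.1 this
  have r2 : ∀ i j, i ≠ j → a i j * a j i + b i j * b j i = 1 := by
    intro i j hij
    have := h.rel2 hij
    rwa [ha, hb, ha, hb] at this
  have r3 : ∀ i j k, i ≠ j → j ≠ k → i ≠ k →
      a i j * a j k = a i k ∧ b i j * b j k = b i k := by
    intro i j k hij hjk hik
    have := h.rel3 hij hjk hik
    simpa only [ha, hb] using this
  rw [ha] at h1
  rw [hb] at h2
  have s1 : ∀ i j, i ≠ j → b i j = 0 → b j i = 0 := by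
    intro i j hij hz
    have e := r2 i j hij
    rw [hz, zero_mul, add_zero] at e
    refine (r1 j i hij.symm).resolve_left ?_
    rintro hz'
    simp [hz'] at e
  have nz : ∀ i j, i ≠ j → b i j = 0 → a i j ≠ 0 := by
    intro i j hij hz hz'
    have e := r2 i j hij
    simp [hz, hz'] at e
  have s2 : ∀ i j k, i ≠ j → i ≠ k → b i j = 0 → b i k = 0 := by
    intro i j k hij hik hz
    by_cases hjk : j = k
    · rw [← hjk]; exact hz
    · have := (r3 i j k hij hjk hik).2
      rw [← this, hz, zero_mul]
  have hbpq : b p q = 0 := by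
    by_cases hpi : p = i
    · subst hpi
      exact s2 p j q hij hpq h2
    · have e1 := s2 i j p hij (Ne.symm hpi) h2
      have e2 := s1 i p (Ne.symm hpi) e1
      exact s2 p i q hpi hpq e2
  exact nz p q hpq hbpq h1

theorem semrl_commutativity_spectrum_preservers {n : ℕ} (hn : 3 ≤ n)
    (φ : Matrix (Fin n) (Fin n) ℂ → Matrix (Fin n) (Fin n) ℂ)
    (hcont : Continuous φ)
    (hcomm : ∀ A B : Matrix (Fin n) (Fin n) ℂ, A * B = B * A → φ A * φ B = φ B * φ A)
    (hspec : ∀ A : Matrix (Fin n) (Fin n) ℂ, spectrum ℂ (φ A) = spectrum ℂ A) :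
    ∃ T : Matrix (Fin n) (Fin n) ℂ, IsUnit T.det ∧
      ((∀ X : Matrix (Fin n) (Fin n) ℂ, φ X = T * X * T⁻¹) ∨ (∀ X : Matrix (Fin n) (Fin n) ℂ, φ X = T * Xᵀ * T⁻¹)) := by
  have hφ : SemGood φ := ⟨hcont, hcomm, hspec⟩
  obtain ⟨T, T', hT, hT', hd⟩ := hφ.diag_form
  have hback : ∀ X : Matrix (Fin n) (Fin n) ℂ, T * (T' * X * T) * T' = X := by
    intro X
    calc T * (T' * X * T) * T' = (T * T') * X * (T * T') := by noncomm_ring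
      _ = X := by rw [hT]; simp
  have hfwd : ∀ X : Matrix (Fin n) (Fin n) ℂ, T' * (T * X * T') * T = X := by
    intro X
    calc T' * (T * X * T') * T = (T' * T) * X * (T' * T) := by noncomm_ring
      _ = X := by rw [hT']; simp
  have hψ : SemGood (fun X => T' * φ X * T) := hφ.conj_left hT' hT
  have hJ : SemJ (fun X => T' * φ X * T) :=
    { add := hψ.add hn
      smul := hψ.smul
      sq := hψ.sq
      diag := fun d => by rw [hd, hfwd] }
  have hfin : ∀ C C' : Matrix (Fin n) (Fin n) ℂ, C * C' = 1 →
      IsUnit (T * C).det ∧ (T * C)⁻¹ = C' * T' := by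
    intro C C' hC
    have e : (T * C) * (C' * T') = 1 := by
      calc (T * C) * (C' * T') = T * (C * C') * T' := by noncomm_ring
        _ = 1 := by rw [hC, mul_one, hT]
    exact ⟨Matrix.isUnit_det_of_right_inverse e, Matrix.inv_eq_right_inv e⟩
  rcases hJ.cases hn with hc | hc
  · obtain ⟨C, C', hC, hX⟩ := hJ.inner hn hc
    refine ⟨T * C, (hfin C C' hC).1, Or.inl fun X => ?_⟩
    rw [(hfin C C' hC).2, ← hback (φ X), hX X]
    noncomm_ring
  · obtain ⟨C, C', hC, hX⟩ := hJ.transp.inner hn (by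
      intro i j hij
      simpa only [transpose_single] using hc j i hij.symm)
    refine ⟨T * C, (hfin C C' hC).1, Or.inr fun X => ?_⟩
    have := hX Xᵀ
    simp only [transpose_transpose] at this
    rw [(hfin C C' hC).2, ← hback (φ X), this]
    noncomm_ring
end
end

section
/- Let A ⊆ M_n(ℂ) be a block upper-triangular subalgebra and let φ : A → M_n(ℂ) be a Jordan embedding, i.e. an injective linear map satisfying φ(X²) = φ(X)² for all X ∈ A. Then there exists an invertible matrix T ∈ M_n(ℂ) such that either φ(X) = T X T⁻¹ for all X ∈ A, or φ(X) = T Xᵗ T⁻¹ for all X ∈ A. -/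
open Matrix

noncomputable section

/-- The block index function: `blockIdx k i` is the index `s` (0-based) of the diagonal
block containing row/column `i`, for block sizes given by the list `k`. -/
def blockIdx (k : List ℕ) (i : ℕ) : ℕ :=
  ((Finset.range k.length).filter (fun s => (k.take (s + 1)).sum ≤ i)).card

/-- The block upper-triangular algebra `𝒜_{k₁,…,k_r} ⊆ M_n(ℂ)` determined by the
list of block sizes `k`. -/
def blockAlg (n : ℕ) (k : List ℕ) : Set (Matrix (Fin n) (Fin n) ℂ) :=
  { X | ∀ i j : Fin n, blockIdx k (j : ℕ) < blockIdx k (i : ℕ) → X i j = 0 }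

/-- A subset of `M_n(ℂ)` is a block upper-triangular subalgebra if it is of the form
`blockAlg n k` for some list `k` of positive integers summing to `n`. -/
def IsBlockUT (n : ℕ) (𝒜 : Set (Matrix (Fin n) (Fin n) ℂ)) : Prop :=
  ∃ k : List ℕ, (∀ m ∈ k, 0 < m) ∧ k.sum = n ∧ 𝒜 = blockAlg n k

/-- The exchange matrix `J` (ones on the antidiagonal). -/
def exchMat (n : ℕ) : Matrix (Fin n) (Fin n) ℂ :=
  Matrix.of fun i j => if (i : ℕ) + (j : ℕ) + 1 = n then 1 else 0

namespace JE

variable {n : ℕ}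

/-- scalar dichotomy -/
lemma dich (b : Fin n → ℕ) (a c : Fin n → Fin n → ℂ)
    (h0 : ∀ i j, i ≠ j → b i ≤ b j → a i j * c i j = 0)
    (h1 : ∀ i j, i ≠ j → b i ≤ b j → a i j ≠ 0 ∨ c i j ≠ 0)
    (ha : ∀ i j k, i ≠ j → j ≠ k → i ≠ k → b i ≤ b j → b j ≤ b k → a i k = a i j * a j k)
    (hc : ∀ i j k, i ≠ j → j ≠ k → i ≠ k → b i ≤ b j → b j ≤ b k → c i k = c i j * c j k)
    (hm : ∀ i j, i ≠ j → b i ≤ b j → b j ≤ b i → a i j * a j i + c i j * c j i = 1) :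
    (∀ i j, i ≠ j → b i ≤ b j → c i j = 0 ∧ a i j ≠ 0) ∨
    (∀ i j, i ≠ j → b i ≤ b j → a i j = 0 ∧ c i j ≠ 0) := by
  let t : Fin n → Fin n → Prop := fun i j =>
    (b i ≤ b j → c i j = 0) ∧ (b j ≤ b i → c j i = 0)
  have hmc : ∀ i j, i ≠ j → b i ≤ b j → b j ≤ b i → c i j = 0 → c j i = 0 := by
    intro i j hij h h' hz
    have e1 := hm i j hij h h'
    have e2 := h0 j i hij.symm h'
    rw [hz] at e1
    rcases mul_eq_zero.1 e2 with e | e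
    · rw [e] at e1; simp at e1
    · exact e
  have ht : ∀ i j, i ≠ j → b i ≤ b j → (t i j ↔ c i j = 0) := by
    intro i j hij h
    exact ⟨fun q => q.1 h, fun q => ⟨fun _ => q, fun h' => hmc i j hij h h' q⟩⟩
  have tsymm : ∀ i j, t i j ↔ t j i := fun i j => and_comm
  have hchain : ∀ i j k, i ≠ j → j ≠ k → i ≠ k → b i ≤ b j → b j ≤ b k →
      ((c i j = 0 ↔ c i k = 0) ∧ (c j k = 0 ↔ c i k = 0)) := by
    intro i j k p q r h h'
    have e1 := ha i j k p q r h h'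
    have e2 := hc i j k p q r h h'
    have e3 := h0 i j p h
    have e4 := h0 j k q h'
    have e5 := h0 i k r (h.trans h')
    have e6 := h1 i j p h
    have e7 := h1 j k q h'
    have e8 := h1 i k r (h.trans h')
    rw [e1, e2] at e8
    simp only [mul_eq_zero, ne_eq, not_or] at e3 e4 e5 e6 e7 e8
    rw [e2, mul_eq_zero]
    tauto
  have tchain : ∀ i j k, i ≠ j → j ≠ k → i ≠ k → b i ≤ b j → b j ≤ b k →
      ((t i j ↔ t i k) ∧ (t j k ↔ t i k)) := by
    intro i j k p q r h h'
    rw [ht i j p h, ht j k q h', ht i k r (h.trans h')]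
    exact hchain i j k p q r h h'
  have tt : ∀ i j k, i ≠ j → j ≠ k → i ≠ k → (t i j ↔ t i k) := by
    intro i j k p q r
    have s1 := tsymm i j
    have s2 := tsymm j k
    have s3 := tsymm i k
    rcases le_total (b i) (b j) with h | h <;> rcases le_total (b j) (b k) with h' | h' <;>
      rcases le_total (b i) (b k) with h'' | h''
    · obtain ⟨w1, w2⟩ := tchain i j k p q r h h'; grind
    · obtain ⟨w1, w2⟩ := tchain i j k p q r h h'; grind
    · obtain ⟨w1, w2⟩ := tchain i k j r q.symm p h'' h'; grind
    · obtain ⟨w1, w2⟩ := tchain k i j r.symm p q.symm h'' h; grind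
    · obtain ⟨w1, w2⟩ := tchain j i k p.symm r q h h''; grind
    · obtain ⟨w1, w2⟩ := tchain j k i q r.symm p.symm h' h''; grind
    · obtain ⟨w1, w2⟩ := tchain k j i q.symm p.symm r.symm h' h; grind
    · obtain ⟨w1, w2⟩ := tchain k j i q.symm p.symm r.symm h' h; grind
  have tt' : ∀ i j k, i ≠ j → i ≠ k → (t i j ↔ t i k) := by
    intro i j k p q
    by_cases h : j = k
    · rw [h]
    · exact tt i j k p h q
  have ttt : ∀ i j k l, i ≠ j → k ≠ l → (t i j ↔ t k l) := by
    intro i j k l p q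
    by_cases h : i = k
    · subst h; exact tt' i j l p q
    · rw [tt' i j k p h, tsymm i k, tt' k i l (Ne.symm h) q]
  by_cases H : ∃ i j, i ≠ j ∧ t i j
  · obtain ⟨p, q, hpq, hT⟩ := H
    left
    intro i j hij h
    have z : c i j = 0 := (ht i j hij h).1 ((ttt p q i j hpq hij).1 hT)
    refine ⟨z, ?_⟩
    rcases h1 i j hij h with e | e
    · exact e
    · exact absurd z e
  · right
    intro i j hij h
    have z : c i j ≠ 0 := fun z => H ⟨i, j, hij, (ht i j hij h).2 z⟩
    exact ⟨(mul_eq_zero.1 (h0 i j hij h)).resolve_right z, z⟩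

/-- cocycle is a coboundary -/
lemma cobd (b : Fin n → ℕ) (a : Fin n → Fin n → ℂ)
    (h1 : ∀ i j, i ≠ j → b i ≤ b j → a i j ≠ 0)
    (h2 : ∀ i, a i i = 1)
    (ha : ∀ i j k, i ≠ j → j ≠ k → i ≠ k → b i ≤ b j → b j ≤ b k → a i k = a i j * a j k)
    (hm : ∀ i j, i ≠ j → b i ≤ b j → b j ≤ b i → a i j * a j i = 1) :
    ∃ d : Fin n → ℂ, (∀ i, d i ≠ 0) ∧ ∀ i j, b i ≤ b j → a i j = d i * (d j)⁻¹ := by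
  rcases isEmpty_or_nonempty (Fin n) with he | he
  · exact ⟨fun _ => 1, fun i => he.elim i, fun i => he.elim i⟩
  obtain ⟨m, hmin⟩ := Finite.exists_min b
  have h1' : ∀ i j, b i ≤ b j → a i j ≠ 0 := by
    intro i j h
    by_cases e : i = j
    · subst e; rw [h2]; exact one_ne_zero
    · exact h1 i j e h
  have ha' : ∀ i j k, b i ≤ b j → b j ≤ b k → a i k = a i j * a j k := by
    intro i j k h h'
    by_cases e : i = j
    · subst e; simp [h2]
    by_cases e' : j = k
    · subst e'; simp [h2]
    by_cases e'' : i = k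
    · subst e''; rw [h2, hm i j e h h']
    exact ha i j k e e' e'' h h'
  refine ⟨fun i => (a m i)⁻¹, fun i => inv_ne_zero (h1' m i (hmin i)), fun i j h => ?_⟩
  have := ha' m i j (hmin i) h
  have := h1' m i (hmin i)
  have := h1' m j (hmin j)
  rw [inv_inv]
  field_simp
  grind

abbrev E (i j : Fin n) : Matrix (Fin n) (Fin n) ℂ := Matrix.single i j 1

lemma shape (i j : Fin n) (hij : i ≠ j) (F : Matrix (Fin n) (Fin n) ℂ)
    (h1 : F = E i i * F + F * E i i) (h2 : F = E j j * F + F * E j j) :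
    F = F i j • E i j + F j i • E j i := by
  have e : ∀ i k l : Fin n, (E i i * F + F * E i i) k l =
      (if k = i then F k l else 0) + (if l = i then F k l else 0) := by
    intro i k l
    simp only [Matrix.add_apply, Matrix.mul_apply, E, Matrix.single_apply]
    congr 1
    · by_cases h : k = i
      · subst h; simp
      · simp [h, Ne.symm h]
    · by_cases h : l = i
      · subst h; simp
      · simp [h, Ne.symm h]
  ext k l
  have q1 : F k l = _ := (congrFun (congrFun h1 k) l).trans (e i k l)
  have q2 : F k l = _ := (congrFun (congrFun h2 k) l).trans (e j k l)
  simp only [Matrix.add_apply, Matrix.smul_apply, E, Matrix.single_apply, smul_eq_mul]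
  by_cases k1 : k = i <;> by_cases l1 : l = i <;> by_cases k2 : k = j <;> by_cases l2 : l = j <;>
    clear h1 h2 e <;> grind

lemma core (b : Fin n → ℕ) (F : Fin n → Fin n → Matrix (Fin n) (Fin n) ℂ)
    (hd : ∀ i, F i i = E i i)
    (hl : ∀ i j, i ≠ j → b i ≤ b j → F i j = E i i * F i j + F i j * E i i)
    (hr : ∀ i j, i ≠ j → b i ≤ b j → F i j = E j j * F i j + F i j * E j j)
    (hs : ∀ i j, i ≠ j → b i ≤ b j → F i j * F i j = 0)
    (hc : ∀ i j k, i ≠ j → j ≠ k → i ≠ k → b i ≤ b j → b j ≤ b k →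
      F i k = F i j * F j k + F j k * F i j)
    (hm : ∀ i j, i ≠ j → b i ≤ b j → b j ≤ b i →
      F i j * F j i + F j i * F i j = E i i + E j j)
    (hn : ∀ i j, i ≠ j → b i ≤ b j → F i j ≠ 0) :
    ∃ d : Fin n → ℂ, (∀ i, d i ≠ 0) ∧
      ((∀ i j, b i ≤ b j → F i j = (d i * (d j)⁻¹) • E i j) ∨
       (∀ i j, b i ≤ b j → F i j = (d i * (d j)⁻¹) • E j i)) := by
  let a : Fin n → Fin n → ℂ := fun i j => F i j i j
  let c : Fin n → Fin n → ℂ := fun i j => F i j j i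
  have hsh : ∀ i j, i ≠ j → b i ≤ b j → F i j = a i j • E i j + c i j • E j i :=
    fun i j p h => shape i j p _ (hl i j p h) (hr i j p h)
  have g0 : ∀ i j, i ≠ j → b i ≤ b j → a i j * c i j = 0 := by
    intro i j p h
    have := congrFun (congrFun (hs i j p h) i) i
    rw [hsh i j p h] at this
    simpa [add_mul, mul_add, Matrix.single_apply, p, p.symm] using this
  have g1 : ∀ i j, i ≠ j → b i ≤ b j → a i j ≠ 0 ∨ c i j ≠ 0 := by
    intro i j p h
    by_contra! q
    apply hn i j p h
    rw [hsh i j p h, q.1, q.2]; simp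
  have gc : ∀ i j k, i ≠ j → j ≠ k → i ≠ k → b i ≤ b j → b j ≤ b k →
      F i k = (a i j * a j k) • E i k + (c i j * c j k) • E k i := by
    intro i j k p q r h h'
    rw [hc i j k p q r h h', hsh i j p h, hsh j k q h']
    simp [add_mul, mul_add, p, p.symm, q, q.symm, r, r.symm, mul_comm]
  have ga : ∀ i j k, i ≠ j → j ≠ k → i ≠ k → b i ≤ b j → b j ≤ b k →
      a i k = a i j * a j k := by
    intro i j k p q r h h'
    show F i k i k = _
    rw [gc i j k p q r h h']
    simp [Matrix.single_apply, r, r.symm]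
  have gcc : ∀ i j k, i ≠ j → j ≠ k → i ≠ k → b i ≤ b j → b j ≤ b k →
      c i k = c i j * c j k := by
    intro i j k p q r h h'
    show F i k k i = _
    rw [gc i j k p q r h h']
    simp [Matrix.single_apply, r, r.symm]
  have gm : ∀ i j, i ≠ j → b i ≤ b j → b j ≤ b i → a i j * a j i + c i j * c j i = 1 := by
    intro i j p h h'
    have := congrFun (congrFun (hm i j p h h') i) i
    rw [hsh i j p h, hsh j i p.symm h'] at this
    simpa [add_mul, mul_add, Matrix.single_apply, p, p.symm, mul_comm] using this
  have ad : ∀ i, a i i = 1 := by intro i; simp [a, hd]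
  have cd : ∀ i, c i i = 1 := by intro i; simp [c, hd]
  rcases dich b a c g0 g1 ga gcc gm with H | H
  · obtain ⟨d, hd0, hd1⟩ := cobd b a (fun i j p h => (H i j p h).2) ad ga (by
      intro i j p h h'
      have := gm i j p h h'
      rwa [(H i j p h).1, zero_mul, add_zero] at this)
    refine ⟨d, hd0, Or.inl fun i j h => ?_⟩
    rw [← hd1 i j h]
    by_cases e : i = j
    · subst e; rw [ad, hd, one_smul]
    · rw [hsh i j e h, (H i j e h).1]; simp
  · obtain ⟨d, hd0, hd1⟩ := cobd b c (fun i j p h => (H i j p h).2) cd gcc (by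
      intro i j p h h'
      have := gm i j p h h'
      rwa [(H i j p h).1, zero_mul, zero_add] at this)
    refine ⟨d, hd0, Or.inr fun i j h => ?_⟩
    rw [← hd1 i j h]
    by_cases e : i = j
    · subst e; rw [cd, hd, one_smul]
    · rw [hsh i j e h, (H i j e h).1]; simp

/-- simultaneous diagonalisation of `n` nonzero orthogonal idempotents -/
lemma diag (P : Fin n → Matrix (Fin n) (Fin n) ℂ) (h0 : ∀ i, P i ≠ 0)
    (hi : ∀ i, P i * P i = P i) (ho : ∀ i j, i ≠ j → P i * P j + P j * P i = 0) :
    ∃ T : Matrix (Fin n) (Fin n) ℂ, IsUnit T.det ∧ ∀ i, P i * T = T * E i i := by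
  have horth : ∀ i j, i ≠ j → P i * P j = 0 := by
    intro i j p
    have e := ho i j p
    have e1 : P i * P j + P i * P j * P i = 0 := by
      have := congrArg (fun X => P i * X) e
      simpa [mul_add, ← mul_assoc, hi] using this
    have e2 : P i * P j * P i + P j * P i = 0 := by
      have := congrArg (fun X => X * P i) e
      simpa [add_mul, mul_assoc, hi] using this
    have e3 : P i * P j = P j * P i := by
      have := e1.trans e2.symm
      rw [add_comm (P i * P j * P i)] at this
      exact add_right_cancel this
    rw [← e3] at e
    have : (2 : ℂ) • (P i * P j) = 0 := by rw [two_smul]; exact e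
    simpa using this
  have hv : ∀ i, ∃ v : Fin n → ℂ, v ≠ 0 ∧ P i *ᵥ v = v := by
    intro i
    have : ∃ w, P i *ᵥ w ≠ 0 := by
      by_contra! h
      apply h0 i
      ext k l
      have := congrFun (h (Pi.single l 1)) k
      simpa using this
    obtain ⟨w, hw⟩ := this
    exact ⟨P i *ᵥ w, hw, by rw [Matrix.mulVec_mulVec, hi]⟩
  choose v hv0 hv1 using hv
  have hPv : ∀ i j, P i *ᵥ v j = if j = i then v j else 0 := by
    intro i j
    by_cases h : j = i
    · subst h; simp [hv1]
    · rw [if_neg h, ← hv1 j, Matrix.mulVec_mulVec, horth i j (Ne.symm h), Matrix.zero_mulVec]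
  have hli : LinearIndependent ℂ v := by
    rw [Fintype.linearIndependent_iff]
    intro g hg i
    have := congrArg (fun x => P i *ᵥ x) hg
    simp only [Matrix.mulVec_sum, Matrix.mulVec_smul, hPv, Matrix.mulVec_zero] at this
    simpa [hv0] using this
  let T : Matrix (Fin n) (Fin n) ℂ := Matrix.of fun k j => v j k
  refine ⟨T, ?_, ?_⟩
  · rw [← Matrix.isUnit_iff_isUnit_det, ← Matrix.linearIndependent_cols_iff_isUnit]
    exact hli
  · intro i
    ext k j
    have e1 : (P i * T) k j = (P i *ᵥ v j) k := rfl
    rw [e1, hPv]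
    by_cases h : j = i
    · subst h; simp [T]
    · simp [h, T, Matrix.mul_apply, Matrix.single_apply, Ne.symm h]

lemma main (b : Fin n → ℕ) (A : Set (Matrix (Fin n) (Fin n) ℂ))
    (hA : ∀ X, X ∈ A ↔ ∀ i j, b j < b i → X i j = 0)
    (φ : Matrix (Fin n) (Fin n) ℂ → Matrix (Fin n) (Fin n) ℂ)
    (hadd : ∀ X ∈ A, ∀ Y ∈ A, φ (X + Y) = φ X + φ Y)
    (hsmul : ∀ (c : ℂ), ∀ X ∈ A, φ (c • X) = c • φ X)
    (hinj : Set.InjOn φ A)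
    (hjordan : ∀ X ∈ A, φ (X * X) = φ X * φ X) :
    ∃ T : Matrix (Fin n) (Fin n) ℂ, IsUnit T.det ∧
      ((∀ X ∈ A, φ X = T * X * T⁻¹) ∨ (∀ X ∈ A, φ X = T * Xᵀ * T⁻¹)) := by
  have Aadd : ∀ X ∈ A, ∀ Y ∈ A, X + Y ∈ A := by
    intro X hX Y hY
    rw [hA] at *
    intro i j h
    simp [hX i j h, hY i j h]
  have Asmul : ∀ (c : ℂ), ∀ X ∈ A, c • X ∈ A := by
    intro c X hX
    rw [hA] at *
    intro i j h
    simp [hX i j h]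
  have Amul : ∀ X ∈ A, ∀ Y ∈ A, X * Y ∈ A := by
    intro X hX Y hY
    rw [hA] at *
    intro i j h
    rw [Matrix.mul_apply]
    apply Finset.sum_eq_zero
    intro k _
    by_cases q : b k < b i
    · simp [hX i k q]
    · rw [hY k j (by omega), mul_zero]
  have A0 : (0 : Matrix (Fin n) (Fin n) ℂ) ∈ A := by rw [hA]; simp
  have AE : ∀ i j, b i ≤ b j → E i j ∈ A := by
    intro i j h
    rw [hA]
    intro k l h'
    rw [E, Matrix.single_apply, if_neg]
    rintro ⟨rfl, rfl⟩
    omega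
  have φ0 : φ 0 = 0 := by
    have := hsmul 0 0 A0
    simpa using this
  have hJ : ∀ X ∈ A, ∀ Y ∈ A, φ (X * Y + Y * X) = φ X * φ Y + φ Y * φ X := by
    intro X hX Y hY
    have e := hjordan (X + Y) (Aadd X hX Y hY)
    have e1 : (X + Y) * (X + Y) = X * X + ((X * Y + Y * X) + Y * Y) := by noncomm_ring
    rw [e1, hadd _ (Amul X hX X hX) _ (Aadd _ (Aadd _ (Amul X hX Y hY) _ (Amul Y hY X hX)) _
      (Amul Y hY Y hY)), hadd _ (Aadd _ (Amul X hX Y hY) _ (Amul Y hY X hX)) _ (Amul Y hY Y hY),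
      hjordan X hX, hjordan Y hY, hadd X hX Y hY] at e
    have e2 : (φ X + φ Y) * (φ X + φ Y) =
      φ X * φ X + ((φ X * φ Y + φ Y * φ X) + φ Y * φ Y) := by noncomm_ring
    rw [e2] at e
    exact add_right_cancel (add_left_cancel e)
  have hne : ∀ i j, b i ≤ b j → φ (E i j) ≠ 0 := by
    intro i j h q
    have := hinj (AE i j h) A0 (q.trans φ0.symm)
    have := congrFun (congrFun this i) j
    simp [E] at this
  obtain ⟨S, hS, hSP⟩ := diag (fun i => φ (E i i)) (fun i => hne i i le_rfl)
    (fun i => by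
      have := hjordan (E i i) (AE i i le_rfl)
      rw [← this]; simp [E])
    (fun i j p => by
      have := hJ (E i i) (AE i i le_rfl) (E j j) (AE j j le_rfl)
      rw [← this]; simp [E, p, p.symm, φ0])
  have hS1 : S⁻¹ * S = 1 := Matrix.nonsing_inv_mul S hS
  have hS2 : S * S⁻¹ = 1 := Matrix.mul_nonsing_inv S hS
  let ψ : Matrix (Fin n) (Fin n) ℂ → Matrix (Fin n) (Fin n) ℂ := fun X => S⁻¹ * φ X * S
  have hψφ : ∀ X, φ X = S * ψ X * S⁻¹ := by
    intro X
    calc φ X = (S * S⁻¹) * φ X * (S * S⁻¹) := by simp [hS2]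
      _ = _ := by simp only [ψ, mul_assoc]
  have ψmul : ∀ X Y, ψ X * ψ Y = S⁻¹ * (φ X * φ Y) * S := by
    intro X Y
    calc ψ X * ψ Y = S⁻¹ * φ X * (S * S⁻¹) * φ Y * S := by simp only [ψ, mul_assoc]
      _ = _ := by rw [hS2]; simp only [mul_assoc, mul_one, one_mul]
  have ψ0 : ψ 0 = 0 := by simp [ψ, φ0]
  have ψadd : ∀ X ∈ A, ∀ Y ∈ A, ψ (X + Y) = ψ X + ψ Y := by
    intro X hX Y hY
    simp only [ψ, hadd X hX Y hY, mul_add, add_mul]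
  have ψsmul : ∀ (c : ℂ), ∀ X ∈ A, ψ (c • X) = c • ψ X := by
    intro c X hX
    simp [ψ, hsmul c X hX]
  have ψJ : ∀ X ∈ A, ∀ Y ∈ A, ψ (X * Y + Y * X) = ψ X * ψ Y + ψ Y * ψ X := by
    intro X hX Y hY
    rw [ψmul, ψmul]
    simp only [ψ, hJ X hX Y hY, mul_add, add_mul]
  have ψd : ∀ i, ψ (E i i) = E i i := by
    intro i
    simp only [ψ]
    rw [mul_assoc, hSP i, ← mul_assoc, hS1, one_mul]
  obtain ⟨d, hd0, hd⟩ := core b (fun i j => ψ (E i j)) ψd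
    (fun i j p h => by
      have := ψJ _ (AE i i le_rfl) _ (AE i j h)
      rw [ψd] at this
      rw [← this]; simp [E, p, p.symm])
    (fun i j p h => by
      have := ψJ _ (AE j j le_rfl) _ (AE i j h)
      rw [ψd] at this
      rw [← this]; simp [E, p, p.symm])
    (fun i j p h => by
      have := hjordan _ (AE i j h)
      rw [ψmul, ← this]; simp [E, p, p.symm, φ0])
    (fun i j k p q r h h' => by
      have := ψJ _ (AE i j h) _ (AE j k h')
      rw [← this]; simp [E, r, r.symm])
    (fun i j p h h' => by
      have := ψJ _ (AE i j h) _ (AE j i h')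
      rw [← this, ← ψd i, ← ψd j, ← ψadd _ (AE i i le_rfl) _ (AE j j le_rfl)]
      simp [E])
    (fun i j p h q => by
      apply hne i j h
      rw [hψφ, show ψ (E i j) = 0 from q]; simp)
  -- linear extension
  have hext : ∀ L : Matrix (Fin n) (Fin n) ℂ →ₗ[ℂ] Matrix (Fin n) (Fin n) ℂ,
      (∀ i j, b i ≤ b j → ψ (E i j) = L (E i j)) → ∀ X ∈ A, ψ X = L X := by
    intro L hL X hX
    have key : ∀ s : Finset (Fin n × Fin n),
        (∑ p ∈ s, X p.1 p.2 • E p.1 p.2) ∈ A ∧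
        ψ (∑ p ∈ s, X p.1 p.2 • E p.1 p.2) = L (∑ p ∈ s, X p.1 p.2 • E p.1 p.2) := by
      intro s
      induction s using Finset.induction_on with
      | empty => simp [A0, ψ0]
      | insert p s hp ih =>
        rw [Finset.sum_insert hp]
        by_cases h : b p.1 ≤ b p.2
        · have m := Asmul (X p.1 p.2) _ (AE _ _ h)
          refine ⟨Aadd _ m _ ih.1, ?_⟩
          rw [ψadd _ m _ ih.1, ih.2, ψsmul _ _ (AE _ _ h), hL _ _ h, map_add, map_smul]
        · rw [(hA X).1 hX p.1 p.2 (by omega), zero_smul, zero_add]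
          exact ih
    have e : X = ∑ p : Fin n × Fin n, X p.1 p.2 • E p.1 p.2 := by
      rw [Fintype.sum_prod_type]
      conv_lhs => rw [Matrix.matrix_eq_sum_single X]
      simp [E, Matrix.smul_single]
    rw [e]
    exact (key Finset.univ).2
  let D : Matrix (Fin n) (Fin n) ℂ := Matrix.diagonal d
  let D' : Matrix (Fin n) (Fin n) ℂ := Matrix.diagonal fun i => (d i)⁻¹
  have hDD : D * D' = 1 := by
    simp [D, D', Matrix.diagonal_mul_diagonal, hd0]
  have hDD' : D' * D = 1 := by
    simp [D, D', Matrix.diagonal_mul_diagonal, hd0]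
  rcases hd with hd | hd
  · refine ⟨S * D, ?_, Or.inl ?_⟩
    · rw [Matrix.det_mul]
      exact hS.mul (Matrix.isUnit_det_of_right_inverse hDD)
    · intro X hX
      have := hext ((LinearMap.mulLeft ℂ D).comp (LinearMap.mulRight ℂ D')) (by
        intro i j h
        rw [show ψ (E i j) = _ from hd i j h]
        ext k l
        simp [D, D', Matrix.single_apply]
        by_cases hk : i = k <;> by_cases hl : j = l <;> simp [hk, hl]) X hX
      rw [Matrix.mul_inv_rev, Matrix.inv_eq_right_inv hDD, hψφ, this]
      simp [mul_assoc]
  · refine ⟨S * D', ?_, Or.inr ?_⟩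
    · rw [Matrix.det_mul]
      exact hS.mul (Matrix.isUnit_det_of_right_inverse hDD')
    · intro X hX
      have := hext ((LinearMap.mulLeft ℂ D').comp ((LinearMap.mulRight ℂ D).comp
          (Matrix.transposeLinearEquiv (Fin n) (Fin n) ℂ ℂ).toLinearMap)) (by
        intro i j h
        rw [show ψ (E i j) = _ from hd i j h]
        ext k l
        simp [D, D', Matrix.single_apply]
        by_cases hk : j = k <;> by_cases hl : i = l <;> simp [hk, hl, mul_comm]) X hX
      rw [Matrix.mul_inv_rev, Matrix.inv_eq_right_inv hDD', hψφ, this]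
      simp [mul_assoc]

end JE

theorem jordan_embedding_form {n : ℕ} (𝒜 : Set (Matrix (Fin n) (Fin n) ℂ))
    (h𝒜 : IsBlockUT n 𝒜)
    (φ : Matrix (Fin n) (Fin n) ℂ → Matrix (Fin n) (Fin n) ℂ)
    (hadd : ∀ X ∈ 𝒜, ∀ Y ∈ 𝒜, φ (X + Y) = φ X + φ Y)
    (hsmul : ∀ (c : ℂ), ∀ X ∈ 𝒜, φ (c • X) = c • φ X)
    (hinj : Set.InjOn φ 𝒜)
    (hjordan : ∀ X ∈ 𝒜, φ (X * X) = φ X * φ X) :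
    ∃ T : Matrix (Fin n) (Fin n) ℂ, IsUnit T.det ∧
      ((∀ X ∈ 𝒜, φ X = T * X * T⁻¹) ∨ (∀ X ∈ 𝒜, φ X = T * Xᵀ * T⁻¹)) := by
  obtain ⟨k, -, -, rfl⟩ := h𝒜
  exact JE.main (fun i => blockIdx k (i : ℕ)) _ (fun X => Iff.rfl) φ hadd hsmul hinj hjordan
end
end

section
/- Let n ≥ 3, let A ⊆ M_n(ℂ) be a block upper-triangular subalgebra, and let φ : A → M_n(ℂ) be a continuous injective map which preserves commutativity and spectrum. Then there exists an invertible matrix T ∈ M_n(ℂ) such that either φ(X) = T X T⁻¹ for all X ∈ A, or φ(X) = T Xᵗ T⁻¹ for all X ∈ A; in particular φ is linear and satisfies φ(X²) = φ(X)² for all X ∈ A. -/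
open Matrix

noncomputable section

namespace BUT

/-- Complex square matrices. -/
abbrev Mat (n : ℕ) := Matrix (Fin n) (Fin n) ℂ

/-- Diagonalizability with explicit inverse. -/
def Diagble {n : ℕ} (X : Mat n) : Prop :=
  ∃ (T T' : Mat n) (d : Fin n → ℂ), T * T' = 1 ∧ X = T * diagonal d * T'

lemma diag_of_spectrum {n : ℕ} (X : Mat n) (d : Fin n → ℂ) (hd : Function.Injective d)
    (h : ∀ i, d i ∈ spectrum ℂ X) :
    ∃ T T' : Mat n, T * T' = 1 ∧ X = T * diagonal d * T' := by
  have h1 : ∀ i, ∃ v : Fin n → ℂ, Module.End.HasEigenvector (Matrix.toLin' X) (d i) v := by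
    intro i
    have : Module.End.HasEigenvalue (Matrix.toLin' X) (d i) := by
      rw [Module.End.hasEigenvalue_iff_mem_spectrum, Matrix.spectrum_toLin']
      exact h i
    exact this.exists_hasEigenvector
  choose v hv using h1
  have hli := Module.End.eigenvectors_linearIndependent' (Matrix.toLin' X) d hd v hv
  let T : Mat n := Matrix.of fun r c => v c r
  have hT : IsUnit T := by
    rw [← Matrix.linearIndependent_cols_iff_isUnit]
    exact hli
  have hdet : IsUnit T.det := (Matrix.isUnit_iff_isUnit_det T).1 hT
  refine ⟨T, T⁻¹, Matrix.mul_nonsing_inv T hdet, ?_⟩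
  have key : X * T = T * diagonal d := by
    ext r c
    rw [Matrix.mul_diagonal]
    have := congrFun (hv c).apply_eq_smul r
    rw [Matrix.toLin'_apply] at this
    simpa [T, Matrix.mul_apply, Matrix.mulVec, dotProduct, mul_comm] using this
  rw [← key, Matrix.mul_assoc, Matrix.mul_nonsing_inv T hdet, Matrix.mul_one]

lemma diagble_of_resultant {n : ℕ} (X : Mat n) (h : IsCoprime X.charpoly X.charpoly.derivative) :
    Diagble X := by
  have hs : X.charpoly.Separable := h
  have hsp : X.charpoly.Splits := IsAlgClosed.splits _
  have hnd := Polynomial.nodup_roots hs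
  have hc : X.charpoly.roots.card = n := by
    rw [← hsp.natDegree_eq_card_roots, Matrix.charpoly_natDegree_eq_dim]; simp
  have hc' : X.charpoly.roots.toFinset.card = n := by
    rw [Multiset.toFinset_card_of_nodup hnd, hc]
  let e := X.charpoly.roots.toFinset.equivFinOfCardEq hc'
  obtain ⟨T, T', h1, h2⟩ := diag_of_spectrum X (fun i => (e.symm i : ℂ))
    (fun i j hij => e.symm.injective (Subtype.ext hij)) (by
      intro i
      rw [Matrix.mem_spectrum_iff_isRoot_charpoly]
      have := (e.symm i).2
      rw [Multiset.mem_toFinset] at this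
      exact Polynomial.isRoot_of_mem_roots this)
  exact ⟨T, T', _, h1, h2⟩

/-- The distinguished diagonal. -/
def d0 (n : ℕ) : Fin n → ℂ := fun i => ((i : ℕ) : ℂ)

lemma d0_inj (n : ℕ) : Function.Injective (d0 n) := by
  intro i j h
  simpa [d0, Fin.ext_iff] using h

lemma finite_bad {n : ℕ} (X : Mat n) :
    ∃ s : Set ℂ, s.Finite ∧ ∀ t ∉ s, Diagble (diagonal (d0 n) + t • (X - diagonal (d0 n))) := by
  classical
  let D : Mat n := diagonal (d0 n)
  let P : Matrix (Fin n) (Fin n) (Polynomial ℂ) :=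
    D.map Polynomial.C + (Polynomial.X : Polynomial ℂ) • (X - D).map Polynomial.C
  let q : Polynomial ℂ := Polynomial.resultant P.charpoly P.charpoly.derivative n (n - 1)
  have hP : ∀ t : ℂ, P.map (Polynomial.evalRingHom t) = D + t • (X - D) := by
    intro t
    ext i j
    simp [P, Matrix.map_apply, Polynomial.eval_C]
    
  have hq : ∀ t : ℂ, q.eval t = Polynomial.resultant (D + t • (X - D)).charpoly
      (D + t • (X - D)).charpoly.derivative := by
    intro t
    have h1 : (D + t • (X - D)).charpoly = P.charpoly.map (Polynomial.evalRingHom t) := by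
      rw [← hP t, Matrix.charpoly_map]
    have hn : (D + t • (X - D)).charpoly.natDegree = n := by
      rw [Matrix.charpoly_natDegree_eq_dim]; simp
    have hn' : (D + t • (X - D)).charpoly.derivative.natDegree = n - 1 := by
      rw [Polynomial.natDegree_derivative, hn]
    rw [hn, hn', h1, Polynomial.derivative_map, Polynomial.resultant_map_map]
    rfl
  have hco : ∀ t : ℂ, q.eval t ≠ 0 → Diagble (D + t • (X - D)) := by
    intro t ht
    rw [hq] at ht
    apply diagble_of_resultant
    by_contra hcon
    exact ht (Polynomial.resultant_eq_zero_iff.2 ⟨Or.inl (Matrix.charpoly_monic _).ne_zero, hcon⟩)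
  have hq0 : q.eval 0 ≠ 0 := by
    rw [hq]
    intro hz
    have := (Polynomial.resultant_eq_zero_iff.1 hz).2
    apply this
    have : (D + (0:ℂ) • (X - D)).charpoly.Separable := by
      rw [zero_smul, add_zero, Matrix.charpoly_diagonal]
      apply Polynomial.separable_prod_X_sub_C_iff.2 (d0_inj n)
    exact this
  refine ⟨{t | q.IsRoot t}, Polynomial.finite_setOfPred_isRoot ?_, ?_⟩
  · rintro h; rw [h] at hq0; simp at hq0
  · intro t ht; exact hco t ht

lemma dense_diagble {n : ℕ} (b : Fin n → ℕ) (X : Mat n) (hX : X.BlockTriangular b) :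
    X ∈ closure {Y : Mat n | Y.BlockTriangular b ∧ Diagble Y} := by
  obtain ⟨s, hs, h⟩ := finite_bad X
  let γ : ℂ → Mat n := fun t => diagonal (d0 n) + t • (X - diagonal (d0 n))
  have hγ : Continuous γ := by fun_prop
  have h1 : (1:ℂ) ∈ closure sᶜ := by
    have : Dense sᶜ := hs.countable.dense_compl ℂ
    exact this 1
  have h2 : γ 1 ∈ closure (γ '' sᶜ) := image_closure_subset_closure_image hγ ⟨1, h1, rfl⟩
  have h3 : γ 1 = X := by simp [γ]
  rw [h3] at h2
  refine closure_mono ?_ h2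
  rintro _ ⟨t, ht, rfl⟩
  refine ⟨?_, h t ht⟩
  have hD := blockTriangular_diagonal (b := b) (d0 n)
  intro i j hij
  have := hX hij
  have h' := hD hij
  simp [γ, this, h']

/-- The set of transvections in the algebra. -/
def gens {n : ℕ} (b : Fin n → ℕ) : Set (Mat n) :=
  {S | ∃ i j a, i ≠ j ∧ b i ≤ b j ∧ S = transvection i j a}

/-- The monoid generated by transvections. -/
def HH {n : ℕ} (b : Fin n → ℕ) : Submonoid (Mat n) := Submonoid.closure (gens b)

lemma HH_bt {n : ℕ} {b : Fin n → ℕ} {S : Mat n} (h : S ∈ HH b) : S.BlockTriangular b := by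
  induction h using Submonoid.closure_induction with
  | mem x hx => obtain ⟨i, j, a, hij, hb, rfl⟩ := hx; exact blockTriangular_transvection hb a
  | one => exact blockTriangular_one
  | mul x y _ _ hx hy => exact hx.mul hy

lemma HH_inv {n : ℕ} {b : Fin n → ℕ} {S : Mat n} (h : S ∈ HH b) :
    ∃ S' ∈ HH b, S * S' = 1 ∧ S' * S = 1 := by
  induction h using Submonoid.closure_induction with
  | mem x hx =>
    obtain ⟨i, j, a, hij, hb, rfl⟩ := hx
    refine ⟨transvection i j (-a), Submonoid.subset_closure ⟨i, j, -a, hij, hb, rfl⟩, ?_, ?_⟩ <;>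
    · rw [transvection_mul_transvection_same _ _ hij]; simp
  | one => exact ⟨1, one_mem _, by simp, by simp⟩
  | mul x y _ _ hx hy =>
    obtain ⟨x', hx', h1, h2⟩ := hx
    obtain ⟨y', hy', h3, h4⟩ := hy
    refine ⟨y' * x', mul_mem hy' hx', ?_, ?_⟩
    · calc x * y * (y' * x') = x * (y * y') * x' := by simp only [Matrix.mul_assoc]
        _ = 1 := by rw [h3, Matrix.mul_one, h1]
    · calc y' * x' * (x * y) = y' * (x' * x) * y := by simp only [Matrix.mul_assoc]
        _ = 1 := by rw [h2, Matrix.mul_one, h4]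

lemma col_mem {n : ℕ} (b : Fin n → ℕ) (i : Fin n) (w : Fin n → ℂ)
    (hw : ∀ j, b i < b j → w j = 0) (s : Finset (Fin n)) (hs : i ∉ s) :
    (1 + ∑ j ∈ s, single j i (w j) : Mat n) ∈ HH b := by
  classical
  induction s using Finset.induction_on with
  | empty => simp
  | insert j s hj ih =>
    have hij : j ≠ i := fun h => hs (by simp [h])
    have his : i ∉ s := fun h => hs (by simp [h])
    have h1 : (1 + ∑ j ∈ insert j s, single j i (w j) : Mat n) =
        (1 + ∑ j ∈ s, single j i (w j)) * transvection j i (w j) := by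
      rw [Finset.sum_insert hj, transvection, Matrix.mul_add, Matrix.mul_one, Matrix.add_mul,
        Matrix.one_mul, Finset.sum_mul]
      have : ∑ x ∈ s, single x i (w x) * single j i (w j) = (0 : Mat n) :=
        Finset.sum_eq_zero fun x _ => single_mul_single_of_ne _ _ _ _ hij.symm _
      rw [this]; abel
    rw [h1]
    refine mul_mem (ih his) ?_
    by_cases hb : b j ≤ b i
    · exact Submonoid.subset_closure ⟨j, i, w j, hij, hb, rfl⟩
    · rw [hw j (not_le.1 hb)]; simp

lemma exists_eig {n : ℕ} (b : Fin n → ℕ) (X : Mat n) (hX : X.BlockTriangular b)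
    (hd : Diagble X) (i : Fin n) :
    ∃ (w : Fin n → ℂ) (μ : ℂ), w i = 1 ∧ (∀ j, b i < b j → w j = 0) ∧ X *ᵥ w = μ • w := by
  obtain ⟨T, T', d, hT, rfl⟩ := hd
  set X := T * diagonal d * T' with hXd
  have hT' : T' * T = 1 := mul_eq_one_comm.1 hT
  have hXT : X * T = T * diagonal d := by
    rw [hXd, Matrix.mul_assoc, hT', Matrix.mul_one]
  let f := Matrix.toLin' X
  have htop : ⨆ μ, Module.End.genEigenspace f μ 1 = ⊤ := by
    rw [eq_top_iff]
    rintro v -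
    have hv : v = ∑ k, (T' *ᵥ v) k • T.col k := by
      conv_lhs => rw [← Matrix.one_mulVec v, ← hT, ← Matrix.mulVec_mulVec,
        Matrix.mulVec_eq_sum]
      simp only [op_smul_eq_smul]
      rfl
    rw [hv]
    refine Submodule.sum_mem _ fun k _ => Submodule.smul_mem _ _ ?_
    refine Submodule.mem_iSup_of_mem (d k) ?_
    refine Module.End.mem_eigenspace_iff.2 ?_
    ext r
    have := congrFun (congrFun hXT r) k
    rw [Matrix.mul_diagonal] at this
    simpa [f, Matrix.mul_apply, Matrix.mulVec, dotProduct, mul_comm] using this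
  let W : Submodule ℂ (Fin n → ℂ) :=
    { carrier := {w | ∀ j, b i < b j → w j = 0}
      add_mem' := by intro x y hx hy j hj; simp [hx j hj, hy j hj]
      zero_mem' := by intro j _; rfl
      smul_mem' := by intro c x hx j hj; simp [hx j hj] }
  have hW : ∀ x ∈ W, f x ∈ W := by
    intro x hx j hj
    simp only [f, Matrix.toLin'_apply, Matrix.mulVec, dotProduct]
    refine Finset.sum_eq_zero fun k _ => ?_
    by_cases hk : b i < b k
    · rw [hx k hk, mul_zero]
    · rw [hX (lt_of_le_of_lt (not_lt.1 hk) hj), zero_mul]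
  have hdec := Submodule.eq_iSup_inf_genEigenspace 1 hW htop
  by_contra hcon
  push Not at hcon
  have hle : W ≤ LinearMap.ker (LinearMap.proj i : (Fin n → ℂ) →ₗ[ℂ] ℂ) := by
    rw [hdec]
    refine iSup_le fun μ => ?_
    rintro w ⟨hw1, hw2⟩
    rw [LinearMap.mem_ker, LinearMap.proj_apply]
    by_contra hwi
    refine hcon ((w i)⁻¹ • w) μ (by simp [hwi]) (fun j hj => by simp [hw1 j hj]) ?_
    have : f w = μ • w := Module.End.mem_eigenspace_iff.1 hw2
    rw [Matrix.mulVec_smul, smul_comm]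
    congr 1
  have hei : (Pi.single i 1 : Fin n → ℂ) ∈ W := by
    intro j hj
    have : j ≠ i := by rintro rfl; exact lt_irrefl _ hj
    simp [this]
  have := hle hei
  simp at this

lemma diagonalize {n : ℕ} (b : Fin n → ℕ) (X : Mat n) (hX : X.BlockTriangular b)
    (hd : Diagble X) :
    ∃ S ∈ HH b, ∃ S' ∈ HH b, S * S' = 1 ∧ ∃ d, X = S * diagonal d * S' := by
  classical
  induction hN : (Finset.univ.filter
    (fun i : Fin n => ¬ ∃ μ : ℂ, X *ᵥ Pi.single i 1 = μ • Pi.single i 1)).card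
    using Nat.strong_induction_on generalizing X with
  | _ N ih =>
  by_cases hall : ∀ i, ∃ μ : ℂ, X *ᵥ Pi.single i 1 = μ • Pi.single i 1
  · choose μ hμ using hall
    refine ⟨1, one_mem _, 1, one_mem _, by simp, μ, ?_⟩
    ext r c
    have := congrFun (hμ c) r
    simp [Matrix.mulVec_single] at this
    rw [Matrix.one_mul, Matrix.mul_one, this, diagonal_apply, Pi.single_apply]
    by_cases h : r = c <;> simp [h]
  · rw [not_forall] at hall
    obtain ⟨i, hi⟩ := hall
    obtain ⟨w, μ, hwi, hwb, hwe⟩ := exists_eig b X hX hd i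
    let S : Mat n := 1 + ∑ j ∈ Finset.univ.erase i, single j i (w j)
    have hS : S ∈ HH b := col_mem b i w hwb _ (by simp)
    obtain ⟨S', hS', h1, h2⟩ := HH_inv hS
    have hSi : S *ᵥ Pi.single i 1 = w := by
      ext r
      simp [S, Matrix.mulVec_single, Matrix.add_apply, Matrix.sum_apply, single_apply,
        Matrix.one_apply]
      by_cases h : r = i
      · subst h; simp [hwi]
      · simp [h, Ne.symm h]
    have hSk : ∀ k, k ≠ i → S *ᵥ Pi.single k 1 = Pi.single k 1 := by
      intro k hk
      ext r
      simp [S, Matrix.mulVec_single, Matrix.add_apply, Matrix.sum_apply, single_apply,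
        Matrix.one_apply, hk.symm, Pi.single_apply]
    have hback : ∀ v : Fin n → ℂ, S' *ᵥ (S *ᵥ v) = v := by
      intro v; rw [Matrix.mulVec_mulVec, h2, Matrix.one_mulVec]
    have hgi : (S' * X * S) *ᵥ Pi.single i 1 = μ • Pi.single i 1 := by
      rw [← Matrix.mulVec_mulVec, ← Matrix.mulVec_mulVec, hSi, hwe, Matrix.mulVec_smul, ← hSi,
        hback]
    have hgk : ∀ k, k ≠ i → ∀ ν : ℂ, X *ᵥ Pi.single k 1 = ν • Pi.single k 1 →
        (S' * X * S) *ᵥ Pi.single k 1 = ν • Pi.single k 1 := by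
      intro k hk ν hν
      rw [← Matrix.mulVec_mulVec, ← Matrix.mulVec_mulVec, hSk k hk, hν, Matrix.mulVec_smul]
      conv_lhs => rw [← hSk k hk, hback]
    have hlt : (Finset.univ.filter (fun k : Fin n =>
        ¬ ∃ μ : ℂ, (S' * X * S) *ᵥ Pi.single k 1 = μ • Pi.single k 1)).card < N := by
      rw [← hN]
      apply Finset.card_lt_card
      rw [Finset.ssubset_iff_of_subset]
      · refine ⟨i, by simpa using hi, ?_⟩
        simp only [Finset.mem_filter, Finset.mem_univ, true_and, not_not]
        exact ⟨μ, hgi⟩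
      · intro k hk
        simp only [Finset.mem_filter, Finset.mem_univ, true_and] at hk ⊢
        rintro ⟨ν, hν⟩
        by_cases hki : k = i
        · subst hki; exact hk ⟨μ, hgi⟩
        · exact hk ⟨ν, hgk k hki ν hν⟩
    have hbt : (S' * X * S).BlockTriangular b := ((HH_bt hS').mul hX).mul (HH_bt hS)
    have hdg : Diagble (S' * X * S) := by
      obtain ⟨T, T', d, hT, hXX⟩ := hd
      refine ⟨S' * T, T' * S, d, ?_, ?_⟩
      · calc S' * T * (T' * S) = S' * (T * T') * S := by simp only [Matrix.mul_assoc]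
          _ = 1 := by rw [hT, Matrix.mul_one, h2]
      · rw [hXX]; simp only [Matrix.mul_assoc]
    obtain ⟨R, hR, R', hR', hRR, d, hRd⟩ := ih _ hlt _ hbt hdg rfl
    refine ⟨S * R, mul_mem hS hR, R' * S', mul_mem hR' hS', ?_, d, ?_⟩
    · calc S * R * (R' * S') = S * (R * R') * S' := by simp only [Matrix.mul_assoc]
        _ = 1 := by rw [hRR, Matrix.mul_one, h1]
    · calc X = (S * S') * X * (S * S') := by rw [h1]; simp
        _ = S * (S' * X * S) * S' := by simp only [Matrix.mul_assoc]
        _ = _ := by rw [hRd]; simp only [Matrix.mul_assoc]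

end BUT

namespace BUT

/-- The class of maps under consideration. -/
structure Good {n : ℕ} (b : Fin n → ℕ) (φ : Mat n → Mat n) : Prop where
  cont : ContinuousOn φ {X | X.BlockTriangular b}
  inj : Set.InjOn φ {X | X.BlockTriangular b}
  comm : ∀ X Y : Mat n, X.BlockTriangular b → Y.BlockTriangular b → X * Y = Y * X →
    φ X * φ Y = φ Y * φ X
  spec : ∀ X : Mat n, X.BlockTriangular b → spectrum ℂ (φ X) = spectrum ℂ X

lemma spec_conj {n : ℕ} {T T' : Mat n} (h : T * T' = 1) (X : Mat n) :
    spectrum ℂ (T * X * T') = spectrum ℂ X := by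
  have h' : T' * T = 1 := mul_eq_one_comm.1 h
  exact spectrum.units_conjugate (a := X) (u := (⟨T, T', h, h'⟩ : (Mat n)ˣ))

lemma conj_mul {n : ℕ} {T T' : Mat n} (h : T * T' = 1) (X Y : Mat n) :
    (T' * X * T) * (T' * Y * T) = T' * (X * Y) * T := by
  calc (T' * X * T) * (T' * Y * T) = T' * X * (T * T') * Y * T := by simp only [Matrix.mul_assoc]
    _ = _ := by rw [h, Matrix.mul_one]; simp only [Matrix.mul_assoc]

lemma conj_cancel {n : ℕ} {T T' : Mat n} (h : T * T' = 1) (X : Mat n) :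
    T * (T' * X * T) * T' = X := by
  calc T * (T' * X * T) * T' = (T * T') * X * (T * T') := by simp only [Matrix.mul_assoc]
    _ = X := by rw [h]; simp

lemma Good.conj {n : ℕ} {b : Fin n → ℕ} {φ : Mat n → Mat n} (h : Good b φ)
    {S S' T T' : Mat n} (hS : S.BlockTriangular b) (hS' : S'.BlockTriangular b)
    (hSS : S * S' = 1) (hTT : T * T' = 1) :
    Good b (fun X => T' * φ (S * X * S') * T) := by
  have hm : ∀ X : Mat n, X.BlockTriangular b → (S * X * S').BlockTriangular b :=
    fun X hX => (hS.mul hX).mul hS'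
  have hSS' : S' * S = 1 := mul_eq_one_comm.1 hSS
  have hTT' : T' * T = 1 := mul_eq_one_comm.1 hTT
  refine ⟨?_, ?_, ?_, ?_⟩
  · have h1 : ContinuousOn (fun X : Mat n => S * X * S') {X | X.BlockTriangular b} := by
      fun_prop
    have h2 : ContinuousOn (fun X => φ (S * X * S')) {X | X.BlockTriangular b} :=
      h.cont.comp h1 (fun X hX => hm X hX)
    have h3 : Continuous (fun Y : Mat n => T' * Y * T) := by fun_prop
    exact h3.comp_continuousOn h2
  · intro X hX Y hY hXY
    have h1 : φ (S * X * S') = φ (S * Y * S') := by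
      have := congrArg (fun Z => T * Z * T') hXY
      simpa [conj_cancel hTT] using this
    have h2 := h.inj (hm X hX) (hm Y hY) h1
    have := congrArg (fun Z => S' * Z * S) h2
    simpa [conj_cancel hSS'] using this
  · intro X Y hX hY hXY
    rw [conj_mul hTT, conj_mul hTT, h.comm _ _ (hm X hX) (hm Y hY)]
    rw [conj_mul hSS', conj_mul hSS', hXY]
  · intro X hX
    rw [spec_conj hTT', h.spec _ (hm X hX), spec_conj hSS]

lemma spec_transpose {n : ℕ} (X : Mat n) : spectrum ℂ Xᵀ = spectrum ℂ X := by
  ext z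
  rw [Matrix.mem_spectrum_iff_isRoot_charpoly, Matrix.mem_spectrum_iff_isRoot_charpoly,
    Matrix.charpoly_transpose]

lemma Good.transpose {n : ℕ} {b : Fin n → ℕ} {φ : Mat n → Mat n} (h : Good b φ) :
    Good b (fun X => (φ X)ᵀ) := by
  refine ⟨?_, ?_, ?_, ?_⟩
  · exact (continuous_id.matrix_transpose).comp_continuousOn h.cont
  · intro X hX Y hY hXY
    exact h.inj hX hY (Matrix.transpose_injective hXY)
  · intro X Y hX hY hXY
    rw [← Matrix.transpose_mul, ← Matrix.transpose_mul, h.comm X Y hX hY hXY]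
  · intro X hX
    rw [spec_transpose, h.spec X hX]

lemma spec_diag {n : ℕ} (d : Fin n → ℂ) : spectrum ℂ (diagonal d : Mat n) = Set.range d :=
  spectrum_diagonal d

lemma Good.exists_diag {n : ℕ} {b : Fin n → ℕ} {φ : Mat n → Mat n} (h : Good b φ) :
    ∃ T T' : Mat n, T * T' = 1 ∧ ∀ d, T' * φ (diagonal d) * T = diagonal d := by
  classical
  have hD := fun d : Fin n → ℂ => blockTriangular_diagonal (b := b) d
  obtain ⟨T, T', hT, hTd⟩ := diag_of_spectrum (φ (diagonal (d0 n))) (d0 n) (d0_inj n) (by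
    intro i
    rw [h.spec _ (hD _), spec_diag]
    exact ⟨i, rfl⟩)
  have hT' : T' * T = 1 := mul_eq_one_comm.1 hT
  refine ⟨T, T', hT, ?_⟩
  let ψ : Mat n → Mat n := fun X => T' * φ (1 * X * 1) * T
  have hψ : Good b ψ := h.conj (S := 1) (S' := 1) blockTriangular_one blockTriangular_one
    (by simp) hT
  have hψφ : ∀ X, ψ X = T' * φ X * T := fun X => by simp [ψ]
  have h0 : ψ (diagonal (d0 n)) = diagonal (d0 n) := by
    rw [hψφ, hTd]
    exact conj_cancel hT' _
  have hdiag : ∀ d r c, r ≠ c → ψ (diagonal d) r c = 0 := by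
    intro d r c hrc
    have h1 := hψ.comm (diagonal d) (diagonal (d0 n)) (hD _) (hD _)
      (by rw [diagonal_mul_diagonal, diagonal_mul_diagonal]; simp only [mul_comm])
    rw [h0] at h1
    have h2 := congrFun (congrFun h1 r) c
    rw [Matrix.mul_diagonal, Matrix.diagonal_mul] at h2
    have h3 : (d0 n r - d0 n c) * ψ (diagonal d) r c = 0 := by linear_combination -h2
    rcases mul_eq_zero.1 h3 with h4 | h4
    · exact absurd (d0_inj n (sub_eq_zero.1 h4)) hrc
    · exact h4
  have hmem : ∀ d i, ∃ j, ψ (diagonal d) i i = d j := by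
    intro d i
    have h1 : ψ (diagonal d) = diagonal (fun i => ψ (diagonal d) i i) := by
      ext r c
      by_cases hrc : r = c
      · subst hrc; simp
      · rw [hdiag d r c hrc, diagonal_apply_ne _ hrc]
    have h2 := hψ.spec (diagonal d) (hD d)
    rw [h1, spec_diag, spec_diag] at h2
    have h3 : ψ (diagonal d) i i ∈ Set.range d := by rw [← h2]; exact ⟨i, rfl⟩
    obtain ⟨j, hj⟩ := h3
    exact ⟨j, hj.symm⟩
  intro d
  rw [← hψφ]
  let γ : ℂ → Fin n → ℂ := fun z i => d0 n i + z * (d i - d0 n i)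
  have hγc : Continuous (fun z => ψ (diagonal (γ z))) := by
    refine hψ.cont.comp_continuous ?_ (fun z => hD _)
    refine Continuous.matrix_diagonal ?_
    fun_prop
  ext r c
  by_cases hrc : r = c
  swap
  · rw [hdiag d r c hrc, diagonal_apply_ne _ hrc]
  subst hrc
  rw [diagonal_apply_eq]
  let t1 : Set ℂ := {z | ψ (diagonal (γ z)) r r = γ z r}
  let t2 : Set ℂ := ⋃ j : {j : Fin n // j ≠ r}, {z | ψ (diagonal (γ z)) r r = γ z j}
  have hγr : ∀ j, Continuous (fun z => γ z j) := fun j => by fun_prop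
  have hγψ : Continuous (fun z => ψ (diagonal (γ z)) r r) := hγc.matrix_elem r r
  have ht1 : IsClosed t1 := isClosed_eq hγψ (hγr r)
  have ht2 : IsClosed t2 := isClosed_iUnion_of_finite fun j => isClosed_eq hγψ (hγr j.1)
  let F : Set ℂ := ⋃ p : {p : Fin n × Fin n // p.1 ≠ p.2}, {z | γ z p.1.1 = γ z p.1.2}
  have hF : F.Countable := by
    refine Set.countable_iUnion fun p => Set.Subsingleton.countable ?_
    intro z hz w hw
    simp only [Set.mem_setOf_eq, γ] at hz hw
    have hp : d0 n p.1.1 - d0 n p.1.2 ≠ 0 := sub_ne_zero.2 fun h => p.2 (d0_inj n h)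
    set A := d0 n p.1.1 - d0 n p.1.2 with hA
    set B := (d p.1.1 - d0 n p.1.1) - (d p.1.2 - d0 n p.1.2) with hB
    have e1 : A + z * B = 0 := by rw [hA, hB]; linear_combination hz
    have e2 : A + w * B = 0 := by rw [hA, hB]; linear_combination hw
    have hBn : B ≠ 0 := by rintro hB0; rw [hB0] at e1; simp at e1; exact hp e1
    have e3 : (z - w) * B = 0 := by linear_combination e1 - e2
    rcases mul_eq_zero.1 e3 with h4 | h4
    · exact sub_eq_zero.1 h4
    · exact absurd h4 hBn
  have hU : IsPreconnected Fᶜ :=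
    (hF.isConnected_compl_of_one_lt_rank (by simp)).isPreconnected
  have hcov : Fᶜ ⊆ t1 ∪ t2 := by
    intro z _
    obtain ⟨j, hj⟩ := hmem (γ z) r
    by_cases hjr : j = r
    · left; subst hjr; exact hj
    · right; exact Set.mem_iUnion.2 ⟨⟨j, hjr⟩, hj⟩
  have h0F : (0:ℂ) ∈ Fᶜ := by
    intro h0
    obtain ⟨p, hp⟩ := Set.mem_iUnion.1 h0
    simp [γ] at hp
    exact p.2 (d0_inj n hp)
  have h0t : (0:ℂ) ∈ t1 := by
    have : γ 0 = d0 n := by ext i; simp [γ]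
    simp only [t1, Set.mem_setOf_eq, this, h0, diagonal_apply_eq]
  have hsub : Fᶜ ⊆ t1 := by
    intro z hz
    by_contra hzt
    have hz2 : z ∈ t2 := (hcov hz).resolve_left hzt
    obtain ⟨y, hyF, hy1, hy2⟩ := isPreconnected_closed_iff.1 hU t1 t2 ht1 ht2 hcov
      ⟨0, h0F, h0t⟩ ⟨z, hz, hz2⟩
    obtain ⟨j, hj⟩ := Set.mem_iUnion.1 hy2
    apply hyF
    refine Set.mem_iUnion.2 ⟨⟨(r, j.1), fun h => j.2 h.symm⟩, ?_⟩
    have hy1' : ψ (diagonal (γ y)) r r = γ y r := hy1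
    have hj' : ψ (diagonal (γ y)) r r = γ y j := hj
    simp only [Set.mem_setOf_eq]
    rw [← hy1', hj']
  have h1 : (1:ℂ) ∈ t1 := by
    have hd : Dense Fᶜ := hF.dense_compl ℂ
    exact (closure_minimal hsub ht1) (hd 1)
  have hγ1 : γ 1 = d := by ext i; simp [γ]
  have h2 : ψ (diagonal (γ 1)) r r = γ 1 r := h1
  rwa [hγ1] at h2

lemma eq_of_diagble {n : ℕ} (b : Fin n → ℕ) {f g : Mat n → Mat n}
    (hf : ContinuousOn f {X | X.BlockTriangular b}) (hg : ContinuousOn g {X | X.BlockTriangular b})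
    (h : ∀ Y : Mat n, Y.BlockTriangular b → Diagble Y → f Y = g Y) (X : Mat n)
    (hX : X.BlockTriangular b) : f X = g X := by
  have hcl := mem_closure_iff_nhdsWithin_neBot.1 (dense_diagble b X hX)
  have hw : nhdsWithin X {Y : Mat n | Y.BlockTriangular b ∧ Diagble Y} ≤
      nhdsWithin X {X | X.BlockTriangular b} := nhdsWithin_mono _ fun Y hY => hY.1
  have l1 := (hf X hX).tendsto.mono_left hw
  have l2 := (hg X hX).tendsto.mono_left hw
  refine tendsto_nhds_unique (l1.congr' ?_) l2
  filter_upwards [self_mem_nhdsWithin] with Y hY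
  exact h Y hY.1 hY.2

lemma Good.homog {n : ℕ} {b : Fin n → ℕ} {φ : Mat n → Mat n} (h : Good b φ)
    (c : ℂ) (X : Mat n) (hX : X.BlockTriangular b) : φ (c • X) = c • φ X := by
  have hm : ∀ Y : Mat n, Y.BlockTriangular b → (c • Y).BlockTriangular b := by
    intro Y hY i j hij
    simp [hY hij]
  have hdg : ∀ Y : Mat n, Y.BlockTriangular b → Diagble Y → φ (c • Y) = c • φ Y := by
    intro Y hY hYd
    obtain ⟨S, hS, S', hS', hSS, d, rfl⟩ := diagonalize b Y hY hYd
    obtain ⟨T, T', hT, hTd⟩ := (h.conj (HH_bt hS) (HH_bt hS') hSS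
      (T := 1) (T' := 1) (by simp)).exists_diag
    have key : ∀ e, φ (S * diagonal e * S') = T * diagonal e * T' := by
      intro e
      conv_rhs => rw [← hTd e, conj_cancel hT]
      simp
    have h1 : c • (S * diagonal d * S') = S * diagonal (c • d) * S' := by
      rw [Matrix.diagonal_smul]; simp
    rw [h1, key, key, Matrix.diagonal_smul]; simp
  have hc1 : ContinuousOn (fun Y => φ (c • Y)) {X | X.BlockTriangular b} :=
    h.cont.comp (by fun_prop) (fun Y hY => hm Y hY)
  have hc2 : ContinuousOn (fun Y => c • φ Y) {X | X.BlockTriangular b} :=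
    h.cont.const_smul c
  exact eq_of_diagble b hc1 hc2 hdg X hX

end BUT

namespace BUT

/-- The map fixes diagonal matrices. -/
def FixD {n : ℕ} (φ : Mat n → Mat n) : Prop := ∀ d : Fin n → ℂ, φ (diagonal d) = diagonal d

lemma third {n : ℕ} (hn : 3 ≤ n) (i j : Fin n) : ∃ k, k ≠ i ∧ k ≠ j := by
  classical
  have : ∃ k, k ∉ ({i, j} : Finset (Fin n)) := by
    by_contra h
    push Not at h
    have h1 : (Finset.univ : Finset (Fin n)) ⊆ {i, j} := fun k _ => h k
    have h2 := Finset.card_le_card h1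
    have h3 := Finset.card_le_two (a := i) (b := j)
    simp at h2
    omega
  obtain ⟨k, hk⟩ := this
  simp at hk
  exact ⟨k, hk⟩

lemma mem_spec_of_col {n : ℕ} (N : Mat n) (k : Fin n) (h : ∀ r, r ≠ k → N r k = 0) :
    N k k ∈ spectrum ℂ N := by
  classical
  rw [← Matrix.spectrum_toLin', ← Module.End.hasEigenvalue_iff_mem_spectrum]
  refine Module.End.hasEigenvalue_of_hasEigenvector (x := Pi.single k 1) ⟨?_, ?_⟩
  · rw [Module.End.mem_eigenspace_iff]
    ext r
    by_cases hr : r = k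
    · subst hr; simp
    · simp [hr, h r hr]
  · intro h0
    have := congrFun h0 k
    simp at this

lemma nilp_of_spec {n : ℕ} (N : Mat n) (h : ∀ μ ∈ spectrum ℂ N, μ = 0) : IsNilpotent N := by
  have hsp : N.charpoly.Splits := IsAlgClosed.splits _
  have h1 : N.charpoly.roots = Multiset.replicate N.charpoly.roots.card 0 := by
    rw [Multiset.eq_replicate]
    refine ⟨rfl, fun μ hμ => h μ ?_⟩
    rw [Matrix.mem_spectrum_iff_isRoot_charpoly]
    exact Polynomial.isRoot_of_mem_roots hμ
  have h2 := hsp.eq_prod_roots_of_monic (Matrix.charpoly_monic N)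
  rw [h1] at h2
  have h3 := Matrix.aeval_self_charpoly N
  rw [h2] at h3
  refine ⟨N.charpoly.roots.card, ?_⟩
  simpa using h3

lemma spec_single {n : ℕ} {i j : Fin n} (hij : i ≠ j) (μ : ℂ)
    (h : μ ∈ spectrum ℂ (single i j 1 : Mat n)) : μ = 0 := by
  have : Nontrivial (Mat n) := ⟨⟨single i j 1, 0, fun h => by
    have := congrFun (congrFun h i) j
    simp at this⟩⟩
  have h1 := spectrum.pow_mem_pow (single i j 1 : Mat n) 2 h
  rw [pow_two (single i j 1 : Mat n), single_mul_single_of_ne _ _ _ _ hij.symm, spectrum.zero_eq] at h1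
  simpa using h1

/-- Data about the image of a matrix unit. -/
structure Shape {n : ℕ} (i j : Fin n) (N : Mat n) : Prop where
  row : ∀ r c, r ≠ i → r ≠ j → N r c = 0
  col : ∀ r c, r ≠ i → r ≠ j → N c r = 0
  tr : N i i + N j j = 0
  det : N i i ^ 2 + N i j * N j i = 0
  ne : ¬ (N i j = 0 ∧ N j i = 0)

lemma Good.shape {n : ℕ} {b : Fin n → ℕ} {φ : Mat n → Mat n} (h : Good b φ) (hD : FixD φ)
    {i j : Fin n} (hij : i ≠ j) (hb : b i ≤ b j) : Shape i j (φ (single i j 1)) := by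
  have hE := blockTriangular_single (b := b) hb (1:ℂ)
  set N := φ (single i j 1) with hN
  have hcomm : ∀ k, k ≠ i → k ≠ j → ∀ r c, N r c * (Pi.single k 1 : Fin n → ℂ) c =
      (Pi.single k 1 : Fin n → ℂ) r * N r c := by
    intro k hki hkj r c
    have h1 := h.comm _ (diagonal (Pi.single k 1)) hE (blockTriangular_diagonal _) (by
      ext r c
      rw [mul_diagonal, diagonal_mul, single_apply]
      by_cases hrc : i = r ∧ j = c
      · obtain ⟨rfl, rfl⟩ := hrc
        simp [hki.symm, hkj.symm]
      · simp [hrc])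
    rw [hD, ← hN] at h1
    have := congrFun (congrFun h1 r) c
    rwa [mul_diagonal, diagonal_mul] at this
  have hspec : ∀ μ ∈ spectrum ℂ N, μ = 0 := by
    intro μ hμ
    rw [hN, h.spec _ hE] at hμ
    exact spec_single hij μ hμ
  have hoff1 : ∀ k c, k ≠ i → k ≠ j → c ≠ k → N k c = 0 := by
    intro k c hki hkj hck
    have := hcomm k hki hkj k c
    simpa [hck] using this.symm
  have hoff2 : ∀ k c, k ≠ i → k ≠ j → c ≠ k → N c k = 0 := by
    intro k c hki hkj hck
    have := hcomm k hki hkj c k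
    simpa [hck] using this
  have hkk : ∀ k, k ≠ i → k ≠ j → N k k = 0 := fun k hki hkj =>
    hspec _ (mem_spec_of_col N k fun r hr => hoff2 k r hki hkj hr)
  have hrow : ∀ r c, r ≠ i → r ≠ j → N r c = 0 := by
    intro r c h1 h2
    by_cases hc : c = r
    · subst hc; exact hkk _ h1 h2
    · exact hoff1 r c h1 h2 hc
  have hcol : ∀ r c, r ≠ i → r ≠ j → N c r = 0 := by
    intro r c h1 h2
    by_cases hc : c = r
    · subst hc; exact hkk _ h1 h2
    · exact hoff2 r c h1 h2 hc
  have hnil := nilp_of_spec N hspec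
  have htr : N i i + N j j = 0 := by
    have h1 := (Matrix.isNilpotent_trace_of_isNilpotent hnil).eq_zero
    rw [Matrix.trace, Fintype.sum_eq_add i j hij] at h1
    · exact h1
    · rintro x ⟨hx1, hx2⟩; exact hkk x hx1 hx2
  have hdet : N i i ^ 2 + N i j * N j i = 0 := by
    have h1 := (Matrix.isNilpotent_trace_of_isNilpotent
      ((Commute.refl N).isNilpotent_mul_left hnil)).eq_zero
    have h2 : ∀ r, (N * N) r r = N r i * N i r + N r j * N j r := by
      intro r
      rw [Matrix.mul_apply, Fintype.sum_eq_add i j hij]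
      rintro x ⟨hx1, hx2⟩; rw [hrow x r hx1 hx2, mul_zero]
    rw [Matrix.trace, Fintype.sum_eq_add i j hij] at h1
    · simp only [diag_apply, h2] at h1
      have h3 : N j j = - N i i := by linear_combination htr
      rw [h3] at h1
      linear_combination h1 / 2
    · rintro x ⟨hx1, hx2⟩
      rw [diag_apply, h2, hrow x i hx1 hx2, hrow x j hx1 hx2]; ring
  refine ⟨hrow, hcol, htr, hdet, ?_⟩
  rintro ⟨h1, h2⟩
  rw [h1, zero_mul, add_zero] at hdet
  have h3 : N i i = 0 := by simpa using hdet
  rw [h3, zero_add] at htr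
  have h0 : φ 0 = 0 := by simpa using hD 0
  have hN0 : N = 0 := by
    ext r c
    by_cases hri : r = i
    · by_cases hci : c = i
      · rw [hri, hci, h3]; rfl
      · by_cases hcj : c = j
        · rw [hri, hcj, h1]; rfl
        · exact hcol c r hci hcj
    · by_cases hrj : r = j
      · by_cases hci : c = i
        · rw [hrj, hci, h2]; rfl
        · by_cases hcj : c = j
          · rw [hrj, hcj, htr]; rfl
          · exact hcol c r hci hcj
      · exact hrow r c hri hrj
  have := h.inj hE blockTriangular_zero (by rw [← hN, hN0, h0])
  have h4 := congrFun (congrFun this i) j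
  simp at h4

lemma Shape.eq_up {n : ℕ} {i j : Fin n} {N : Mat n} (h : Shape i j N)
    (hU : N j i = 0) : N = single i j (N i j) ∧ N i j ≠ 0 := by
  have h1 := h.det
  rw [hU, mul_zero, add_zero] at h1
  have h3 : N i i = 0 := by simpa using h1
  have h4 := h.tr
  rw [h3, zero_add] at h4
  refine ⟨?_, fun h5 => h.ne ⟨h5, hU⟩⟩
  ext r c
  rw [single_apply]
  split_ifs with hrc
  · rw [hrc.1, hrc.2]
  · by_cases hri : r = i
    · by_cases hci : c = i
      · rw [hri, hci, h3]
      · have hcj : c ≠ j := fun hc => hrc ⟨hri.symm, hc.symm⟩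
        exact h.col c r hci hcj
    · by_cases hrj : r = j
      · by_cases hci : c = i
        · rw [hrj, hci, hU]
        · by_cases hcj : c = j
          · rw [hrj, hcj, h4]
          · exact h.col c r hci hcj
      · exact h.row r c hri hrj

lemma Shape.transpose {n : ℕ} {i j : Fin n} {N : Mat n} (h : Shape i j N) : Shape i j Nᵀ :=
  ⟨h.col, h.row, h.tr, by simpa [mul_comm] using h.det, fun ⟨h1, h2⟩ => h.ne ⟨h2, h1⟩⟩

lemma pair_row {n : ℕ} {i j k : Fin n} (hij : i ≠ j) (hik : i ≠ k) (hjk : j ≠ k) {N M : Mat n}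
    (hN : Shape i j N) (hM : Shape i k M) (hc : N * M = M * N) :
    (N j i = 0 ∧ M k i = 0) ∨ (N i j = 0 ∧ M i k = 0) := by
  have e1 : N j i * M i k = 0 := by
    have := congrFun (congrFun hc j) k
    rw [Matrix.mul_apply, Matrix.mul_apply, Fintype.sum_eq_single i,
      Finset.sum_eq_zero (fun x _ => by rw [hM.row j x hij.symm hjk, zero_mul])] at this
    · exact this
    · intro x hx
      by_cases hxk : x = k
      · rw [hxk, hN.col k j hik.symm hjk.symm, zero_mul]
      · rw [hM.row x k hx hxk, mul_zero]
  have e2 : M k i * N i j = 0 := by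
    have := congrFun (congrFun hc.symm k) j
    rw [Matrix.mul_apply, Matrix.mul_apply, Fintype.sum_eq_single i,
      Finset.sum_eq_zero (fun x _ => by rw [hN.row k x hik.symm hjk.symm, zero_mul])] at this
    · exact this
    · intro x hx
      by_cases hxk : x = j
      · rw [hxk, hM.col j k hij.symm hjk, zero_mul]
      · rw [hN.row x j hx hxk, mul_zero]
  rcases mul_eq_zero.1 e1 with h1 | h1 <;> rcases mul_eq_zero.1 e2 with h2 | h2
  · exact Or.inl ⟨h1, h2⟩
  · exact absurd ⟨h2, h1⟩ hN.ne
  · exact absurd ⟨h1, h2⟩ hM.ne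
  · exact Or.inr ⟨h2, h1⟩

lemma pair_col {n : ℕ} {i j k : Fin n} (hij : i ≠ j) (hik : i ≠ k) (hjk : j ≠ k) {N M : Mat n}
    (hN : Shape i j N) (hM : Shape k j M) (hc : N * M = M * N) :
    (N j i = 0 ∧ M j k = 0) ∨ (N i j = 0 ∧ M k j = 0) := by
  have e1 : N i j * M j k = 0 := by
    have := congrFun (congrFun hc i) k
    rw [Matrix.mul_apply, Matrix.mul_apply, Fintype.sum_eq_single j,
      Finset.sum_eq_zero (fun x _ => by rw [hM.row i x hik hij, zero_mul])] at this
    · exact this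
    · intro x hx
      by_cases hxk : x = k
      · rw [hxk, hN.col k i hik.symm hjk.symm, zero_mul]
      · rw [hM.row x k hxk hx, mul_zero]
  have e2 : M k j * N j i = 0 := by
    have := congrFun (congrFun hc.symm k) i
    rw [Matrix.mul_apply, Matrix.mul_apply, Fintype.sum_eq_single j,
      Finset.sum_eq_zero (fun x _ => by rw [hN.row k x hik.symm hjk.symm, zero_mul])] at this
    · exact this
    · intro x hx
      by_cases hxk : x = i
      · rw [hxk, hM.col i k hik hij, zero_mul]
      · rw [hN.row x i hxk hx, mul_zero]
  rcases mul_eq_zero.1 e1 with h1 | h1 <;> rcases mul_eq_zero.1 e2 with h2 | h2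
  · exact Or.inr ⟨h1, h2⟩
  · exact absurd ⟨h1, h2⟩ hN.ne
  · exact absurd ⟨h2, h1⟩ hM.ne
  · exact Or.inl ⟨h2, h1⟩

/-- Upper type. -/
def Up {n : ℕ} (b : Fin n → ℕ) (φ : Mat n → Mat n) : Prop :=
  ∀ i j, i ≠ j → b i ≤ b j → ∃ c : ℂ, c ≠ 0 ∧ φ (single i j 1) = single i j c

/-- Lower type. -/
def Down {n : ℕ} (b : Fin n → ℕ) (φ : Mat n → Mat n) : Prop :=
  ∀ i j, i ≠ j → b i ≤ b j → ∃ c : ℂ, c ≠ 0 ∧ φ (single i j 1) = single j i c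

lemma Good.up_or_down {n : ℕ} (hn : 3 ≤ n) {b : Fin n → ℕ} {φ : Mat n → Mat n} (h : Good b φ)
    (hD : FixD φ) : Up b φ ∨ Down b φ := by
  classical
  have hrow : ∀ i j k, i ≠ j → i ≠ k → j ≠ k → b i ≤ b j → b i ≤ b k →
      (φ (single i j 1) j i = 0 ∧ φ (single i k 1) k i = 0) ∨
      (φ (single i j 1) i j = 0 ∧ φ (single i k 1) i k = 0) := by
    intro i j k hij hik hjk hb1 hb2
    refine pair_row hij hik hjk (h.shape hD hij hb1) (h.shape hD hik hb2) ?_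
    refine h.comm _ _ (blockTriangular_single hb1 _) (blockTriangular_single hb2 _) ?_
    rw [single_mul_single_of_ne _ _ _ _ hij.symm, single_mul_single_of_ne _ _ _ _ hik.symm]
  have hcol : ∀ i j k, i ≠ j → i ≠ k → j ≠ k → b i ≤ b j → b k ≤ b j →
      (φ (single i j 1) j i = 0 ∧ φ (single k j 1) j k = 0) ∨
      (φ (single i j 1) i j = 0 ∧ φ (single k j 1) k j = 0) := by
    intro i j k hij hik hjk hb1 hb2
    refine pair_col hij hik hjk (h.shape hD hij hb1) (h.shape hD hjk.symm hb2) ?_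
    refine h.comm _ _ (blockTriangular_single hb1 _) (blockTriangular_single hb2 _) ?_
    rw [single_mul_single_of_ne _ _ _ _ hjk, single_mul_single_of_ne _ _ _ _ hij.symm]
  have hne : ∀ i j, i ≠ j → b i ≤ b j →
      ¬ (φ (single i j 1) i j = 0 ∧ φ (single i j 1) j i = 0) :=
    fun i j hij hb => (h.shape hD hij hb).ne
  have hor : ∀ i j, i ≠ j → b i ≤ b j →
      (φ (single i j 1) j i = 0 ∨ φ (single i j 1) i j = 0) := by
    intro i j hij hb
    obtain ⟨k, hki, hkj⟩ := third hn i j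
    rcases le_total (b i) (b k) with hk | hk
    · rcases hrow i j k hij hki.symm hkj.symm hb hk with h1 | h1
      · exact Or.inl h1.1
      · exact Or.inr h1.1
    · rcases hcol i j k hij hki.symm hkj.symm hb (hk.trans hb) with h1 | h1
      · exact Or.inl h1.1
      · exact Or.inr h1.1
  have hrow' : ∀ i j k, i ≠ j → i ≠ k → b i ≤ b j → b i ≤ b k →
      (φ (single i j 1) j i = 0 ↔ φ (single i k 1) k i = 0) := by
    intro i j k hij hik hb1 hb2
    by_cases hjk : j = k
    · subst hjk; rfl
    have h1 := hrow i j k hij hik hjk hb1 hb2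
    have h2 := hne i j hij hb1
    have h3 := hne i k hik hb2
    tauto
  have hcol' : ∀ i j k, i ≠ j → j ≠ k → b i ≤ b j → b k ≤ b j →
      (φ (single i j 1) j i = 0 ↔ φ (single k j 1) j k = 0) := by
    intro i j k hij hjk hb1 hb2
    by_cases hik : i = k
    · subst hik; rfl
    have h1 := hcol i j k hij hik hjk hb1 hb2
    have h2 := hne i j hij hb1
    have h3 := hne k j hjk.symm hb2
    tauto
  obtain ⟨m, -, hm⟩ := Finset.exists_min_image (Finset.univ : Finset (Fin n)) b
    ⟨⟨0, by omega⟩, Finset.mem_univ _⟩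
  have hm' : ∀ i, b m ≤ b i := fun i => hm i (Finset.mem_univ i)
  obtain ⟨j0, hj0, -⟩ := third hn m m
  have hall : ∀ i j, i ≠ j → b i ≤ b j →
      (φ (single i j 1) j i = 0 ↔ φ (single m j0 1) j0 m = 0) := by
    intro i j hij hb
    by_cases hjm : j = m
    · subst hjm
      obtain ⟨k, hki, hkj⟩ := third hn i j
      rw [hrow' i j k hij hki.symm hb (hb.trans (hm' k)),
        hcol' i k j hki.symm hkj (hb.trans (hm' k)) (hm' k),
        hrow' j k j0 hkj.symm hj0.symm (hm' _) (hm' _)]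
    · rw [hcol' i j m hij hjm hb (hm' _), hrow' m j j0 (Ne.symm hjm) hj0.symm (hm' _) (hm' _)]
  by_cases h0 : φ (single m j0 1) j0 m = 0
  · left
    intro i j hij hb
    obtain ⟨h1, h2⟩ := (h.shape hD hij hb).eq_up ((hall i j hij hb).2 h0)
    exact ⟨_, h2, h1⟩
  · right
    intro i j hij hb
    have hd : φ (single i j 1) i j = 0 :=
      (hor i j hij hb).resolve_left fun h' => h0 ((hall i j hij hb).1 h')
    obtain ⟨h1, h2⟩ := (h.shape hD hij hb).transpose.eq_up hd
    refine ⟨_, h2, ?_⟩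
    have := congrArg Matrix.transpose h1
    rwa [Matrix.transpose_transpose, Matrix.transpose_single] at this

end BUT

namespace BUT

/-- Good maps fixing the diagonal and of upward type. -/
structure Cp {n : ℕ} (b : Fin n → ℕ) (φ : Mat n → Mat n) : Prop where
  good : Good b φ
  fix : FixD φ
  up : Up b φ

lemma diag_inv {n : ℕ} {δ : Fin n → ℂ} (hδ : ∀ i, δ i ≠ 0) :
    (diagonal δ : Mat n) * diagonal (fun i => (δ i)⁻¹) = 1 := by
  rw [diagonal_mul_diagonal, ← diagonal_one]
  congr 1
  funext i
  exact mul_inv_cancel₀ (hδ i)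

lemma diag_conj_single {n : ℕ} (δ : Fin n → ℂ) (i j : Fin n) (c : ℂ) :
    diagonal δ * single i j c * diagonal (fun i => (δ i)⁻¹) = (single i j (δ i * c * (δ j)⁻¹) : Mat n) := by
  ext r s
  rw [mul_diagonal, diagonal_mul, single_apply, single_apply]
  split_ifs with h
  · rw [h.1, h.2]
  · simp

lemma diag_conj_diag {n : ℕ} {δ : Fin n → ℂ} (hδ : ∀ i, δ i ≠ 0) (d : Fin n → ℂ) :
    (diagonal δ * diagonal d * diagonal (fun i => (δ i)⁻¹) : Mat n) = diagonal d := by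
  rw [diagonal_mul_diagonal, diagonal_mul_diagonal]
  congr 1
  funext i
  have := hδ i
  field_simp

lemma Cp.diag {n : ℕ} {b : Fin n → ℕ} {φ : Mat n → Mat n} (h : Cp b φ) {δ : Fin n → ℂ}
    (hδ : ∀ i, δ i ≠ 0) :
    Cp b (fun X => diagonal δ * φ X * diagonal (fun i => (δ i)⁻¹)) := by
  refine ⟨?_, ?_, ?_⟩
  · have := h.good.conj (S := 1) (S' := 1) blockTriangular_one blockTriangular_one
      (by simp) (mul_eq_one_comm.1 (diag_inv hδ))
    simpa using this
  · intro d
    show diagonal δ * φ (diagonal d) * diagonal (fun i => (δ i)⁻¹) = _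
    rw [h.fix, diag_conj_diag hδ]
  · intro i j hij hb
    obtain ⟨c, hc, e⟩ := h.up i j hij hb
    refine ⟨δ i * c * (δ j)⁻¹, mul_ne_zero (mul_ne_zero (hδ i) hc) (inv_ne_zero (hδ j)), ?_⟩
    show diagonal δ * φ _ * _ = _
    rw [e, diag_conj_single]

lemma tv_mul {n : ℕ} {i j : Fin n} (hij : i ≠ j) (a : ℂ) :
    (transvection i j a * transvection i j (-a) : Mat n) = 1 := by
  rw [transvection_mul_transvection_same _ _ hij]; simp

lemma tv_mul' {n : ℕ} {i j : Fin n} (hij : i ≠ j) (a : ℂ) :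
    (transvection i j (-a) * transvection i j a : Mat n) = 1 := by
  rw [transvection_mul_transvection_same _ _ hij]; simp

/-- conjugation by transvection on a matrix unit -/
lemma tv_conj_single {n : ℕ} {i j k l : Fin n} (a c : ℂ) (hk : k ≠ j) (hl : l ≠ i) :
    (transvection i j a * single k l c * transvection i j (-a) : Mat n) = single k l c := by
  simp only [transvection, Matrix.add_mul, Matrix.mul_add, Matrix.one_mul, Matrix.mul_one,
    single_mul_single_of_ne _ _ _ _ hk.symm, single_mul_single_of_ne _ _ _ _ hl,
    add_zero]

lemma tv_conj {n : ℕ} {b : Fin n → ℕ} (hn : 3 ≤ n) {φ : Mat n → Mat n} (h : Cp b φ)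
    {i j : Fin n} (hij : i ≠ j) (hb : b i ≤ b j) (a : ℂ) :
    ∃ f : ℂ, Cp b (fun X => transvection i j (-f) *
      φ (transvection i j a * X * transvection i j (-a)) * transvection i j f) := by
  have g1 := h.good.conj (T := 1) (T' := 1) (blockTriangular_transvection hb a)
    (blockTriangular_transvection hb (-a)) (tv_mul hij a) (by simp)
  simp only [Matrix.one_mul, Matrix.mul_one] at g1
  obtain ⟨T, T', hT, hD⟩ := g1.exists_diag
  have hT' : T' * T = 1 := mul_eq_one_comm.1 hT
  have g2 := h.good.conj (blockTriangular_transvection hb a)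
    (blockTriangular_transvection hb (-a)) (tv_mul hij a) hT
  set ψ : Mat n → Mat n := fun X => T' * φ (transvection i j a * X * transvection i j (-a)) * T with hψ
  have fψ : FixD ψ := hD
  have hfix : ∀ k l, k ≠ l → b k ≤ b l → k ≠ j → l ≠ i → ∃ c : ℂ, c ≠ 0 ∧
      ψ (single k l 1) = T' * single k l c * T := by
    intro k l hkl hb hk hl
    obtain ⟨c, hc, e⟩ := h.up k l hkl hb
    refine ⟨c, hc, ?_⟩
    show T' * φ _ * T = _
    rw [tv_conj_single _ _ hk hl, e]
  have hup : Up b ψ := by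
    rcases g2.up_or_down hn fψ with hu | hd
    · exact hu
    exfalso
    obtain ⟨c, hc, e⟩ := hfix i j hij hb hij hij.symm
    obtain ⟨c2, hc2, e2⟩ := hd i j hij hb
    obtain ⟨k, hki, hkj⟩ := third hn i j
    rcases le_total (b i) (b k) with hk | hk
    · obtain ⟨u, hu, e3⟩ := hfix i k hki.symm hk hij hki
      obtain ⟨u2, hu2, e4⟩ := hd i k hki.symm hk
      have : T' * single i j c * T = (T' * single i k u * T) * (T' * single k j (u⁻¹ * c) * T) := by
        rw [conj_mul hT, single_mul_single_same, mul_inv_cancel_left₀ hu]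
      rw [← e, ← e3, e2, e4] at this
      have h2 := congrFun (congrFun this j) i
      rw [Matrix.single_apply_same, Matrix.single_mul_apply_of_ne _ _ _ _ _ hkj.symm] at h2
      exact hc2 h2
    · have hk' := hk.trans hb
      obtain ⟨u, hu, e3⟩ := hfix k j hkj hk' hkj hij.symm
      obtain ⟨u2, hu2, e4⟩ := hd k j hkj hk'
      have : T' * single i j c * T = (T' * single i k (c * u⁻¹) * T) * (T' * single k j u * T) := by
        rw [conj_mul hT, single_mul_single_same, inv_mul_cancel_right₀ hu]
      rw [← e, ← e3, e2, e4] at this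
      have h2 := congrFun (congrFun this j) i
      rw [Matrix.single_apply_same, Matrix.mul_single_apply_of_ne _ _ _ _ _ hki.symm] at h2
      exact hc2 h2
  have hji : T j i = 0 := by
    obtain ⟨c, hc, e⟩ := hfix i j hij hb hij hij.symm
    obtain ⟨c2, hc2, e2⟩ := hup i j hij hb
    have h1 : single i j c * T = T * single i j c2 := by
      rw [← e2, e, ← Matrix.mul_assoc, ← Matrix.mul_assoc, hT, Matrix.one_mul]
    have h2 := congrFun (congrFun h1 i) i
    rw [Matrix.mul_single_apply_of_ne _ _ _ _ _ hij, Matrix.single_mul_apply_same] at h2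
    exact (mul_eq_zero.1 h2).resolve_left hc
  have hkk : ∀ k, k ≠ i → k ≠ j → (single k k 1 : Mat n) * T = T * single k k 1 := by
    intro k hki hkj
    have h1 : ψ (diagonal (Pi.single k 1)) = diagonal (Pi.single k 1) := fψ _
    have h2 : φ (diagonal (Pi.single k 1)) = diagonal (Pi.single k 1) := h.fix _
    rw [Matrix.diagonal_single] at h1 h2
    change T' * φ _ * T = _ at h1
    rw [tv_conj_single _ _ hkj hki, h2] at h1
    nth_rw 2 [← h1]
    rw [← Matrix.mul_assoc, ← Matrix.mul_assoc, hT, Matrix.one_mul]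
  have hz1 : ∀ k r, k ≠ i → k ≠ j → r ≠ k → T k r = 0 := by
    intro k r hki hkj hr
    have h2 := congrFun (congrFun (hkk k hki hkj) k) r
    rwa [Matrix.mul_single_apply_of_ne _ _ _ _ _ hr, Matrix.single_mul_apply_same, one_mul] at h2
  have hz2 : ∀ k r, k ≠ i → k ≠ j → r ≠ k → T r k = 0 := by
    intro k r hki hkj hr
    have h2 := congrFun (congrFun (hkk k hki hkj) r) k
    rw [Matrix.single_mul_apply_of_ne _ _ _ _ _ hr, Matrix.mul_single_apply_same, mul_one] at h2
    exact h2.symm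
  have hz : ∀ r s, r ≠ s → ¬ (r = i ∧ s = j) → T r s = 0 := by
    intro r s hrs hne
    by_cases h1 : r = i
    · by_cases h2 : s = j
      · exact absurd ⟨h1, h2⟩ hne
      · exact hz2 s r (fun h => hrs (h1.trans h.symm)) h2 hrs
    · by_cases h2 : r = j
      · subst h2
        by_cases h3 : s = i
        · rw [h3]; exact hji
        · exact hz2 s r h3 (Ne.symm hrs) hrs
      · exact hz1 r s h1 h2 hrs.symm
  have hjj : T j j ≠ 0 := by
    intro h0
    have h2 := congrFun (congrFun hT j) j
    rw [Matrix.mul_apply, Finset.sum_eq_zero, Matrix.one_apply_eq] at h2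
    · exact zero_ne_one h2
    · intro s _
      by_cases hs : s = j
      · rw [hs, h0, zero_mul]
      · rw [hz j s (Ne.symm hs) (fun h => hij h.1.symm), zero_mul]
  set f := T i j / T j j with hf
  set δ : Fin n → ℂ := fun r => T r r with hδ
  have hTf : T = transvection i j f * diagonal δ := by
    ext r s
    rw [mul_diagonal, transvection, Matrix.add_apply, single_apply, one_apply]
    by_cases hrs : r = s
    · subst hrs
      have hne : ¬ (i = r ∧ j = r) := fun h => hij (h.1.trans h.2.symm)
      simp [hδ, hne]
    · by_cases h1 : r = i ∧ s = j
      · obtain ⟨rfl, rfl⟩ := h1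
        simp [hrs, hδ, hf, hjj]
      · rw [hz r s hrs h1, if_neg hrs, if_neg (fun h => h1 ⟨h.1.symm, h.2.symm⟩)]
        simp
  have hΔ : diagonal δ * (T' * transvection i j f) = 1 := by
    have : (diagonal δ : Mat n) = transvection i j (-f) * T := by
      rw [hTf, ← Matrix.mul_assoc, tv_mul' hij, Matrix.one_mul]
    rw [this, Matrix.mul_assoc, ← Matrix.mul_assoc T, hT, Matrix.one_mul, tv_mul' hij]
  have hδ0 : ∀ k, δ k ≠ 0 := by
    intro k h0
    have h2 := congrFun (congrFun hΔ k) k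
    rw [diagonal_mul, h0, zero_mul, one_apply_eq] at h2
    exact zero_ne_one h2
  have hinv : T' * transvection i j f = diagonal (fun i => (δ i)⁻¹) := by
    have h1 := diag_inv hδ0
    have h2 := mul_eq_one_comm.1 h1
    calc _ = (diagonal (fun i => (δ i)⁻¹) * diagonal δ) * (T' * transvection i j f) := by
          rw [h2, Matrix.one_mul]
      _ = _ := by rw [Matrix.mul_assoc, hΔ, Matrix.mul_one]
  have key := (Cp.mk g2 fψ hup).diag hδ0
  refine ⟨f, ?_⟩
  convert key using 1
  funext X
  rw [← hinv]
  have hd : (diagonal δ : Mat n) = transvection i j (-f) * T := by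
    rw [hTf, ← Matrix.mul_assoc, tv_mul' hij, Matrix.one_mul]
  rw [hd, hψ]
  simp only
  have e1 : ∀ Y Z : Mat n, T * (T' * Y) = Y := fun Y Z => by
    rw [← Matrix.mul_assoc, hT, Matrix.one_mul]
  simp only [Matrix.mul_assoc]
  rw [e1 _ 0, e1 _ 0]

end BUT

namespace BUT

lemma tv_jj {n : ℕ} {i j : Fin n} (hij : i ≠ j) (a : ℂ) :
    (transvection i j a * single j j 1 * transvection i j (-a) : Mat n) =
      single j j 1 + single i j a := by
  simp only [transvection, Matrix.add_mul, Matrix.mul_add, Matrix.one_mul, Matrix.mul_one,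
    single_mul_single_of_ne _ _ _ _ hij.symm, single_mul_single_same,
    add_zero, mul_one]

lemma tv_ii {n : ℕ} {i j : Fin n} (hij : i ≠ j) (a : ℂ) :
    (transvection i j a * single i i 1 * transvection i j (-a) : Mat n) =
      single i i 1 + single i j (-a) := by
  simp only [transvection, Matrix.add_mul, Matrix.mul_add, Matrix.one_mul, Matrix.mul_one,
    single_mul_single_of_ne _ _ _ _ hij.symm, single_mul_single_same, Matrix.zero_mul,
    add_zero, one_mul]

lemma Cp.fix1 {n : ℕ} {b : Fin n → ℕ} {φ : Mat n → Mat n} (h : Cp b φ) (k : Fin n) (c : ℂ) :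
    φ (single k k c) = single k k c := by
  rw [← Matrix.diagonal_single]; exact h.fix _

lemma un_conj {n : ℕ} {i j : Fin n} (hij : i ≠ j) (f : ℂ) {Y Z : Mat n}
    (h : transvection i j (-f) * Y * transvection i j f = Z) :
    Y = transvection i j f * Z * transvection i j (-f) := by
  rw [← h, conj_cancel (tv_mul hij f)]

lemma tv_f {n : ℕ} {b : Fin n → ℕ} (hn : 3 ≤ n) {φ : Mat n → Mat n} (h : Cp b φ)
    {i j : Fin n} (hij : i ≠ j) (hb : b i ≤ b j) (a : ℂ) :
    ∃ f : ℂ, Cp b (fun X => transvection i j (-f) *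
      φ (transvection i j a * X * transvection i j (-a)) * transvection i j f) ∧
      φ (single j j 1 + single i j a) = single j j 1 + single i j f ∧
      φ (single i i 1 + single i j (-a)) = single i i 1 + single i j (-f) := by
  obtain ⟨f, hf⟩ := tv_conj hn h hij hb a
  refine ⟨f, hf, ?_, ?_⟩
  · have := un_conj hij f (hf.fix1 j 1)
    rwa [tv_jj hij, tv_jj hij] at this
  · have := un_conj hij f (hf.fix1 i 1)
    rwa [tv_ii hij, tv_ii hij] at this

/-- row coefficient -/
def Rr {n : ℕ} (φ : Mat n → Mat n) (i j : Fin n) (a : ℂ) : ℂ := φ (single i i 1 + single i j a) i j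
/-- column coefficient -/
def Cc {n : ℕ} (φ : Mat n → Mat n) (i j : Fin n) (a : ℂ) : ℂ := φ (single j j 1 + single i j a) i j

lemma row1 {n : ℕ} {b : Fin n → ℕ} (hn : 3 ≤ n) {φ : Mat n → Mat n} (h : Cp b φ)
    {i j : Fin n} (hij : i ≠ j) (hb : b i ≤ b j) (a : ℂ) :
    φ (single i i 1 + single i j a) = single i i 1 + single i j (Rr φ i j a) := by
  obtain ⟨f, -, -, h2⟩ := tv_f hn h hij hb (-a)
  rw [neg_neg] at h2
  have : Rr φ i j a = -f := by
    rw [Rr, h2, Matrix.add_apply, single_apply_same, single_apply_of_ne, zero_add]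
    exact fun h => hij h.2
  rw [this, h2]

lemma col1 {n : ℕ} {b : Fin n → ℕ} (hn : 3 ≤ n) {φ : Mat n → Mat n} (h : Cp b φ)
    {i j : Fin n} (hij : i ≠ j) (hb : b i ≤ b j) (a : ℂ) :
    φ (single j j 1 + single i j a) = single j j 1 + single i j (Cc φ i j a) := by
  obtain ⟨f, -, h2, -⟩ := tv_f hn h hij hb a
  have : Cc φ i j a = f := by
    rw [Cc, h2, Matrix.add_apply, single_apply_same, single_apply_of_ne, zero_add]
    exact fun h => hij h.1.symm
  rw [this, h2]

lemma add_single_inj {n : ℕ} {i j : Fin n} {Z : Mat n} {x y : ℂ}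
    (h : Z + single i j x = Z + single i j y) : x = y := by
  have h' : (single i j x : Mat n) = single i j y := add_left_cancel h
  have := congrFun (congrFun h' i) j
  rwa [single_apply_same, single_apply_same] at this

lemma tv_f' {n : ℕ} {b : Fin n → ℕ} (hn : 3 ≤ n) {φ : Mat n → Mat n} (h : Cp b φ)
    {i j : Fin n} (hij : i ≠ j) (hb : b i ≤ b j) (a : ℂ) :
    Cp b (fun X => transvection i j (-Cc φ i j a) *
      φ (transvection i j a * X * transvection i j (-a)) * transvection i j (Cc φ i j a)) ∧
      Cc φ i j a = - Rr φ i j (-a) := by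
  obtain ⟨f, h1, h2, h3⟩ := tv_f hn h hij hb a
  have e1 : Cc φ i j a = f := by
    rw [col1 hn h hij hb] at h2
    exact add_single_inj h2
  have e2 : Rr φ i j (-a) = -f := by
    rw [row1 hn h hij hb] at h3
    exact add_single_inj h3
  rw [e1, e2, neg_neg]
  exact ⟨h1, rfl⟩

lemma row2 {n : ℕ} {b : Fin n → ℕ} (hn : 3 ≤ n) {φ : Mat n → Mat n} (h : Cp b φ)
    {i j k : Fin n} (hij : i ≠ j) (hik : i ≠ k) (hb : b i ≤ b j) (hb' : b i ≤ b k)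
    (a c : ℂ) : ∃ g,
    φ (single i i 1 + single i j a + single i k c) =
      single i i 1 + single i j (Rr φ i j a) + single i k g := by
  obtain ⟨h1, h2⟩ := tv_f' hn h hij hb (-a)
  rw [neg_neg] at h2
  set f := Cc φ i j (-a)
  have h3 := un_conj hij f (row1 hn h1 hik hb' c)
  set g := Rr (fun X => transvection i j (-f) *
      φ (transvection i j (-a) * X * transvection i j (- -a)) * transvection i j f) i k c
  have key : ∀ x y : ℂ, transvection i j x * (single i i 1 + single i k y) * transvection i j (-x) =
      (single i i 1 + single i j (-x) + single i k y : Mat n) := by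
    intro x y
    simp only [transvection, Matrix.add_mul, Matrix.mul_add, Matrix.one_mul, Matrix.mul_one,
      single_mul_single_of_ne _ _ _ _ hij.symm, single_mul_single_of_ne _ _ _ _ hik.symm,
      single_mul_single_same, Matrix.zero_mul, add_zero, one_mul]
    abel
  rw [key, key, neg_neg, h2, neg_neg] at h3
  exact ⟨g, h3⟩

lemma row2' {n : ℕ} {b : Fin n → ℕ} (hn : 3 ≤ n) {φ : Mat n → Mat n} (h : Cp b φ)
    {i j k : Fin n} (hij : i ≠ j) (hik : i ≠ k) (hjk : j ≠ k) (hb : b i ≤ b j) (hb' : b i ≤ b k)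
    (a c : ℂ) :
    φ (single i i 1 + single i j a + single i k c) =
      single i i 1 + single i j (Rr φ i j a) + single i k (Rr φ i k c) := by
  obtain ⟨g, hg⟩ := row2 hn h hij hik hb hb' a c
  obtain ⟨g', hg'⟩ := row2 hn h hik hij hb' hb c a
  rw [add_right_comm, hg] at hg'
  have := congrFun (congrFun hg' i) k
  simp [single_apply, hik, hjk, hjk.symm] at this
  rw [hg, this]

lemma col2 {n : ℕ} {b : Fin n → ℕ} (hn : 3 ≤ n) {φ : Mat n → Mat n} (h : Cp b φ)
    {i j k : Fin n} (hik : i ≠ k) (hjk : j ≠ k) (hb : b i ≤ b k) (hb' : b j ≤ b k)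
    (a c : ℂ) : ∃ g,
    φ (single k k 1 + single i k a + single j k c) =
      single k k 1 + single i k (Cc φ i k a) + single j k g := by
  obtain ⟨h1, -⟩ := tv_f' hn h hik hb a
  set f := Cc φ i k a
  have h3 := un_conj hik f (col1 hn h1 hjk hb' c)
  set g := Cc (fun X => transvection i k (-f) *
      φ (transvection i k a * X * transvection i k (-a)) * transvection i k f) j k c
  have key : ∀ x y : ℂ, transvection i k x * (single k k 1 + single j k y) * transvection i k (-x) =
      (single k k 1 + single i k x + single j k y : Mat n) := by
    intro x y
    simp only [transvection, Matrix.add_mul, Matrix.mul_add, Matrix.one_mul, Matrix.mul_one,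
      single_mul_single_of_ne _ _ _ _ hik.symm, single_mul_single_of_ne _ _ _ _ hjk.symm,
      single_mul_single_same, Matrix.zero_mul, add_zero, mul_one]
  rw [key, key] at h3
  exact ⟨g, h3⟩

lemma col2' {n : ℕ} {b : Fin n → ℕ} (hn : 3 ≤ n) {φ : Mat n → Mat n} (h : Cp b φ)
    {i j k : Fin n} (hij : i ≠ j) (hik : i ≠ k) (hjk : j ≠ k) (hb : b i ≤ b k) (hb' : b j ≤ b k)
    (a c : ℂ) :
    φ (single k k 1 + single i k a + single j k c) =
      single k k 1 + single i k (Cc φ i k a) + single j k (Cc φ j k c) := by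
  obtain ⟨g, hg⟩ := col2 hn h hik hjk hb hb' a c
  obtain ⟨g', hg'⟩ := col2 hn h hjk hik hb' hb c a
  rw [add_right_comm, hg] at hg'
  have := congrFun (congrFun hg' j) k
  simp [single_apply, hij, hij.symm, hjk, hjk.symm] at this
  rw [hg, this]

lemma bt_row {n : ℕ} {b : Fin n → ℕ} {i j : Fin n} (hb : b i ≤ b j) (x a : ℂ) :
    (single i i x + single i j a : Mat n).BlockTriangular b :=
  (blockTriangular_single le_rfl x).add (blockTriangular_single hb a)

lemma bt_col {n : ℕ} {b : Fin n → ℕ} {i j : Fin n} (hb : b i ≤ b j) (x a : ℂ) :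
    (single j j x + single i j a : Mat n).BlockTriangular b :=
  (blockTriangular_single le_rfl x).add (blockTriangular_single hb a)

lemma prod_rc {n : ℕ} {i j k : Fin n} (hij : i ≠ j) (hik : i ≠ k) (hjk : j ≠ k) (a c α β : ℂ) :
    ((single i i 1 + single i j a + single i k c) * (single k k 1 + single i k α + single j k β) : Mat n)
      = single i k (α + a * β + c) := by
  simp only [Matrix.add_mul, Matrix.mul_add, single_mul_single_of_ne _ _ _ _ hij,
    single_mul_single_of_ne _ _ _ _ hik, single_mul_single_of_ne _ _ _ _ hjk,
    single_mul_single_of_ne _ _ _ _ hij.symm, single_mul_single_of_ne _ _ _ _ hik.symm,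
    single_mul_single_of_ne _ _ _ _ hjk.symm, single_mul_single_same, one_mul, mul_one,
    add_zero, zero_add, single_add]
  abel

lemma prod_cr {n : ℕ} {i j k : Fin n} (hij : i ≠ j) (hik : i ≠ k) (hjk : j ≠ k) (a c α β : ℂ) :
    ((single k k 1 + single i k α + single j k β) * (single i i 1 + single i j a + single i k c) : Mat n)
      = 0 := by
  simp only [Matrix.add_mul, Matrix.mul_add, 
    single_mul_single_of_ne _ _ _ _ hik.symm, add_zero]

lemma rel {n : ℕ} {b : Fin n → ℕ} (hn : 3 ≤ n) {φ : Mat n → Mat n} (h : Cp b φ)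
    {i j k : Fin n} (hij : i ≠ j) (hik : i ≠ k) (hjk : j ≠ k) (hb : b i ≤ b j) (hb' : b j ≤ b k)
    (a β c : ℂ) : Rr φ i k (a * β + c) = Rr φ i j a * Cc φ j k β + Rr φ i k c := by
  have hb2 := hb.trans hb'
  have e1 := row2' hn h hij hik hjk hb hb2 a c
  have e2 := col2' hn h hij hik hjk hb2 hb' (-(a * β + c)) β
  have h1 := h.good.comm _ _ ((bt_row hb 1 a).add (blockTriangular_single hb2 c))
    ((bt_col hb2 1 (-(a * β + c))).add (blockTriangular_single hb' β))
    (by rw [prod_rc hij hik hjk, prod_cr hij hik hjk,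
          show -(a * β + c) + a * β + c = 0 by ring, single_zero])
  rw [e1, e2, prod_rc hij hik hjk, prod_cr hij hik hjk] at h1
  have h2 := congrFun (congrFun h1 i) k
  rw [single_apply_same, (tv_f' hn h hik hb2 _).2, neg_neg] at h2
  rw [Matrix.zero_apply] at h2
  linear_combination -h2

lemma Rr_zero {n : ℕ} {b : Fin n → ℕ} {φ : Mat n → Mat n} (h : Cp b φ)
    {i j : Fin n} (hij : i ≠ j) : Rr φ i j 0 = 0 := by
  rw [Rr, single_zero, add_zero, h.fix1, single_apply_of_ne]
  exact fun h => hij h.2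

lemma Rr_ne {n : ℕ} {b : Fin n → ℕ} (hn : 3 ≤ n) {φ : Mat n → Mat n} (h : Cp b φ)
    {i j : Fin n} (hij : i ≠ j) (hb : b i ≤ b j) {a : ℂ} (ha : a ≠ 0) : Rr φ i j a ≠ 0 := by
  intro h0
  have h1 := row1 hn h hij hb a
  rw [h0, ← Rr_zero h hij, ← row1 hn h hij hb 0] at h1
  have h2 := h.good.inj (bt_row hb 1 a) (bt_row hb 1 0) h1
  exact ha (add_single_inj h2)

/-- the coefficient of the image of a matrix unit -/
def cf {n : ℕ} (φ : Mat n → Mat n) (i j : Fin n) : ℂ := φ (single i j 1) i j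

lemma Cp.cf_eq {n : ℕ} {b : Fin n → ℕ} {φ : Mat n → Mat n} (h : Cp b φ)
    {i j : Fin n} (hij : i ≠ j) (hb : b i ≤ b j) :
    φ (single i j 1) = single i j (cf φ i j) ∧ cf φ i j ≠ 0 := by
  obtain ⟨c, hc, e⟩ := h.up i j hij hb
  have : cf φ i j = c := by rw [cf, e, single_apply_same]
  rw [this]; exact ⟨e, hc⟩

lemma lin_of_nat {n : ℕ} {b : Fin n → ℕ} (hn : 3 ≤ n) {φ : Mat n → Mat n} (h : Cp b φ)
    {i j : Fin n} (hij : i ≠ j) (hb : b i ≤ b j) (a : ℂ)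
    (hnat : ∀ m : ℕ, Rr φ i j (m * a) = m * Rr φ i j a) : Rr φ i j a = a * cf φ i j := by
  have hc : Filter.Tendsto (fun m : ℕ => (single i i (((m:ℂ) + 1)⁻¹) + single i j a : Mat n)) Filter.atTop
      (nhdsWithin (single i j a) {X : Mat n | X.BlockTriangular b}) := by
    refine tendsto_nhdsWithin_iff.2 ⟨?_, Filter.Eventually.of_forall fun m => bt_row hb _ _⟩
    have h1 : Filter.Tendsto (fun m : ℕ => ((m:ℂ) + 1)⁻¹) Filter.atTop (nhds 0) := by
      have := tendsto_one_div_add_atTop_nhds_zero_nat (𝕜 := ℂ)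
      simpa using this
    have h2 : Continuous (fun t : ℂ => (single i i t + single i j a : Mat n)) := by
      refine Continuous.add ?_ continuous_const
      refine continuous_matrix fun r s => ?_
      simp only [single_apply]
      split_ifs
      · exact continuous_id
      · exact continuous_const
    have h3 := (h2.tendsto 0).comp h1
    simpa [Function.comp_def] using h3
  have h4 := (h.good.cont (single i j a) (blockTriangular_single hb a)).tendsto.comp hc
  have h5 : φ (single i j a) = a • single i j (cf φ i j) := by
    rw [← (h.cf_eq hij hb).1, ← h.good.homog _ _ (blockTriangular_single hb 1)]
    simp
  rw [h5] at h4
  have h6 : Filter.Tendsto (fun m : ℕ => φ (single i i (((m:ℂ) + 1)⁻¹) + single i j a) i j) Filter.atTop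
      (nhds (a * cf φ i j)) := by
    have h7 : Continuous (fun X : Mat n => X i j) := by fun_prop
    have := (h7.tendsto _).comp h4
    simpa [Function.comp_def] using this
  have h8 : ∀ m : ℕ, φ (single i i (((m:ℂ) + 1)⁻¹) + single i j a) i j = Rr φ i j a := by
    intro m
    have hm : ((m:ℂ) + 1) ≠ 0 := by exact_mod_cast Nat.succ_ne_zero m
    have h9 : (single i i (((m:ℂ) + 1)⁻¹) + single i j a : Mat n) =
        ((m:ℂ) + 1)⁻¹ • (single i i 1 + single i j (((m+1 : ℕ) : ℂ) * a)) := by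
      rw [smul_add, smul_single, smul_single]
      congr 2
      · simp
      · rw [smul_eq_mul]; push_cast; field_simp
    rw [h9, h.good.homog _ _ (bt_row hb _ _), Matrix.smul_apply]
    change ((m:ℂ) + 1)⁻¹ • Rr φ i j _ = _
    rw [hnat, smul_eq_mul]; push_cast; field_simp
  simp only [h8] at h6
  exact tendsto_nhds_unique tendsto_const_nhds h6

lemma chain {n : ℕ} {b : Fin n → ℕ} (hn : 3 ≤ n) {φ : Mat n → Mat n} (h : Cp b φ)
    {i j k : Fin n} (hij : i ≠ j) (hik : i ≠ k) (hjk : j ≠ k) (hb : b i ≤ b j) (hb' : b j ≤ b k) :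
    (∀ a, Rr φ i k a = a * cf φ i k) ∧ (∀ a, Rr φ i j a = a * cf φ i j) ∧
    (∀ a, Rr φ j k a = a * cf φ j k) ∧ cf φ i j * cf φ j k = cf φ i k := by
  have hb2 := hb.trans hb'
  have r0 := rel hn h hij hik hjk hb hb'
  have z := Rr_zero h hik
  have r1 : ∀ a β, Rr φ i k (a * β) = Rr φ i j a * Cc φ j k β := by
    intro a β
    have := r0 a β 0
    rwa [add_zero, z, add_zero] at this
  have hadd : ∀ x y, Rr φ i k (x + y) = Rr φ i k x + Rr φ i k y := by
    intro x y
    have := r0 x 1 y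
    rwa [← r1, mul_one] at this
  have hnat : ∀ (a : ℂ) (m : ℕ), Rr φ i k (m * a) = m * Rr φ i k a := by
    intro a m
    induction m with
    | zero => simp [z]
    | succ m ih => push_cast; rw [add_mul, hadd, ih, one_mul, add_mul, one_mul]
  have l1 : ∀ a, Rr φ i k a = a * cf φ i k := fun a => lin_of_nat hn h hik hb2 a (hnat a)
  have r2 : ∀ a β, a * β * cf φ i k = Rr φ i j a * Cc φ j k β := fun a β => by rw [← r1, l1]
  have cne : cf φ i k ≠ 0 := (h.cf_eq hik hb2).2
  have c1 : Cc φ j k 1 ≠ 0 := by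
    intro h0
    have := r2 1 1
    rw [h0] at this
    simp at this
    exact cne this
  have d1 : Rr φ i j 1 ≠ 0 := Rr_ne hn h hij hb one_ne_zero
  have l2 : ∀ a, Rr φ i j a = a * cf φ i j := by
    intro a
    refine lin_of_nat hn h hij hb a fun m => ?_
    have e1 := r2 (m * a) 1
    have e2 := r2 a 1
    apply mul_right_cancel₀ c1
    linear_combination m * e2 - e1
  have hC : ∀ β, Cc φ j k β = - Rr φ j k (-β) := fun β => (tv_f' hn h hjk hb' β).2
  have l3 : ∀ a, Rr φ j k a = a * cf φ j k := by
    intro a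
    refine lin_of_nat hn h hjk hb' a fun m => ?_
    have e1 := r2 1 (-(m * a))
    have e2 := r2 1 (-a)
    rw [hC, neg_neg] at e1 e2
    apply mul_left_cancel₀ d1
    linear_combination e1 - m * e2
  refine ⟨l1, l2, l3, ?_⟩
  have := r2 1 1
  rw [hC, l2, l3] at this
  linear_combination -this

lemma lin {n : ℕ} {b : Fin n → ℕ} (hn : 3 ≤ n) {φ : Mat n → Mat n} (h : Cp b φ)
    {i j : Fin n} (hij : i ≠ j) (hb : b i ≤ b j) (a : ℂ) : Rr φ i j a = a * cf φ i j := by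
  obtain ⟨k, hki, hkj⟩ := third hn i j
  rcases le_total (b k) (b i) with h1 | h1
  · exact (chain hn h hki hkj hij h1 hb).2.2.1 a
  · rcases le_total (b k) (b j) with h2 | h2
    · exact (chain hn h hki.symm hij hkj h1 h2).1 a
    · exact (chain hn h hij hki.symm hkj.symm hb h2).2.1 a

lemma cf_inv {n : ℕ} {b : Fin n → ℕ} (hn : 3 ≤ n) {φ : Mat n → Mat n} (h : Cp b φ)
    {i j : Fin n} (hij : i ≠ j) (hb : b i = b j) : cf φ i j * cf φ j i = 1 := by
  obtain ⟨k, hki, hkj⟩ := third hn i j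
  rcases le_total (b k) (b i) with h1 | h1
  · have e1 := (chain hn h hki hkj hij h1 hb.le).2.2.2
    have e2 := (chain hn h hkj hki hij.symm (h1.trans hb.le) hb.ge).2.2.2
    have e3 := (h.cf_eq hki h1).2
    apply mul_left_cancel₀ e3
    linear_combination e2 + cf φ j i * e1
  · have e1 := (chain hn h hij hki.symm hkj.symm hb.le (hb.ge.trans h1)).2.2.2
    have e2 := (chain hn h hij.symm hkj.symm hki.symm hb.ge h1).2.2.2
    have e3 := (h.cf_eq hki.symm h1).2
    apply mul_left_cancel₀ e3
    linear_combination e1 + cf φ i j * e2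

lemma tv_final {n : ℕ} {b : Fin n → ℕ} (hn : 3 ≤ n) {φ : Mat n → Mat n} (h : Cp b φ)
    {i j : Fin n} (hij : i ≠ j) (hb : b i ≤ b j) (a : ℂ) :
    Cp b (fun X => transvection i j (-(a * cf φ i j)) *
      φ (transvection i j a * X * transvection i j (-a)) * transvection i j (a * cf φ i j)) := by
  have h1 := tv_f' hn h hij hb a
  rw [lin hn h hij hb] at h1
  have e : Cc φ i j a = a * cf φ i j := by rw [h1.2]; ring
  rw [← e]
  exact h1.1

end BUT

namespace BUT

/-- Maps of class `Cp` fixing all allowed matrix units. -/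
structure Std {n : ℕ} (b : Fin n → ℕ) (φ : Mat n → Mat n) : Prop where
  cp : Cp b φ
  one : ∀ i j, i ≠ j → b i ≤ b j → cf φ i j = 1

lemma exists_std {n : ℕ} {b : Fin n → ℕ} (hn : 3 ≤ n) {φ : Mat n → Mat n} (h : Cp b φ) :
    ∃ δ : Fin n → ℂ, (∀ i, δ i ≠ 0) ∧
      Std b (fun X => diagonal δ * φ X * diagonal (fun i => (δ i)⁻¹)) := by
  obtain ⟨m, -, hm⟩ := Finset.exists_min_image (Finset.univ : Finset (Fin n)) b
    ⟨⟨0, by omega⟩, Finset.mem_univ _⟩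
  have hm' : ∀ i, b m ≤ b i := fun i => hm i (Finset.mem_univ i)
  let δ : Fin n → ℂ := fun i => if i = m then 1 else cf φ m i
  have hδm : δ m = 1 := by simp [δ]
  have hδ' : ∀ i, i ≠ m → δ i = cf φ m i := fun i hi => by simp [δ, hi]
  have hδ : ∀ i, δ i ≠ 0 := by
    intro i
    by_cases hi : i = m
    · rw [hi, hδm]; exact one_ne_zero
    · rw [hδ' i hi]; exact (h.cf_eq (Ne.symm hi) (hm' i)).2
  refine ⟨δ, hδ, h.diag hδ, ?_⟩
  intro i j hij hb
  have e : cf (fun X => diagonal δ * φ X * diagonal (fun i => (δ i)⁻¹)) i j =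
      δ i * cf φ i j * (δ j)⁻¹ := by
    rw [cf, (h.cf_eq hij hb).1, diag_conj_single, single_apply_same]
  rw [e, mul_inv_eq_one₀ (hδ j)]
  by_cases hi : i = m
  · subst hi
    rw [hδm, one_mul, hδ' j hij.symm]
  · rw [hδ' i hi]
    by_cases hj : j = m
    · subst hj
      rw [hδm]
      exact cf_inv hn h hij.symm (le_antisymm (hm' i) hb)
    · rw [hδ' j hj]
      exact (chain hn h (Ne.symm hi) (Ne.symm hj) hij (hm' i) hb).2.2.2

lemma std_tv {n : ℕ} {b : Fin n → ℕ} (hn : 3 ≤ n) {φ : Mat n → Mat n} (h : Std b φ)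
    {i j : Fin n} (hij : i ≠ j) (hb : b i ≤ b j) (a : ℂ) :
    Std b (fun X => transvection i j (-a) *
      φ (transvection i j a * X * transvection i j (-a)) * transvection i j a) := by
  have h1 := tv_final hn h.cp hij hb a
  rw [h.one i j hij hb, mul_one] at h1
  refine ⟨h1, ?_⟩
  set ψ : Mat n → Mat n := fun X => transvection i j (-a) *
      φ (transvection i j a * X * transvection i j (-a)) * transvection i j a with hψ
  have h2 : ∀ k l, k ≠ l → b k ≤ b l → k ≠ j → l ≠ i → cf ψ k l = 1 := by
    intro k l hkl hbk hk hl
    have e := (h.cp.cf_eq hkl hbk).1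
    rw [h.one k l hkl hbk] at e
    have e2 := tv_conj_single (i := i) (j := j) (-a) 1 hk hl
    rw [neg_neg] at e2
    rw [cf, hψ]
    simp only
    rw [tv_conj_single a 1 hk hl, e, e2, single_apply_same]
  have hij1 := h2 i j hij hb hij hij.symm
  intro k l hkl hbk
  by_cases hk : k = j
  · subst hk
    by_cases hl : l = i
    · subst hl
      have := cf_inv hn h1 hij (le_antisymm hb hbk)
      rwa [hij1, one_mul] at this
    · have := (chain hn h1 hij (Ne.symm hl) hkl hb hbk).2.2.2
      rwa [hij1, one_mul, h2 i l (Ne.symm hl) (hb.trans hbk) hij hl] at this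
  · by_cases hl : l = i
    · subst hl
      have := (chain hn h1 hkl hk hij hbk hb).2.2.2
      rwa [hij1, mul_one, h2 k j hk (hbk.trans hb) hk hij.symm] at this
    · exact h2 k l hkl hbk hk hl

lemma std_HH {n : ℕ} {b : Fin n → ℕ} (hn : 3 ≤ n) {S : Mat n} (hS : S ∈ HH b) :
    ∃ S' : Mat n, S * S' = 1 ∧ ∀ φ, Std b φ → Std b (fun X => S' * φ (S * X * S') * S) := by
  refine Submonoid.closure_induction (motive := fun S _ => ∃ S' : Mat n, S * S' = 1 ∧
    ∀ φ, Std b φ → Std b (fun X => S' * φ (S * X * S') * S)) ?_ ?_ ?_ hS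
  · rintro x ⟨i, j, a, hij, hb, rfl⟩
    exact ⟨transvection i j (-a), tv_mul hij a, fun φ h => std_tv hn h hij hb a⟩
  · exact ⟨1, by simp, fun φ h => by simpa using h⟩
  · rintro x y - - ⟨x', hx, hx'⟩ ⟨y', hy, hy'⟩
    refine ⟨y' * x', ?_, fun φ h => ?_⟩
    · rw [Matrix.mul_assoc, ← Matrix.mul_assoc y, hy, Matrix.one_mul, hx]
    · have := hy' _ (hx' φ h)
      simpa only [Matrix.mul_assoc] using this

lemma std_id {n : ℕ} {b : Fin n → ℕ} (hn : 3 ≤ n) {φ : Mat n → Mat n} (h : Std b φ)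
    (X : Mat n) (hX : X.BlockTriangular b) : φ X = X := by
  refine eq_of_diagble b (f := φ) (g := fun X => X) h.cp.good.cont continuousOn_id ?_ X hX
  intro Y hY hd
  obtain ⟨S, hS, S', hS', hSS, d, rfl⟩ := diagonalize b Y hY hd
  obtain ⟨S2, hS2, h2⟩ := std_HH hn hS
  have e : S2 = S' := by
    have h3 := mul_eq_one_comm.1 hS2
    calc S2 = S2 * (S * S') := by rw [hSS, Matrix.mul_one]
      _ = S' := by rw [← Matrix.mul_assoc, h3, Matrix.one_mul]
  subst e
  have h3 : S2 * φ (S * diagonal d * S2) * S = diagonal d := (h2 φ h).cp.fix d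
  show _ = S * diagonal d * S2
  have h4 := congrArg (fun Z => S * Z * S2) h3
  simpa only [conj_cancel hSS] using h4

lemma cp_form {n : ℕ} {b : Fin n → ℕ} (hn : 3 ≤ n) {φ : Mat n → Mat n} (h : Cp b φ) :
    ∃ P P' : Mat n, P * P' = 1 ∧ Pᵀ = P ∧ P'ᵀ = P' ∧
      ∀ X : Mat n, X.BlockTriangular b → φ X = P * X * P' := by
  obtain ⟨δ, hδ, h1⟩ := exists_std hn h
  have hi := mul_eq_one_comm.1 (diag_inv hδ)
  refine ⟨diagonal (fun i => (δ i)⁻¹), diagonal δ, hi, diagonal_transpose _,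
    diagonal_transpose _, fun X hX => ?_⟩
  have h2 := std_id hn h1 X hX
  nth_rw 2 [← h2]
  rw [conj_cancel hi]

lemma good_form {n : ℕ} {b : Fin n → ℕ} (hn : 3 ≤ n) {φ : Mat n → Mat n} (h : Good b φ) :
    ∃ P P' : Mat n, P * P' = 1 ∧
      ((∀ X : Mat n, X.BlockTriangular b → φ X = P * X * P') ∨
       (∀ X : Mat n, X.BlockTriangular b → φ X = P * Xᵀ * P')) := by
  obtain ⟨T, T', hT, hD⟩ := h.exists_diag
  have g : Good b (fun X => T' * φ X * T) := by
    have := h.conj (S := 1) (S' := 1) blockTriangular_one blockTriangular_one (by simp) hT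
    simpa using this
  rcases g.up_or_down hn hD with hu | hd
  · obtain ⟨P, P', hP, -, -, hf⟩ := cp_form hn ⟨g, hD, hu⟩
    refine ⟨T * P, P' * T', ?_, Or.inl fun X hX => ?_⟩
    · rw [Matrix.mul_assoc, ← Matrix.mul_assoc P, hP, Matrix.one_mul, hT]
    · have := hf X hX
      rw [← conj_cancel hT (φ X), this]
      simp only [Matrix.mul_assoc]
  · have hC : Cp b (fun X => (T' * φ X * T)ᵀ) := by
      refine ⟨g.transpose, fun d => ?_, fun i j hij hb => ?_⟩
      · show (T' * φ (diagonal d) * T)ᵀ = _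
        rw [hD, diagonal_transpose]
      · obtain ⟨c, hc, e⟩ := hd i j hij hb
        refine ⟨c, hc, ?_⟩
        simp only at e ⊢
        rw [e, transpose_single]
    obtain ⟨P, P', hP, hPt, hPt', hf⟩ := cp_form hn hC
    refine ⟨T * P', P * T', ?_, Or.inr fun X hX => ?_⟩
    · rw [Matrix.mul_assoc, ← Matrix.mul_assoc P', mul_eq_one_comm.1 hP, Matrix.one_mul, hT]
    · have := congrArg Matrix.transpose (hf X hX)
      simp only [transpose_transpose] at this
      rw [← conj_cancel hT (φ X), this]
      rw [transpose_mul, transpose_mul, hPt, hPt']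
      simp only [Matrix.mul_assoc]

end BUT

theorem main_result {n : ℕ} (hn : 3 ≤ n) (𝒜 : Set (Matrix (Fin n) (Fin n) ℂ))
    (h𝒜 : IsBlockUT n 𝒜)
    (φ : Matrix (Fin n) (Fin n) ℂ → Matrix (Fin n) (Fin n) ℂ)
    (hcont : ContinuousOn φ 𝒜)
    (hinj : Set.InjOn φ 𝒜)
    (hcomm : ∀ X ∈ 𝒜, ∀ Y ∈ 𝒜, X * Y = Y * X → φ X * φ Y = φ Y * φ X)
    (hspec : ∀ X ∈ 𝒜, spectrum ℂ (φ X) = spectrum ℂ X) :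
    (∃ T : Matrix (Fin n) (Fin n) ℂ, IsUnit T.det ∧
      ((∀ X ∈ 𝒜, φ X = T * X * T⁻¹) ∨ (∀ X ∈ 𝒜, φ X = T * Xᵀ * T⁻¹))) ∧
    (∀ X ∈ 𝒜, ∀ Y ∈ 𝒜, φ (X + Y) = φ X + φ Y) ∧
    (∀ (c : ℂ), ∀ X ∈ 𝒜, φ (c • X) = c • φ X) ∧
    (∀ X ∈ 𝒜, φ (X * X) = φ X * φ X) := by
  obtain ⟨k, -, -, rfl⟩ := h𝒜
  have hmem : ∀ X : Matrix (Fin n) (Fin n) ℂ, X ∈ blockAlg n k ↔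
      X.BlockTriangular (fun i : Fin n => blockIdx k (i : ℕ)) := fun X =>
    ⟨fun h i j hij => h i j hij, fun h i j hij => h hij⟩
  have hset : blockAlg n k =
      {X : Matrix (Fin n) (Fin n) ℂ | X.BlockTriangular (fun i : Fin n => blockIdx k (i : ℕ))} :=
    Set.ext hmem
  have hg : BUT.Good (fun i : Fin n => blockIdx k (i : ℕ)) φ := by
    refine ⟨?_, ?_, fun X Y hX hY => hcomm X ((hmem X).2 hX) Y ((hmem Y).2 hY),
      fun X hX => hspec X ((hmem X).2 hX)⟩
    · rw [← hset]; exact hcont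
    · rw [← hset]; exact hinj
  have hadd : ∀ X ∈ blockAlg n k, ∀ Y ∈ blockAlg n k, X + Y ∈ blockAlg n k :=
    fun X hX Y hY => (hmem _).2 (((hmem X).1 hX).add ((hmem Y).1 hY))
  have hmul : ∀ X ∈ blockAlg n k, X * X ∈ blockAlg n k :=
    fun X hX => (hmem _).2 (((hmem X).1 hX).mul ((hmem X).1 hX))
  obtain ⟨P, Q, hPQ, hform⟩ := BUT.good_form hn hg
  have hQP : Q * P = 1 := mul_eq_one_comm.1 hPQ
  have hinv : P⁻¹ = Q := Matrix.inv_eq_right_inv hPQ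
  have hdet : IsUnit P.det := Matrix.isUnit_det_of_right_inverse hPQ
  refine ⟨⟨P, hdet, ?_⟩, ?_, fun c X hX => hg.homog c X ((hmem X).1 hX), ?_⟩
  · rw [hinv]
    rcases hform with h | h
    · exact Or.inl fun X hX => h X ((hmem X).1 hX)
    · exact Or.inr fun X hX => h X ((hmem X).1 hX)
  · intro X hX Y hY
    rcases hform with h | h
    · rw [h X ((hmem X).1 hX), h Y ((hmem Y).1 hY), h _ ((hmem _).1 (hadd X hX Y hY))]
      rw [Matrix.mul_add, Matrix.add_mul]
    · rw [h X ((hmem X).1 hX), h Y ((hmem Y).1 hY), h _ ((hmem _).1 (hadd X hX Y hY))]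
      rw [Matrix.transpose_add, Matrix.mul_add, Matrix.add_mul]
  · intro X hX
    rcases hform with h | h
    · rw [h X ((hmem X).1 hX), h _ ((hmem _).1 (hmul X hX)), BUT.conj_mul hQP]
    · rw [h X ((hmem X).1 hX), h _ ((hmem _).1 (hmul X hX)), BUT.conj_mul hQP,
        Matrix.transpose_mul]
end
end

section
/- Let A and B be block upper-triangular subalgebras of M_n(ℂ) and let φ : A → B be a Jordan embedding, i.e. an injective linear map satisfying φ(X²) = φ(X)² for all X ∈ A. Then one of the following holds: (a) A ⊆ B and there exists an invertible T ∈ B such that φ(X) = T X T⁻¹ for all X ∈ A; or (b) A^⊙ ⊆ B and there exists an invertible T ∈ B such that φ(X) = T X^⊙ T⁻¹ for all X ∈ A, where X^⊙ := J Xᵗ J and J is the exchange matrix (J_{ij} = 1 iff i + j = n + 1). -/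
open Matrix

noncomputable section

theorem blockIdx_mono (k : List ℕ) : Monotone (blockIdx k) := by
  intro i j h
  unfold blockIdx
  apply Finset.card_le_card
  intro s hs
  simp only [Finset.mem_filter] at hs ⊢
  exact ⟨hs.1, hs.2.trans h⟩

/-- An abstract block algebra given by an index function. -/
def absAlg {n : ℕ} (a : Fin n → ℕ) : Set (Matrix (Fin n) (Fin n) ℂ) :=
  { X | ∀ i j : Fin n, a j < a i → X i j = 0 }

theorem absAlg_mul {n : ℕ} (a : Fin n → ℕ) {X Y : Matrix (Fin n) (Fin n) ℂ}
    (hX : X ∈ absAlg a) (hY : Y ∈ absAlg a) : X * Y ∈ absAlg a := by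
  intro i j h
  rw [Matrix.mul_apply]
  apply Finset.sum_eq_zero
  intro l _
  by_cases hl : a l < a i
  · rw [hX i l hl, zero_mul]
  · rw [hY l j (by omega), mul_zero]

theorem absAlg_add {n : ℕ} (a : Fin n → ℕ) {X Y : Matrix (Fin n) (Fin n) ℂ}
    (hX : X ∈ absAlg a) (hY : Y ∈ absAlg a) : X + Y ∈ absAlg a := by
  intro i j h
  rw [Matrix.add_apply, hX i j h, hY i j h, add_zero]

theorem absAlg_smul {n : ℕ} (a : Fin n → ℕ) (c : ℂ) {X : Matrix (Fin n) (Fin n) ℂ}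
    (hX : X ∈ absAlg a) : c • X ∈ absAlg a := by
  intro i j h
  rw [Matrix.smul_apply, hX i j h, smul_zero]

theorem absAlg_zero {n : ℕ} (a : Fin n → ℕ) : (0 : Matrix (Fin n) (Fin n) ℂ) ∈ absAlg a :=
  fun _ _ _ => rfl

theorem single_mem {n : ℕ} (a : Fin n → ℕ) {i j : Fin n} (h : a i ≤ a j) :
    (Matrix.single i j 1 : Matrix (Fin n) (Fin n) ℂ) ∈ absAlg a := by
  intro p q hpq
  rw [Matrix.single_apply, if_neg]
  rintro ⟨rfl, rfl⟩
  omega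

/-- An invertible matrix has no zero block of shape `(n - m) × (m + 1)`. -/
theorem no_zero_block {n : ℕ} (M : Matrix (Fin n) (Fin n) ℂ) (hM : IsUnit M.det) (m : Fin n)
    (h : ∀ i j : Fin n, m ≤ i → j ≤ m → M i j = 0) : False := by
  let N : Matrix (Fin m.val) (Fin (m.val + 1)) ℂ :=
    Matrix.of fun i j => M ⟨i, by omega⟩ ⟨j, by omega⟩
  obtain ⟨v, hv0, hv⟩ : ∃ v, v ≠ 0 ∧ N.mulVec v = 0 := by
    have := LinearMap.ker_ne_bot_of_finrank_lt (f := N.mulVecLin) (by simp)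
    obtain ⟨v, hv, h0⟩ := Submodule.exists_mem_ne_zero_of_ne_bot this
    exact ⟨v, h0, by simpa using hv⟩
  let w : Fin n → ℂ := fun j => if hj : j.val < m.val + 1 then v ⟨j, hj⟩ else 0
  have hwout : ∀ j : Fin n, ¬ (j.val < m.val + 1) → w j = 0 := fun j hj => dif_neg hj
  have hwin : ∀ (j : Fin n) (hj : j.val < m.val + 1), w j = v ⟨j, hj⟩ := fun j hj => dif_pos hj
  have hw : M.mulVec w = 0 := by
    funext i
    by_cases hi : m ≤ i
    · simp only [Matrix.mulVec, dotProduct, Pi.zero_apply]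
      apply Finset.sum_eq_zero
      intro j _
      by_cases hj : j ≤ m
      · rw [h i j hi hj, zero_mul]
      · have : ¬ (j.val < m.val + 1) := by
          rw [Fin.le_def] at hj; omega
        rw [hwout j this, mul_zero]
    · have hi' : i.val < m.val := by rw [Fin.le_def] at hi; omega
      have h1 := congrFun hv ⟨i, hi'⟩
      simp only [Matrix.mulVec, dotProduct, Pi.zero_apply] at h1 ⊢
      rw [← h1]
      symm
      have hinj : Function.Injective (fun j : Fin (m.val + 1) => (⟨j, by omega⟩ : Fin n)) := by
        intro x y hxy
        simpa [Fin.ext_iff] using hxy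
      refine Finset.sum_of_injOn (fun j : Fin (m.val + 1) => (⟨j, by omega⟩ : Fin n))
        hinj.injOn (by simp) ?_ ?_
      · intro j _ hj
        have : ¬ (j.val < m.val + 1) := by
          intro hlt
          apply hj
          simp only [Finset.coe_univ, Set.image_univ, Set.mem_range]
          exact ⟨⟨j, hlt⟩, rfl⟩
        rw [hwout j this, mul_zero]
      · intro j _
        rw [hwin _ j.2]
        rfl
  have hMi : w = 0 := by
    have := congrArg (fun u => M⁻¹.mulVec u) hw
    simpa [Matrix.mulVec_mulVec, Matrix.nonsing_inv_mul _ hM] using this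
  apply hv0
  funext j
  have := congrFun hMi ⟨j, by omega⟩
  rw [hwin _ j.2] at this
  exact this

theorem conj_mem {n : ℕ} (b : Fin n → ℕ) (hb : Monotone b) (T : Matrix (Fin n) (Fin n) ℂ)
    (hT : IsUnit T.det)
    (h : ∀ p q : Fin n, p ≤ q → T * Matrix.single p q 1 * T⁻¹ ∈ absAlg b) :
    T ∈ absAlg b ∧ T⁻¹ ∈ absAlg b := by
  have key : ∀ p q i j : Fin n, p ≤ q → b j < b i → T i p * T⁻¹ q j = 0 := by
    intro p q i j hpq hji
    have := h p q hpq i j hji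
    rw [Matrix.mul_apply, Finset.sum_eq_single q] at this
    · simpa using this
    · intro x _ hx
      simp [Matrix.mul_single_apply_of_ne, hx]
    · simp
  have hTi : IsUnit (T⁻¹).det := by
    rw [Matrix.isUnit_nonsing_inv_det_iff]; exact hT
  constructor
  · intro i p hpi
    by_contra hne
    refine no_zero_block T⁻¹ hTi p ?_
    intro q j hq hj
    exact (mul_eq_zero.1 (key p q i j hq (lt_of_le_of_lt (hb hj) hpi))).resolve_left hne
  · intro q j hjq
    by_contra hne
    refine no_zero_block T hT q ?_
    intro i p hi hp
    exact (mul_eq_zero.1 (key p q i j hp (lt_of_lt_of_le hjq (hb hi)))).resolve_right hne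

theorem map_sum_alg {n : ℕ} (a : Fin n → ℕ)
    (φ : Matrix (Fin n) (Fin n) ℂ → Matrix (Fin n) (Fin n) ℂ)
    (hadd : ∀ X ∈ absAlg a, ∀ Y ∈ absAlg a, φ (X + Y) = φ X + φ Y)
    (hsmul : ∀ (c : ℂ), ∀ X ∈ absAlg a, φ (c • X) = c • φ X)
    {ι : Type} (s : Finset ι) (f : ι → Matrix (Fin n) (Fin n) ℂ)
    (hf : ∀ x ∈ s, f x ∈ absAlg a) :
    (∑ x ∈ s, f x) ∈ absAlg a ∧ φ (∑ x ∈ s, f x) = ∑ x ∈ s, φ (f x) := by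
  classical
  induction s using Finset.induction_on with
  | empty =>
    refine ⟨absAlg_zero a, ?_⟩
    have := hsmul 0 0 (absAlg_zero a)
    simpa using this
  | insert x s hx ih =>
    have ih' := ih (fun y hy => hf y (Finset.mem_insert_of_mem hy))
    have hx' := hf x (Finset.mem_insert_self _ _)
    rw [Finset.sum_insert hx, Finset.sum_insert hx]
    exact ⟨absAlg_add a hx' ih'.1, by rw [hadd _ hx' _ ih'.1, ih'.2]⟩

/-- A map linear on the algebra is determined by the matrix units. -/
theorem ext_single {n : ℕ} (a : Fin n → ℕ)
    (φ : Matrix (Fin n) (Fin n) ℂ → Matrix (Fin n) (Fin n) ℂ)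
    (hadd : ∀ X ∈ absAlg a, ∀ Y ∈ absAlg a, φ (X + Y) = φ X + φ Y)
    (hsmul : ∀ (c : ℂ), ∀ X ∈ absAlg a, φ (c • X) = c • φ X)
    (L : Matrix (Fin n) (Fin n) ℂ →ₗ[ℂ] Matrix (Fin n) (Fin n) ℂ)
    (h : ∀ i j, a i ≤ a j → φ (Matrix.single i j 1) = L (Matrix.single i j 1)) :
    ∀ X ∈ absAlg a, φ X = L X := by
  intro X hX
  have hXs : X = ∑ p ∈ (Finset.univ : Finset (Fin n × Fin n)).filter (fun p => a p.1 ≤ a p.2),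
      X p.1 p.2 • (Matrix.single p.1 p.2 1 : Matrix (Fin n) (Fin n) ℂ) := by
    conv_lhs => rw [Matrix.matrix_eq_sum_single X]
    rw [← Finset.univ_product_univ, Finset.sum_filter, Finset.sum_product]
    refine Finset.sum_congr rfl fun i _ => Finset.sum_congr rfl fun j _ => ?_
    split_ifs with hij
    · simp [Matrix.smul_single]
    · simp only at hij
      rw [hX i j (by omega)]; simp
  have hm := map_sum_alg a φ hadd hsmul
    ((Finset.univ : Finset (Fin n × Fin n)).filter (fun p => a p.1 ≤ a p.2))
    (fun p => X p.1 p.2 • (Matrix.single p.1 p.2 1 : Matrix (Fin n) (Fin n) ℂ))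
    (fun p hp => absAlg_smul a _ (single_mem a (Finset.mem_filter.1 hp).2))
  rw [hXs, hm.2, map_sum]
  refine Finset.sum_congr rfl fun p hp => ?_
  have hp' := (Finset.mem_filter.1 hp).2
  rw [hsmul _ _ (single_mem a hp'), h _ _ hp', map_smul]

/-- Simultaneous diagonalisation of `n` orthogonal nonzero idempotents. -/
theorem simul_diag {n : ℕ} (P : Fin n → Matrix (Fin n) (Fin n) ℂ)
    (h0 : ∀ i, P i ≠ 0) (hid : ∀ i, P i * P i = P i)
    (ho : ∀ i j, i ≠ j → P i * P j = 0) :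
    ∃ S : Matrix (Fin n) (Fin n) ℂ, IsUnit S.det ∧
      ∀ i, P i * S = S * Matrix.single i i 1 := by
  have hv : ∀ i, ∃ v : Fin n → ℂ, v ≠ 0 ∧ (P i).mulVec v = v := by
    intro i
    by_contra hcon
    push Not at hcon
    apply h0 i
    apply Matrix.ext_of_mulVec_single
    intro j
    rw [Matrix.zero_mulVec]
    by_contra hne
    apply hcon _ hne
    rw [Matrix.mulVec_mulVec, hid]
  choose v hv0 hv using hv
  have hvo : ∀ i j, i ≠ j → (P i).mulVec (v j) = 0 := by
    intro i j hij
    rw [← hv j, Matrix.mulVec_mulVec, ho i j hij, Matrix.zero_mulVec]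
  let S : Matrix (Fin n) (Fin n) ℂ := Matrix.of fun x j => v j x
  have hS : ∀ i, P i * S = S * Matrix.single i i 1 := by
    intro i
    ext x j
    have : (P i * S) x j = (P i).mulVec (v j) x := rfl
    rw [this]
    by_cases hij : i = j
    · subst hij
      rw [hv, Matrix.mul_single_apply_same]
      simp [S]
    · rw [hvo i j hij, Matrix.mul_single_apply_of_ne _ _ _ _ _ (Ne.symm hij)]
      rfl
  refine ⟨S, ?_, hS⟩
  rw [isUnit_iff_ne_zero]
  intro hdet
  obtain ⟨w, hw0, hw⟩ := Matrix.exists_mulVec_eq_zero_iff.2 hdet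
  apply hw0
  funext i
  by_contra hwi
  apply hv0 i
  have h1 : (S * Matrix.single i i 1).mulVec w = 0 := by
    rw [← hS, ← Matrix.mulVec_mulVec, hw, Matrix.mulVec_zero]
  funext x
  have h2 := congrFun h1 x
  simp only [Matrix.mulVec, dotProduct, Pi.zero_apply] at h2
  rw [Finset.sum_eq_single i] at h2
  · rw [Matrix.mul_single_apply_same] at h2
    have h3 := (mul_eq_zero.1 h2).resolve_right hwi
    simpa [S] using h3
  · intro j _ hj
    rw [Matrix.mul_single_apply_of_ne _ _ _ _ _ hj, zero_mul]
  · simp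

theorem cocycle_split {n : ℕ} (a : Fin n → ℕ) (z : Fin n) (hz : ∀ i, a z ≤ a i)
    (g : Fin n → Fin n → ℂ) (hg0 : ∀ i j, a i ≤ a j → g i j ≠ 0)
    (hg1 : ∀ i, g i i = 1)
    (hg2 : ∀ i j, a i ≤ a j → a j ≤ a i → g i j * g j i = 1)
    (hg3 : ∀ i j k, i ≠ j → j ≠ k → i ≠ k → a i ≤ a j → a j ≤ a k → g i k = g i j * g j k) :
    ∃ d : Fin n → ℂ, (∀ i, d i ≠ 0) ∧ ∀ i j, a i ≤ a j → g i j = (d i)⁻¹ * d j := by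
  refine ⟨fun i => g z i, fun i => hg0 z i (hz i), ?_⟩
  intro i j hij
  have hi := hg0 z i (hz i)
  by_cases h1 : i = j
  · subst h1
    rw [hg1, inv_mul_cancel₀ hi]
  by_cases h2 : z = i
  · subst h2
    simp [hg1]
  by_cases h3 : z = j
  · subst h3
    have := hg2 z i (hz i) hij
    simp only [hg1, mul_one]
    field_simp
    linear_combination this
  · simp only
    rw [hg3 z i j h2 h1 h3 (hz i) hij]
    field_simp

theorem offdiag_form {n : ℕ} (M : Matrix (Fin n) (Fin n) ℂ) (i j : Fin n) (hij : i ≠ j)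
    (h1 : M = Matrix.single i i 1 * M + M * Matrix.single i i 1)
    (h2 : M = Matrix.single j j 1 * M + M * Matrix.single j j 1) :
    M = Matrix.single i j (M i j) + Matrix.single j i (M j i) := by
  have e : ∀ x k l : Fin n, (Matrix.single x x (1 : ℂ) * M + M * Matrix.single x x 1 : Matrix (Fin n) (Fin n) ℂ) k l =
      (if k = x then M k l else 0) + (if l = x then M k l else 0) := by
    intro x k l
    rw [Matrix.add_apply]
    congr 1
    · split_ifs with hk
      · subst hk; simp
      · rw [Matrix.single_mul_apply_of_ne _ _ _ _ _ hk]
    · split_ifs with hk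
      · subst hk; simp
      · rw [Matrix.mul_single_apply_of_ne _ _ _ _ _ hk]
  ext k l
  have h1' := congrFun (congrFun h1 k) l
  have h2' := congrFun (congrFun h2 k) l
  rw [e] at h1' h2'
  rw [Matrix.add_apply, Matrix.single_apply, Matrix.single_apply]
  clear h1 h2 e
  grind

theorem unit_form {n : ℕ} (a : Fin n → ℕ) (ha : Monotone a)
    (ψ : Matrix (Fin n) (Fin n) ℂ → Matrix (Fin n) (Fin n) ℂ)
    (hadd : ∀ X ∈ absAlg a, ∀ Y ∈ absAlg a, ψ (X + Y) = ψ X + ψ Y)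
    (hj : ∀ X ∈ absAlg a, ∀ Y ∈ absAlg a, ψ (X * Y + Y * X) = ψ X * ψ Y + ψ Y * ψ X)
    (h0 : ∀ X ∈ absAlg a, ψ X = 0 → X = 0)
    (hd : ∀ i, ψ (Matrix.single i i 1) = Matrix.single i i 1) :
    ∃ d : Fin n → ℂ, (∀ i, d i ≠ 0) ∧
      ((∀ i j, a i ≤ a j → ψ (Matrix.single i j 1) = Matrix.single i j ((d i)⁻¹ * d j)) ∨
       (∀ i j, a i ≤ a j → ψ (Matrix.single i j 1) = Matrix.single j i ((d i)⁻¹ * d j))) := by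
  rcases Nat.eq_zero_or_pos n with hn | hn
  · subst hn
    exact ⟨fun _ => 1, fun i => i.elim0, Or.inl fun i => i.elim0⟩
  let z : Fin n := ⟨0, hn⟩
  have hzle : ∀ i : Fin n, z ≤ i := fun i => Fin.le_def.2 (Nat.zero_le _)
  have hz : ∀ i, a z ≤ a i := fun i => ha (hzle i)
  let α : Fin n → Fin n → ℂ := fun i j => ψ (Matrix.single i j 1) i j
  let β : Fin n → Fin n → ℂ := fun i j => ψ (Matrix.single i j 1) j i
  have hα1 : ∀ i, α i i = 1 := fun i => by simp [α, hd]
  have hβ1 : ∀ i, β i i = 1 := fun i => by simp [β, hd]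
  have form : ∀ i j, i ≠ j → a i ≤ a j →
      ψ (Matrix.single i j 1) = Matrix.single i j (α i j) + Matrix.single j i (β i j) := by
    intro i j hij hr
    apply offdiag_form _ i j hij
    · have := hj _ (single_mem a (le_refl (a i))) _ (single_mem a hr)
      rw [hd] at this
      rw [← this]
      simp [hij.symm]
    · have := hj _ (single_mem a (le_refl (a j))) _ (single_mem a hr)
      rw [hd] at this
      rw [← this]
      simp [hij.symm]
  have hor : ∀ i j, i ≠ j → a i ≤ a j → α i j ≠ 0 ∨ β i j ≠ 0 := by
    intro i j hij hr
    by_contra hcon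
    push Not at hcon
    have := form i j hij hr
    rw [hcon.1, hcon.2] at this
    simp only [Matrix.single_zero, add_zero] at this
    have h := h0 _ (single_mem a hr) this
    have := congrFun (congrFun h i) j
    simp at this
  have hprod : ∀ i j, i ≠ j → a i ≤ a j → α i j * β i j = 0 := by
    intro i j hij hr
    have h := hj _ (single_mem a hr) _ (single_mem a hr)
    have hz0 : ψ 0 = 0 := by
      have := hadd 0 (absAlg_zero a) 0 (absAlg_zero a)
      simpa using this
    rw [form i j hij hr] at h
    simp [hij, hij.symm, hz0, mul_add, add_mul] at h
    have := congrFun (congrFun h i) i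
    simp [hij, hij.symm] at this
    grind
  have hchain : ∀ i j k, i ≠ j → j ≠ k → i ≠ k → a i ≤ a j → a j ≤ a k →
      α i k = α i j * α j k ∧ β i k = β i j * β j k := by
    intro i j k hij hjk hik h1 h2
    have h := hj _ (single_mem a h1) _ (single_mem a h2)
    rw [form i j hij h1, form j k hjk h2] at h
    have e : (Matrix.single i j 1 * Matrix.single j k 1 + Matrix.single j k 1 * Matrix.single i j 1
        : Matrix (Fin n) (Fin n) ℂ) = Matrix.single i k 1 := by simp [hik.symm]
    rw [e, form i k hik (h1.trans h2)] at h
    simp [hij, hij.symm, hjk, hjk.symm, hik, hik.symm, mul_add, add_mul] at h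
    constructor
    · have := congrFun (congrFun h i) k
      simp [hij, hij.symm, hjk, hjk.symm, hik, hik.symm] at this
      grind
    · have := congrFun (congrFun h k) i
      simp [hij, hij.symm, hjk, hjk.symm, hik, hik.symm] at this
      grind
  have hrev : ∀ i j, i ≠ j → a i ≤ a j → a j ≤ a i → α i j * α j i + β i j * β j i = 1 := by
    intro i j hij h1 h2
    have h := hj _ (single_mem a h1) _ (single_mem a h2)
    rw [form i j hij h1, form j i hij.symm h2] at h
    have e : (Matrix.single i j 1 * Matrix.single j i 1 + Matrix.single j i 1 * Matrix.single i j 1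
        : Matrix (Fin n) (Fin n) ℂ) = Matrix.single i i 1 + Matrix.single j j 1 := by simp
    rw [e, hadd _ (single_mem a le_rfl) _ (single_mem a le_rfl), hd, hd] at h
    simp [hij, hij.symm, mul_add, add_mul] at h
    have := congrFun (congrFun h i) i
    simp [hij, hij.symm] at this
    grind
  -- comparing types along a chain
  have htri : ∀ i j k, i ≠ j → j ≠ k → i ≠ k → a i ≤ a j → a j ≤ a k →
      (α i j ≠ 0 ↔ α i k ≠ 0) ∧ (α j k ≠ 0 ↔ α i k ≠ 0) := by
    intro i j k hij hjk hik h1 h2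
    obtain ⟨c1, c2⟩ := hchain i j k hij hjk hik h1 h2
    have o1 := hor i k hik (h1.trans h2)
    have p1 := hprod i j hij h1
    have p2 := hprod j k hjk h2
    rw [c1, c2] at o1
    rw [c1]
    grind
  have hfirst : ∀ j k, z ≠ j → z ≠ k → (α z j ≠ 0 ↔ α z k ≠ 0) := by
    have aux : ∀ j k, z ≠ j → z ≠ k → j < k → (α z j ≠ 0 ↔ α z k ≠ 0) := by
      intro j k h1 h2 h3
      exact (htri z j k h1 h3.ne h2 (hz j) (ha h3.le)).1
    intro j k h1 h2
    rcases lt_trichotomy j k with h | h | h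
    · exact aux j k h1 h2 h
    · rw [h]
    · exact (aux k j h2 h1 h).symm
  have hrevtype : ∀ i j, i ≠ j → a i ≤ a j → a j ≤ a i → (α i j ≠ 0 ↔ α j i ≠ 0) := by
    intro i j hij h1 h2
    have e1 := hrev i j hij h1 h2
    have p1 := hprod i j hij h1
    have p2 := hprod j i hij.symm h2
    grind
  have hall : ∀ i j k, z ≠ k → i ≠ j → a i ≤ a j → (α i j ≠ 0 ↔ α z k ≠ 0) := by
    intro i j k hk hij hr
    by_cases h1 : z = i
    · rw [← h1]
      exact hfirst j k (h1 ▸ hij) hk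
    by_cases h2 : z = j
    · rw [hrevtype i j hij hr (h2 ▸ hz i), ← h2]
      exact hfirst i k h1 hk
    rw [(htri z i j h1 hij h2 (hz i) hr).2]
    exact hfirst j k h2 hk
  have hcase : (∀ i j, i ≠ j → a i ≤ a j → α i j ≠ 0) ∨
      (∀ i j, i ≠ j → a i ≤ a j → α i j = 0) := by
    by_cases hk : ∃ k, z ≠ k ∧ α z k ≠ 0
    · obtain ⟨k, hk1, hk2⟩ := hk
      exact Or.inl fun i j hij hr => (hall i j k hk1 hij hr).2 hk2
    · push Not at hk
      right
      intro i j hij hr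
      by_contra hne
      by_cases h1 : z = i
      · have h2 : z ≠ j := h1 ▸ hij
        exact (hall i j j h2 hij hr).1 hne (hk j h2)
      · exact (hall i j i h1 hij hr).1 hne (hk i h1)
  rcases hcase with hA | hB
  · have hβ : ∀ i j, i ≠ j → a i ≤ a j → β i j = 0 := fun i j hij hr =>
      (mul_eq_zero.1 (hprod i j hij hr)).resolve_left (hA i j hij hr)
    obtain ⟨d, hd0, hdg⟩ := cocycle_split a z hz α
      (fun i j hr => by
        by_cases hij : i = j
        · subst hij; rw [hα1]; exact one_ne_zero
        · exact hA i j hij hr) hα1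
      (fun i j h1 h2 => by
        by_cases hij : i = j
        · subst hij; simp [hα1]
        · have := hrev i j hij h1 h2
          rwa [hβ i j hij h1, zero_mul, add_zero] at this)
      (fun i j k h1 h2 h3 h4 h5 => (hchain i j k h1 h2 h3 h4 h5).1)
    refine ⟨d, hd0, Or.inl fun i j hr => ?_⟩
    rw [← hdg i j hr]
    by_cases hij : i = j
    · subst hij; rw [hd, hα1]
    · rw [form i j hij hr, hβ i j hij hr, Matrix.single_zero, add_zero]
  · have hβ : ∀ i j, i ≠ j → a i ≤ a j → β i j ≠ 0 := fun i j hij hr =>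
      (hor i j hij hr).resolve_left (fun h => h (hB i j hij hr))
    obtain ⟨d, hd0, hdg⟩ := cocycle_split a z hz β
      (fun i j hr => by
        by_cases hij : i = j
        · subst hij; rw [hβ1]; exact one_ne_zero
        · exact hβ i j hij hr) hβ1
      (fun i j h1 h2 => by
        by_cases hij : i = j
        · subst hij; simp [hβ1]
        · have := hrev i j hij h1 h2
          rwa [hB i j hij h1, zero_mul, zero_add] at this)
      (fun i j k h1 h2 h3 h4 h5 => (hchain i j k h1 h2 h3 h4 h5).2)
    refine ⟨d, hd0, Or.inr fun i j hr => ?_⟩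
    rw [← hdg i j hr]
    by_cases hij : i = j
    · subst hij; rw [hd, hβ1]
    · rw [form i j hij hr, hB i j hij hr, Matrix.single_zero, zero_add]

theorem jordan_structure {n : ℕ} (a : Fin n → ℕ) (ha : Monotone a)
    (φ : Matrix (Fin n) (Fin n) ℂ → Matrix (Fin n) (Fin n) ℂ)
    (hadd : ∀ X ∈ absAlg a, ∀ Y ∈ absAlg a, φ (X + Y) = φ X + φ Y)
    (hsmul : ∀ (c : ℂ), ∀ X ∈ absAlg a, φ (c • X) = c • φ X)
    (hinj : Set.InjOn φ (absAlg a))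
    (hjordan : ∀ X ∈ absAlg a, φ (X * X) = φ X * φ X) :
    ∃ T : Matrix (Fin n) (Fin n) ℂ, IsUnit T.det ∧
      ((∀ X ∈ absAlg a, φ X = T * X * T⁻¹) ∨ (∀ X ∈ absAlg a, φ X = T * Xᵀ * T⁻¹)) := by
  have hz0 : φ 0 = 0 := by simpa using hsmul 0 0 (absAlg_zero a)
  have hj : ∀ X ∈ absAlg a, ∀ Y ∈ absAlg a, φ (X * Y + Y * X) = φ X * φ Y + φ Y * φ X := by
    intro X hX Y hY
    have h := hjordan _ (absAlg_add a hX hY)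
    have e : (X + Y) * (X + Y) = X * X + (Y * Y + (X * Y + Y * X)) := by noncomm_ring
    have m1 := absAlg_mul a hX hX
    have m2 := absAlg_mul a hY hY
    have m3 := absAlg_add a (absAlg_mul a hX hY) (absAlg_mul a hY hX)
    rw [e, hadd _ m1 _ (absAlg_add a m2 m3), hadd _ m2 _ m3, hadd _ hX _ hY, hjordan X hX,
      hjordan Y hY] at h
    have e2 : (φ X + φ Y) * (φ X + φ Y) =
      φ X * φ X + (φ Y * φ Y + (φ X * φ Y + φ Y * φ X)) := by noncomm_ring
    rw [e2] at h
    exact add_left_cancel (add_left_cancel h)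
  have h0 : ∀ X ∈ absAlg a, φ X = 0 → X = 0 := fun X hX h =>
    hinj hX (absAlg_zero a) (h.trans hz0.symm)
  have hidem : ∀ i, φ (Matrix.single i i 1) * φ (Matrix.single i i 1) =
      φ (Matrix.single i i 1) := by
    intro i
    rw [← hjordan _ (single_mem a le_rfl)]
    simp
  obtain ⟨S, hS, hSd⟩ := simul_diag (fun i => φ (Matrix.single i i 1))
    (by
      intro i h
      have := h0 _ (single_mem a le_rfl) h
      have := congrFun (congrFun this i) i
      simp at this)
    hidem
    (by
      intro i j hij
      have h := hj _ (single_mem a (le_refl (a i))) _ (single_mem a (le_refl (a j)))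
      have e : (Matrix.single i i 1 * Matrix.single j j 1 + Matrix.single j j 1 * Matrix.single i i 1
        : Matrix (Fin n) (Fin n) ℂ) = 0 := by simp [hij, hij.symm]
      rw [e, hz0] at h
      have hP := hidem i
      generalize φ (Matrix.single i i 1) = P at *
      generalize φ (Matrix.single j j 1) = Q at *
      have h1 : P * Q + P * Q * P = 0 := by
        have : P * (P * Q + Q * P) = P * P * Q + P * Q * P := by noncomm_ring
        rw [← h, mul_zero, hP] at this
        exact this.symm
      have h2 : P * Q * P + Q * P = 0 := by
        have : (P * Q + Q * P) * P = P * Q * P + Q * (P * P) := by noncomm_ring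
        rw [← h, zero_mul, hP] at this
        exact this.symm
      have h3 : (2 : ℂ) • (P * Q) = 0 := by
        rw [two_smul]
        calc P * Q + P * Q = (P * Q + P * Q * P) - (P * Q * P + Q * P) + (P * Q + Q * P) := by abel
          _ = 0 := by rw [h1, h2, ← h]; simp
      exact (smul_eq_zero.1 h3).resolve_left two_ne_zero)
  have hSS : S * S⁻¹ = 1 := Matrix.mul_nonsing_inv S hS
  have hSS' : S⁻¹ * S = 1 := Matrix.nonsing_inv_mul S hS
  have back : ∀ X Y, S⁻¹ * φ X * S = Y → φ X = S * Y * S⁻¹ := by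
    intro X Y h
    rw [← h]
    calc φ X = (S * S⁻¹) * φ X * (S * S⁻¹) := by rw [hSS]; simp
      _ = _ := by noncomm_ring
  obtain ⟨d, hd0, hcase⟩ := unit_form a ha (fun X => S⁻¹ * φ X * S)
    (by
      intro X hX Y hY
      rw [hadd X hX Y hY]; noncomm_ring)
    (by
      intro X hX Y hY
      rw [hj X hX Y hY]
      have : ∀ A B : Matrix (Fin n) (Fin n) ℂ,
          (S⁻¹ * A * S) * (S⁻¹ * B * S) = S⁻¹ * (A * B) * S := by
        intro A B
        calc _ = S⁻¹ * A * (S * S⁻¹) * B * S := by noncomm_ring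
          _ = _ := by rw [hSS]; noncomm_ring
      rw [this, this]; noncomm_ring)
    (by
      intro X hX h
      apply h0 X hX
      rw [back X 0 h]; simp)
    (by
      intro i
      have := hSd i
      rw [mul_assoc, this, ← mul_assoc, hSS', one_mul])
  have hdiag : ∀ e : Fin n → ℂ, (∀ i, e i ≠ 0) →
      IsUnit (S * Matrix.diagonal e).det ∧
      (S * Matrix.diagonal e)⁻¹ = Matrix.diagonal (fun i => (e i)⁻¹) * S⁻¹ := by
    intro e he
    have hm : (S * Matrix.diagonal e) * (Matrix.diagonal (fun i => (e i)⁻¹) * S⁻¹) = 1 := by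
      calc _ = S * (Matrix.diagonal e * Matrix.diagonal (fun i => (e i)⁻¹)) * S⁻¹ := by
            noncomm_ring
        _ = 1 := by
            rw [Matrix.diagonal_mul_diagonal]
            simp only [mul_inv_cancel₀ (he _), Matrix.diagonal_one, mul_one, hSS]
    exact ⟨Matrix.isUnit_det_of_right_inverse hm, Matrix.inv_eq_right_inv hm⟩
  have hsd : ∀ (e f : Fin n → ℂ) (i j : Fin n),
      Matrix.diagonal e * Matrix.single i j 1 * Matrix.diagonal f =
        Matrix.single i j (e i * f j) := by
    intro e f i j
    ext x y
    rw [Matrix.mul_diagonal, Matrix.diagonal_mul, Matrix.single_apply, Matrix.single_apply]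
    split_ifs with h
    · rw [← h.1, ← h.2]; simp
    · simp
  rcases hcase with h | h
  · obtain ⟨hu, hi⟩ := hdiag (fun i => (d i)⁻¹) (fun i => inv_ne_zero (hd0 i))
    refine ⟨_, hu, Or.inl ?_⟩
    set T := S * Matrix.diagonal (fun i => (d i)⁻¹) with hT
    have := ext_single a φ hadd hsmul
      ((LinearMap.mulRight ℂ T⁻¹).comp (LinearMap.mulLeft ℂ T)) (by
        intro i j hij
        rw [back _ _ (h i j hij)]
        simp only [LinearMap.comp_apply, LinearMap.mulLeft_apply, LinearMap.mulRight_apply]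
        rw [hi, hT]
        rw [show S * diagonal (fun i => (d i)⁻¹) * Matrix.single i j 1 *
          (diagonal (fun i => ((d i)⁻¹)⁻¹) * S⁻¹) = S * (diagonal (fun i => (d i)⁻¹) *
          Matrix.single i j 1 * diagonal (fun i => ((d i)⁻¹)⁻¹)) * S⁻¹ by noncomm_ring, hsd]
        simp only [inv_inv])
    simpa using this
  · obtain ⟨hu, hi⟩ := hdiag d hd0
    refine ⟨_, hu, Or.inr ?_⟩
    set T := S * Matrix.diagonal d with hT
    have := ext_single a φ hadd hsmul
      (((LinearMap.mulRight ℂ T⁻¹).comp (LinearMap.mulLeft ℂ T)).comp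
        (Matrix.transposeLinearEquiv (Fin n) (Fin n) ℂ ℂ).toLinearMap) (by
        intro i j hij
        rw [back _ _ (h i j hij)]
        change _ = T * (Matrix.single i j 1)ᵀ * T⁻¹
        rw [Matrix.transpose_single]
        rw [hi, hT]
        rw [show S * diagonal d * Matrix.single j i 1 *
          (diagonal (fun i => (d i)⁻¹) * S⁻¹) = S * (diagonal d *
          Matrix.single j i 1 * diagonal (fun i => (d i)⁻¹)) * S⁻¹ by noncomm_ring, hsd]
        rw [mul_comm (d j)])
    exact this

theorem exch_mul_apply {n : ℕ} (X : Matrix (Fin n) (Fin n) ℂ) (i j : Fin n) :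
    (exchMat n * X) i j = X i.rev j := by
  rw [Matrix.mul_apply, Finset.sum_eq_single i.rev]
  · have : (i : ℕ) + (i.rev : ℕ) + 1 = n := by rw [Fin.val_rev]; omega
    simp only [exchMat, Matrix.of_apply, if_pos this, one_mul]
  · intro x _ hx
    have : ¬ ((i : ℕ) + (x : ℕ) + 1 = n) := by
      intro h
      apply hx
      ext
      rw [Fin.val_rev]; omega
    simp only [exchMat, Matrix.of_apply, if_neg this, zero_mul]
  · simp

theorem exch_transpose {n : ℕ} : (exchMat n)ᵀ = exchMat n := by
  ext i j
  simp only [exchMat, Matrix.transpose_apply, Matrix.of_apply]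
  congr 2
  rw [add_comm (j : ℕ)]

theorem mul_exch_apply {n : ℕ} (X : Matrix (Fin n) (Fin n) ℂ) (i j : Fin n) :
    (X * exchMat n) i j = X i j.rev := by
  have h : X * exchMat n = (exchMat n * Xᵀ)ᵀ := by
    rw [Matrix.transpose_mul, exch_transpose, Matrix.transpose_transpose]
  rw [h, Matrix.transpose_apply, exch_mul_apply, Matrix.transpose_apply]

theorem exch_sq {n : ℕ} : exchMat n * exchMat n = 1 := by
  ext i j
  rw [exch_mul_apply, Matrix.one_apply]
  simp only [exchMat, Matrix.of_apply]
  congr 1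
  rw [Fin.val_rev, Fin.ext_iff]
  apply propext
  omega

/-- From conjugation form into the target algebra to the conjugator being in the algebra. -/
theorem conj_final {n : ℕ} (b : Fin n → ℕ) (hb : Monotone b) (T : Matrix (Fin n) (Fin n) ℂ)
    (hT : IsUnit T.det) (𝒞 : Set (Matrix (Fin n) (Fin n) ℂ))
    (hu : ∀ p q : Fin n, p ≤ q → Matrix.single p q 1 ∈ 𝒞)
    (h : ∀ X ∈ 𝒞, T * X * T⁻¹ ∈ absAlg b) :
    𝒞 ⊆ absAlg b ∧ T ∈ absAlg b ∧ T⁻¹ ∈ absAlg b := by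
  obtain ⟨h1, h2⟩ := conj_mem b hb T hT (fun p q hpq => h _ (hu p q hpq))
  refine ⟨fun X hX => ?_, h1, h2⟩
  have h3 := absAlg_mul b (absAlg_mul b h2 (h X hX)) h1
  have e : T⁻¹ * (T * X * T⁻¹) * T = X := by
    calc _ = (T⁻¹ * T) * X * (T⁻¹ * T) := by noncomm_ring
      _ = X := by rw [Matrix.nonsing_inv_mul T hT]; simp
  rwa [e] at h3

theorem jordan_embedding_between_blockAlgs {n : ℕ} (𝒜 ℬ : Set (Matrix (Fin n) (Fin n) ℂ))
    (h𝒜 : IsBlockUT n 𝒜) (hℬ : IsBlockUT n ℬ)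
    (φ : Matrix (Fin n) (Fin n) ℂ → Matrix (Fin n) (Fin n) ℂ)
    (hmaps : ∀ X ∈ 𝒜, φ X ∈ ℬ)
    (hadd : ∀ X ∈ 𝒜, ∀ Y ∈ 𝒜, φ (X + Y) = φ X + φ Y)
    (hsmul : ∀ (c : ℂ), ∀ X ∈ 𝒜, φ (c • X) = c • φ X)
    (hinj : Set.InjOn φ 𝒜)
    (hjordan : ∀ X ∈ 𝒜, φ (X * X) = φ X * φ X) :
    (𝒜 ⊆ ℬ ∧ ∃ T ∈ ℬ, IsUnit T.det ∧ T⁻¹ ∈ ℬ ∧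
      ∀ X ∈ 𝒜, φ X = T * X * T⁻¹) ∨
    ((fun X : Matrix (Fin n) (Fin n) ℂ => exchMat n * Xᵀ * exchMat n) '' 𝒜 ⊆ ℬ ∧
      ∃ T ∈ ℬ, IsUnit T.det ∧ T⁻¹ ∈ ℬ ∧
        ∀ X ∈ 𝒜, φ X = T * (exchMat n * Xᵀ * exchMat n) * T⁻¹) := by
  obtain ⟨k, -, -, rfl⟩ := h𝒜
  obtain ⟨l, -, -, rfl⟩ := hℬ
  let a : Fin n → ℕ := fun i => blockIdx k i
  let b : Fin n → ℕ := fun i => blockIdx l i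
  have ha : Monotone a := fun i j h => blockIdx_mono k (Fin.le_def.1 h)
  have hb : Monotone b := fun i j h => blockIdx_mono l (Fin.le_def.1 h)
  have hA : blockAlg n k = absAlg a := rfl
  have hB : blockAlg n l = absAlg b := rfl
  rw [hA] at hmaps hadd hsmul hinj hjordan ⊢
  rw [hB] at hmaps ⊢
  obtain ⟨T, hT, h | h⟩ := jordan_structure a ha φ hadd hsmul hinj hjordan
  · left
    obtain ⟨h1, h2, h3⟩ := conj_final b hb T hT (absAlg a) (fun p q hpq => single_mem a (ha hpq))
      (fun X hX => h X hX ▸ hmaps X hX)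
    exact ⟨h1, T, h2, hT, h3, h⟩
  · right
    have hm : (T * exchMat n) * (exchMat n * T⁻¹) = 1 := by
      calc _ = T * (exchMat n * exchMat n) * T⁻¹ := by noncomm_ring
        _ = 1 := by rw [exch_sq, mul_one, Matrix.mul_nonsing_inv T hT]
    have hi : (T * exchMat n)⁻¹ = exchMat n * T⁻¹ := Matrix.inv_eq_right_inv hm
    have hu : IsUnit (T * exchMat n).det := Matrix.isUnit_det_of_right_inverse hm
    have hφ : ∀ X ∈ absAlg a,
        φ X = (T * exchMat n) * (exchMat n * Xᵀ * exchMat n) * (T * exchMat n)⁻¹ := by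
      intro X hX
      rw [hi, h X hX]
      symm
      calc _ = T * (exchMat n * exchMat n) * Xᵀ * (exchMat n * exchMat n) * T⁻¹ := by
            noncomm_ring
        _ = _ := by rw [exch_sq]; simp
    obtain ⟨h1, h2, h3⟩ := conj_final b hb (T * exchMat n) hu
      ((fun X : Matrix (Fin n) (Fin n) ℂ => exchMat n * Xᵀ * exchMat n) '' absAlg a)
      (by
        intro p q hpq
        refine ⟨Matrix.single q.rev p.rev 1, single_mem a (ha (Fin.rev_le_rev.2 hpq)), ?_⟩
        ext x y
        simp only [mul_exch_apply, exch_mul_apply, Matrix.transpose_single, Matrix.single_apply,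
          Fin.rev_inj])
      (by
        rintro _ ⟨X, hX, rfl⟩
        simp only
        rw [← hφ X hX]
        exact hmaps X hX)
    exact ⟨h1, _, h2, hu, h3, hφ⟩
end
end
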